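/- arXiv:2011.04274 — 2 statements merged into one kernel-verified Lean document; each statement's English description precedes it below -/
import Mathlib

section
/- Let 𝒳 be a Polish space, d ∈ ℕ, r ∈ [1,∞), μ ∈ 𝒫_r(𝒳), ν ∈ 𝒫_r(ℝ^d), and let C : 𝒳 × 𝒫_r(ℝ^d) → ℝ ∪ {+∞} be barycentric (C(x,p) = C(x,q) whenever b(p) = b(q)), lower semicontinuous, and satisfy C(x,p) ≥ −K(1 + d_𝒳(x,x₀)^r + 𝒲_r(p,δ_{y₀})^r) for some constant K. Then inf_{P ∈ Λ(μ,ν)} ∫ C(x,p) P(dx,dp) = sup{ ν(ψ) + μ(R_Cψ) : ψ ∈ Φ_r(ℝ^d) concave } = sup{ μ(φ) + ν(ψ) : φ ∈ Φ_r(𝒳), ψ ∈ Φ_r(ℝ^d) concave, φ(x) + ψ(y) ≤ C(x,δ_y) for all (x,y) ∈ 𝒳 × ℝ^d } = sup{ μ(φ) + ν(ψ) : φ ∈ Φ_r(𝒳), ψ ∈ Φ_r(ℝ^d), Δ : ℝ^d → ℝ^d, φ(x) + ψ(z) + Δ(y)·(z − y) ≤ C(x,δ_y) for all (x,y,z) ∈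 𝒳 × ℝ^d × ℝ^d }. -/
open MeasureTheory Set Filter
open scoped ENNReal NNReal Topology RealInnerProductSpace

noncomputable section

namespace WOT

/-- The set of couplings of `μ` and `ν`. -/
def Couplings {X Y : Type*} [MeasurableSpace X] [MeasurableSpace Y]
    (μ : Measure X) (ν : Measure Y) : Set (Measure (X × Y)) :=
  {π | π.map Prod.fst = μ ∧ π.map Prod.snd = ν}

/-- `K` is a disintegration of `π` with respect to its first marginal `μ`. -/
def IsDisint {X Y : Type*} [MeasurableSpace X] [MeasurableSpace Y]
    (π : Measure (X × Y)) (μ : Measure X) (K : X → Measure Y) : Prop :=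
  Measurable K ∧ (∀ x, IsProbabilityMeasure (K x)) ∧
    ∀ s : Set (X × Y), MeasurableSet s → π s = ∫⁻ x, K x (Prod.mk x ⁻¹' s) ∂μ

/-- The intensity `I(Q)` of a measure on measures. -/
def intensity {Y : Type*} [MeasurableSpace Y] (Q : Measure (Measure Y)) : Measure Y :=
  Q.join

/-- The intensity map `Î`. -/
def intensityHat {X Y : Type*} [MeasurableSpace X] [MeasurableSpace Y]
    (P : Measure (X × Measure Y)) : Measure (X × Y) :=
  P.bind fun xp => (Measure.dirac xp.1).prod xp.2

/-- `Λ(μ,ν)`, the set of probability measures on `X × 𝒫(Y)` whose intensity is a coupling. -/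
def Lambda {X Y : Type*} [MeasurableSpace X] [MeasurableSpace Y]
    (μ : Measure X) (ν : Measure Y) : Set (Measure (X × Measure Y)) :=
  {P | IsProbabilityMeasure P ∧ (∀ᵐ xp ∂P, IsProbabilityMeasure xp.2) ∧
    intensityHat P ∈ Couplings μ ν}

/-- Finite `r`-th moment. -/
def FinMom {X : Type*} [MeasurableSpace X] [PseudoMetricSpace X]
    (r : ℝ) (x₀ : X) (μ : Measure X) : Prop :=
  ∫⁻ x, ENNReal.ofReal (dist x x₀ ^ r) ∂μ < ⊤

/-- The growth class `Φ_r`. -/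
def PhiR {X : Type*} [PseudoMetricSpace X] (r : ℝ) (x₀ : X) : Set (X → ℝ) :=
  {φ | Continuous φ ∧ ∃ K : ℝ, ∀ x, |φ x| ≤ K * (1 + dist x x₀ ^ r)}

/-- The `r`-Wasserstein distance (valued in `ℝ≥0∞`). -/
def Wr {Y : Type*} [MeasurableSpace Y] [PseudoMetricSpace Y]
    (r : ℝ) (p q : Measure Y) : ℝ≥0∞ :=
  ⨅ π ∈ Couplings p q, (∫⁻ z : Y × Y, ENNReal.ofReal (dist z.1 z.2 ^ r) ∂π) ^ (1 / r)

/-- `𝒫_r(Y)`: probability measures with finite `r`-th moment. -/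
def Pr {Y : Type*} [MeasurableSpace Y] [PseudoMetricSpace Y] (r : ℝ) (y₀ : Y) :
    Set (Measure Y) :=
  {p | IsProbabilityMeasure p ∧ FinMom r y₀ p}

/-- `𝒫_r(𝒫_r(Y))`: probability measures on `𝒫_r(Y)` with finite `r`-th moment w.r.t. `𝒲_r`. -/
def PrP {Y : Type*} [MeasurableSpace Y] [PseudoMetricSpace Y] (r : ℝ) (y₀ : Y) :
    Set (Measure (Measure Y)) :=
  {Q | IsProbabilityMeasure Q ∧ (∀ᵐ p ∂Q, p ∈ Pr r y₀) ∧
    ∫⁻ p, Wr r p (Measure.dirac y₀) ^ r ∂Q < ⊤}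

/-- The positive part of an extended real, valued in `ℝ≥0∞`. -/
def epos (e : EReal) : ℝ≥0∞ := if e = ⊤ then ⊤ else ENNReal.ofReal e.toReal

/-- Extended-real integral: positive part minus negative part (with value `⊥` when
both parts are infinite, i.e. when the integral is not well-defined). -/
def eInt {X : Type*} [MeasurableSpace X] (f : X → EReal) (μ : Measure X) : EReal :=
  ((∫⁻ x, epos (f x) ∂μ : ℝ≥0∞) : EReal) - ((∫⁻ x, epos (-(f x)) ∂μ : ℝ≥0∞) : EReal)

/-- Extended-real integral with the opposite (`⊤`) convention for ill-defined integrals. -/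
def eIntU {X : Type*} [MeasurableSpace X] (f : X → EReal) (μ : Measure X) : EReal :=
  -eInt (fun x => -(f x)) μ

/-- The extended-real integral is well-defined. -/
def eIntWellDef {X : Type*} [MeasurableSpace X] (f : X → EReal) (μ : Measure X) : Prop :=
  (∫⁻ x, epos (f x) ∂μ ≠ ⊤) ∨ (∫⁻ x, epos (-(f x)) ∂μ ≠ ⊤)

/-- Convergence in the `r`-Wasserstein distance. -/
def WrTendsto {Y : Type*} [MeasurableSpace Y] [PseudoMetricSpace Y]
    (r : ℝ) (ps : ℕ → Measure Y) (p : Measure Y) : Prop :=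
  Tendsto (fun n => Wr r (ps n) p) atTop (nhds 0)

/-- (Sequential) lower semicontinuity on `𝒫_r(Y)` w.r.t. `𝒲_r`. -/
def LscWr1 {Y : Type*} [MeasurableSpace Y] [PseudoMetricSpace Y]
    (r : ℝ) (y₀ : Y) (G : Measure Y → EReal) : Prop :=
  ∀ (p : Measure Y) (ps : ℕ → Measure Y), p ∈ Pr r y₀ → (∀ n, ps n ∈ Pr r y₀) →
    WrTendsto r ps p → G p ≤ liminf (fun n => G (ps n)) atTop

/-- (Sequential) upper semicontinuity on `𝒫_r(Y)` w.r.t. `𝒲_r`. -/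
def UscWr1 {Y : Type*} [MeasurableSpace Y] [PseudoMetricSpace Y]
    (r : ℝ) (y₀ : Y) (G : Measure Y → EReal) : Prop :=
  ∀ (p : Measure Y) (ps : ℕ → Measure Y), p ∈ Pr r y₀ → (∀ n, ps n ∈ Pr r y₀) →
    WrTendsto r ps p → limsup (fun n => G (ps n)) atTop ≤ G p

/-- (Sequential) lower semicontinuity on `X × 𝒫_r(Y)` w.r.t. `d_X × 𝒲_r`. -/
def LscWr {X Y : Type*} [TopologicalSpace X] [MeasurableSpace Y] [PseudoMetricSpace Y]
    (r : ℝ) (y₀ : Y) (C : X × Measure Y → EReal) : Prop :=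
  ∀ (x : X) (xs : ℕ → X) (p : Measure Y) (ps : ℕ → Measure Y),
    p ∈ Pr r y₀ → (∀ n, ps n ∈ Pr r y₀) → Tendsto xs atTop (nhds x) → WrTendsto r ps p →
    C (x, p) ≤ liminf (fun n => C (xs n, ps n)) atTop

/-- (Sequential) continuity of a real-valued cost on `X × 𝒫_r(Y)` w.r.t. `d_X × 𝒲_r`. -/
def ContWr {X Y : Type*} [TopologicalSpace X] [MeasurableSpace Y] [PseudoMetricSpace Y]
    (r : ℝ) (y₀ : Y) (C : X × Measure Y → ℝ) : Prop :=
  ∀ (x : X) (xs : ℕ → X) (p : Measure Y) (ps : ℕ → Measure Y),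
    p ∈ Pr r y₀ → (∀ n, ps n ∈ Pr r y₀) → Tendsto xs atTop (nhds x) → WrTendsto r ps p →
    Tendsto (fun n => C (xs n, ps n)) atTop (nhds (C (x, p)))

/-- Convexity of an extended-real-valued function on a set of measures. -/
def EConvexOn {Y : Type*} [MeasurableSpace Y] (S : Set (Measure Y)) (G : Measure Y → EReal) :
    Prop :=
  ∀ p ∈ S, ∀ q ∈ S, ∀ t : ℝ≥0, t ≤ 1 →
    G ((t : ℝ≥0∞) • p + ((1 - t : ℝ≥0) : ℝ≥0∞) • q)
      ≤ ((t : ℝ) : EReal) * G p + (((1 - t : ℝ≥0) : ℝ) : EReal) * G q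

/-- The lower semicontinuous convex envelope (on `𝒫_r(Y)` w.r.t. `𝒲_r`). -/
def cvxEnvWr {Y : Type*} [MeasurableSpace Y] [PseudoMetricSpace Y]
    (r : ℝ) (y₀ : Y) (f : Measure Y → EReal) : Measure Y → EReal :=
  fun p => ⨆ G ∈ {G : Measure Y → EReal |
    LscWr1 r y₀ G ∧ EConvexOn (Pr r y₀) G ∧ ∀ q ∈ Pr r y₀, G q ≤ f q}, G p

/-- The cost `C̃(x,p) = inf {∫ C(x,q) Q(dq) : Q ∈ 𝒫_r(𝒫_r(Y)), I(Q) = p}`. -/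
def tildeC {X Y : Type*} [MeasurableSpace X] [MeasurableSpace Y] [PseudoMetricSpace Y]
    (r : ℝ) (y₀ : Y) (C : X × Measure Y → EReal) : X × Measure Y → EReal :=
  fun xp => ⨅ Q ∈ {Q | Q ∈ PrP r y₀ ∧ intensity Q = xp.2}, eInt (fun q => C (xp.1, q)) Q

/-- The barycenter of a measure on a normed space. -/
def bary {E : Type*} [NormedAddCommGroup E] [NormedSpace ℝ E] [MeasurableSpace E]
    (p : Measure E) : E :=
  ∫ y, y ∂p

/-- Convex order of measures. -/
def ConvexOrder {E : Type*} [NormedAddCommGroup E] [NormedSpace ℝ E] [MeasurableSpace E]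
    (ν' ν : Measure E) : Prop :=
  ∀ θ : E → ℝ, ConvexOn ℝ Set.univ θ →
    eInt (fun y => ((θ y : ℝ) : EReal)) ν' ≤ eInt (fun y => ((θ y : ℝ) : EReal)) ν

/-- The inf-convolution `R_C ψ`. -/
def RC {X Y : Type*} [MeasurableSpace Y] [PseudoMetricSpace Y]
    (r : ℝ) (y₀ : Y) (C : X × Measure Y → EReal) (ψ : Y → ℝ) : X → EReal :=
  fun x => ⨅ p ∈ Pr r y₀, (((-∫ y, ψ y ∂p : ℝ) : EReal) + C (x, p))

/-- `κ` is a regular conditional distribution of `Yv` given the sub-σ-algebra `m1`. -/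
def IsRCD {Ω Y : Type*} [MeasurableSpace Y] (m1 : MeasurableSpace Ω)
    (mΩ : MeasurableSpace Ω) (P : @Measure Ω mΩ) (Yv : Ω → Y) (κ : Ω → Measure Y) : Prop :=
  (∀ ω, IsProbabilityMeasure (κ ω)) ∧ Measurable[m1] κ ∧
    ∀ A : Set Y, MeasurableSet A → ∀ B : Set Ω, MeasurableSet[m1] B →
      P (B ∩ Yv ⁻¹' A) = ∫⁻ ω in B, κ ω A ∂P

end WOT

open WOT

lemma epos_coe (a : ℝ) : epos (a : EReal) = ENNReal.ofReal a := by
  simp [epos]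

lemma epos_top : epos ⊤ = ⊤ := by simp [epos]
lemma epos_bot : epos ⊥ = 0 := by simp [epos]

lemma measurable_epos : Measurable epos := by
  unfold epos
  refine Measurable.ite (measurableSet_singleton _) measurable_const ?_
  exact measurable_ereal_toReal.ennreal_ofReal

lemma epos_mono : Monotone epos := by
  intro a b h
  induction a with
  | bot => simp [epos_bot]
  | top => rw [top_le_iff.1 h]
  | coe a =>
    induction b with
    | bot => simp at h
    | top => simp [epos_top]
    | coe b =>
      rw [epos_coe, epos_coe]
      exact ENNReal.ofReal_le_ofReal (by exact_mod_cast h)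

lemma ofReal_key {a b c : ℝ} (h : a + b ≤ c) :
    ENNReal.ofReal a + ENNReal.ofReal b + ENNReal.ofReal (-c)
      ≤ ENNReal.ofReal c + (ENNReal.ofReal (-a) + ENNReal.ofReal (-b)) := by
  have hm : ∀ x : ℝ, ENNReal.ofReal x = ENNReal.ofReal (max x 0) := by
    intro x
    rcases le_total x 0 with hx | hx
    · rw [max_eq_right hx, ENNReal.ofReal_of_nonpos hx, ENNReal.ofReal_zero]
    · rw [max_eq_left hx]
  rw [hm a, hm b, hm c, hm (-a), hm (-b), hm (-c)]
  rw [← ENNReal.ofReal_add (by positivity) (by positivity),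
    ← ENNReal.ofReal_add (by positivity) (by positivity),
    ← ENNReal.ofReal_add (by positivity) (by positivity),
    ← ENNReal.ofReal_add (by positivity) (by positivity)]
  apply ENNReal.ofReal_le_ofReal
  have h1 := max_zero_sub_max_neg_zero_eq_self a
  have h2 := max_zero_sub_max_neg_zero_eq_self b
  have h3 := max_zero_sub_max_neg_zero_eq_self c
  linarith

lemma epos_key {R f : EReal} {g : ℝ} (h : R + (g : EReal) ≤ f) :
    epos R + ENNReal.ofReal g + epos (-f)
      ≤ epos f + (epos (-R) + ENNReal.ofReal (-g)) := by
  induction R with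
  | bot => simp [epos_top]
  | top =>
    have : f = ⊤ := by simpa using h
    simp [this, epos_top]
  | coe a =>
    induction f with
    | bot => simp [← EReal.coe_add] at h
    | top => simp [epos_top]
    | coe c =>
      have h' : a + g ≤ c := by exact_mod_cast h
      rw [← EReal.coe_neg, ← EReal.coe_neg]
      simp only [epos_coe]
      exact ofReal_key h'

lemma eInt_coe {Ω : Type*} [MeasurableSpace Ω] {P : Measure Ω} {g : Ω → ℝ} (hg : Integrable g P) :
    eInt (fun ω => (g ω : EReal)) P = ((∫ ω, g ω ∂P : ℝ) : EReal) := by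
  have h1 : ∫⁻ x, ENNReal.ofReal (g x) ∂P ≠ ⊤ := hg.lintegral_lt_top.ne
  have h2 : ∫⁻ x, ENNReal.ofReal (-g x) ∂P ≠ ⊤ := hg.neg.lintegral_lt_top.ne
  unfold eInt
  simp only [← EReal.coe_neg, epos_coe]
  rw [integral_eq_lintegral_pos_part_sub_lintegral_neg_part hg, EReal.coe_sub,
    EReal.coe_ennreal_toReal h1, EReal.coe_ennreal_toReal h2]

lemma eInt_add_le {Ω : Type*} [MeasurableSpace Ω] {P : Measure Ω} {R f : Ω → EReal} {g : Ω → ℝ}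
    (hR : AEMeasurable R P) (hg : Integrable g P)
    (h : ∀ᵐ ω ∂P, R ω + (g ω : EReal) ≤ f ω) :
    eInt R P + ((∫ ω, g ω ∂P : ℝ) : EReal) ≤ eInt f P := by
  by_cases hRn : ∫⁻ x, epos (-(R x)) ∂P = ⊤
  · have : eInt R P = ⊥ := by
      unfold eInt; rw [hRn]; simp [sub_eq_add_neg]
    rw [this]; simp
  have h1 : ∫⁻ x, ENNReal.ofReal (g x) ∂P ≠ ⊤ := hg.lintegral_lt_top.ne
  have h2 : ∫⁻ x, ENNReal.ofReal (-g x) ∂P ≠ ⊤ := hg.neg.lintegral_lt_top.ne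
  have mR : AEMeasurable (fun x => epos (R x)) P := measurable_epos.comp_aemeasurable hR
  have mR' : AEMeasurable (fun x => epos (-(R x))) P :=
    measurable_epos.comp_aemeasurable hR.neg
  have mg : AEMeasurable (fun x => ENNReal.ofReal (g x)) P := hg.aemeasurable.ennreal_ofReal
  have mRg : AEMeasurable (fun x => epos (R x) + ENNReal.ofReal (g x)) P := mR.add mg
  have mg' : AEMeasurable (fun x => ENNReal.ofReal (-g x)) P := hg.aemeasurable.neg.ennreal_ofReal
  have mRg' : AEMeasurable (fun x => epos (-(R x)) + ENNReal.ofReal (-g x)) P := mR'.add mg'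
  have key : ∫⁻ x, epos (R x) ∂P + ∫⁻ x, ENNReal.ofReal (g x) ∂P + ∫⁻ x, epos (-(f x)) ∂P
      ≤ ∫⁻ x, epos (f x) ∂P + (∫⁻ x, epos (-(R x)) ∂P + ∫⁻ x, ENNReal.ofReal (-g x) ∂P) := by
    rw [← lintegral_add_left' mR, ← lintegral_add_left' mRg, ← lintegral_add_left' mR',
      ← lintegral_add_right' _ mRg']
    refine lintegral_mono_ae ?_
    filter_upwards [h] with ω hω
    exact epos_key hω
  have hfn : ∫⁻ x, epos (-(f x)) ∂P ≠ ⊤ := by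
    have : ∫⁻ x, epos (-(f x)) ∂P ≤ ∫⁻ x, epos (-(R x)) ∂P + ∫⁻ x, ENNReal.ofReal (-g x) ∂P := by
      rw [← lintegral_add_left' mR']
      refine lintegral_mono_ae ?_
      filter_upwards [h] with ω hω
      generalize R ω = R at *
      generalize f ω = f at *
      generalize g ω = g at *
      induction R with
      | bot => simp [epos_top]
      | top =>
        have : f = ⊤ := by simpa using hω
        simp [this, epos_bot]
      | coe a =>
        induction f with
        | bot => simp [← EReal.coe_add] at hω
        | top => simp [epos_bot]
        | coe c =>
          have h' : a + g ≤ c := by exact_mod_cast hω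
          rw [← EReal.coe_neg, ← EReal.coe_neg]
          simp only [epos_coe]
          refine le_trans (ENNReal.ofReal_le_ofReal ?_) ENNReal.ofReal_add_le
          linarith
    exact ne_top_of_le_ne_top (ENNReal.add_ne_top.2 ⟨hRn, h2⟩) this
  unfold eInt
  rw [integral_eq_lintegral_pos_part_sub_lintegral_neg_part hg]
  generalize ∫⁻ x, epos (R x) ∂P = A at *
  generalize ∫⁻ x, epos (-(R x)) ∂P = B at *
  generalize ∫⁻ x, epos (f x) ∂P = U at *
  generalize ∫⁻ x, epos (-(f x)) ∂P = W at *
  generalize ∫⁻ x, ENNReal.ofReal (g x) ∂P = G at *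
  generalize ∫⁻ x, ENNReal.ofReal (-g x) ∂P = H at *
  lift B to ℝ≥0 using hRn
  lift W to ℝ≥0 using hfn
  lift G to ℝ≥0 using h1
  lift H to ℝ≥0 using h2
  by_cases hU : U = ⊤
  · subst hU; simp [show ((W : ℝ≥0∞) : EReal) = ((W : ℝ) : EReal) from rfl]
  have hA : A ≠ ⊤ := by
    rintro rfl
    simp at key
    exact hU key
  lift U to ℝ≥0 using hU
  lift A to ℝ≥0 using hA
  have key' : (A : ℝ) + G + W ≤ U + (B + H) := by exact_mod_cast key
  have e : ∀ x : ℝ≥0, ((x : ℝ≥0∞) : EReal) = ((x : ℝ) : EReal) := fun x => rfl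
  simp only [e, ENNReal.coe_toReal, ← EReal.coe_sub, ← EReal.coe_add, EReal.coe_le_coe_iff]
  linarith

lemma le_eInt {Ω : Type*} [MeasurableSpace Ω] {P : Measure Ω} {f : Ω → EReal} {g : Ω → ℝ}
    (hg : Integrable g P) (h : ∀ᵐ ω ∂P, (g ω : EReal) ≤ f ω) :
    ((∫ ω, g ω ∂P : ℝ) : EReal) ≤ eInt f P := by
  have := eInt_add_le (P := P) (R := fun _ => 0) (f := f) (g := g) aemeasurable_const hg
    (by simpa using h)
  have h0 : eInt (fun _ : Ω => (0 : EReal)) P = 0 := by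
    have := eInt_coe (P := P) (g := fun _ => 0) (integrable_zero _ _ _)
    simpa using this
  simpa [h0] using this

lemma eInt_le {Ω : Type*} [MeasurableSpace Ω] {P : Measure Ω} {f : Ω → EReal} {l : Ω → ℝ} {a : ℝ}
    (hf : AEMeasurable f P) (hl : Integrable l P) (hl0 : ∀ ω, 0 ≤ l ω)
    (hlf : ∀ᵐ ω ∂P, ((-l ω : ℝ) : EReal) ≤ f ω) (ha : 0 ≤ a + ∫ ω, l ω ∂P)
    (h : ∫⁻ ω, epos (f ω + (l ω : EReal)) ∂P ≤ ENNReal.ofReal (a + ∫ ω, l ω ∂P)) :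
    eInt f P ≤ (a : EReal) := by
  have h1 : ∫⁻ x, ENNReal.ofReal (l x) ∂P ≠ ⊤ := hl.lintegral_lt_top.ne
  have mf : AEMeasurable (fun x => epos (-(f x))) P := measurable_epos.comp_aemeasurable hf.neg
  have ml : AEMeasurable (fun x => ENNReal.ofReal (l x)) P := hl.aemeasurable.ennreal_ofReal
  have key : ∫⁻ x, epos (f x) ∂P + ∫⁻ x, ENNReal.ofReal (l x) ∂P
      = ∫⁻ ω, epos (f ω + (l ω : EReal)) ∂P + ∫⁻ x, epos (-(f x)) ∂P := by
    rw [← lintegral_add_right' _ ml, ← lintegral_add_right' _ mf]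
    refine lintegral_congr_ae ?_
    filter_upwards [hlf] with ω hω
    have hl0 := hl0 ω
    generalize f ω = f at *
    generalize l ω = l at *
    induction f with
    | bot => simp at hω
    | top => simp [epos_top]
    | coe c =>
      have h' : -l ≤ c := by exact_mod_cast hω
      rw [← EReal.coe_neg, ← EReal.coe_add]
      simp only [epos_coe]
      rcases le_total 0 c with hc | hc
      · rw [ENNReal.ofReal_of_nonpos (p := -c) (by linarith), ENNReal.ofReal_add hc hl0, add_zero]
      · rw [ENNReal.ofReal_of_nonpos (p := c) (by linarith), zero_add,
          ← ENNReal.ofReal_add (by linarith) (by linarith)]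
        congr 1; ring
  have hfn : ∫⁻ x, epos (-(f x)) ∂P ≠ ⊤ := by
    refine ne_top_of_le_ne_top h1 (lintegral_mono_ae ?_)
    filter_upwards [hlf] with ω hω
    rw [← epos_coe]
    apply epos_mono
    rw [EReal.neg_le]
    exact_mod_cast hω
  unfold eInt
  have hl' : ENNReal.ofReal (∫ ω, l ω ∂P) = ∫⁻ x, ENNReal.ofReal (l x) ∂P :=
    ofReal_integral_eq_lintegral_ofReal hl (Eventually.of_forall hl0)
  have hli : 0 ≤ ∫ ω, l ω ∂P := integral_nonneg hl0
  generalize ∫ ω, l ω ∂P = I at *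
  rw [← hl'] at key
  generalize ∫⁻ ω, epos (f ω + (l ω : EReal)) ∂P = V at *
  generalize ∫⁻ x, epos (f x) ∂P = U at *
  generalize ∫⁻ x, epos (-(f x)) ∂P = W at *
  lift W to ℝ≥0 using hfn
  have hV : V ≠ ⊤ := ne_top_of_le_ne_top ENNReal.ofReal_ne_top h
  have hU : U ≠ ⊤ := by
    rintro rfl
    rw [top_add] at key
    exact (ENNReal.add_ne_top.2 ⟨hV, ENNReal.coe_ne_top⟩) key.symm
  lift U to ℝ≥0 using hU
  lift V to ℝ≥0 using hV
  have hv : (V : ℝ) ≤ a + I := by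
    have := ENNReal.toReal_mono ENNReal.ofReal_ne_top h
    rwa [ENNReal.toReal_ofReal ha] at this
  have hk : (U : ℝ) + I = V + W := by
    have := congrArg ENNReal.toReal key
    rwa [ENNReal.toReal_add (by simp) (by simp), ENNReal.toReal_add (by simp) (by simp),
      ENNReal.toReal_ofReal hli] at this
  have e : ∀ x : ℝ≥0, ((x : ℝ≥0∞) : EReal) = ((x : ℝ) : EReal) := fun x => rfl
  simp only [e, ← EReal.coe_sub, EReal.coe_le_coe_iff]
  linarith

section NN
variable {E : Type*} [NormedAddCommGroup E] [InnerProductSpace ℝ E]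

def NN (r : ℝ) (y : E) : ℝ := (√(1 + ‖y‖ ^ 2)) ^ r
def gN (r : ℝ) (y : E) : E := (r * (√(1 + ‖y‖ ^ 2)) ^ (r - 2)) • y

lemma one_le_sq (y : E) : 1 ≤ √(1 + ‖y‖ ^ 2) := by
  rw [Real.one_le_sqrt]; nlinarith [sq_nonneg ‖y‖]

lemma norm_le_sq (y : E) : ‖y‖ ≤ √(1 + ‖y‖ ^ 2) := by
  apply Real.le_sqrt_of_sq_le; linarith

lemma NN_grad {r : ℝ} (hr : 1 ≤ r) (y z : E) : NN r y + ⟪gN r y, z - y⟫ ≤ NN r z := by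
  unfold NN gN
  set s := √(1 + ‖y‖ ^ 2) with hs
  set w := √(1 + ‖z‖ ^ 2) with hw
  have s1 : 1 ≤ s := one_le_sq y
  have w1 : 1 ≤ w := one_le_sq z
  have hs2 : s ^ 2 = 1 + ‖y‖ ^ 2 := Real.sq_sqrt (by positivity)
  have hw2 : w ^ 2 = 1 + ‖z‖ ^ 2 := Real.sq_sqrt (by positivity)
  have cs : ⟪y, z⟫ ≤ ‖y‖ * ‖z‖ := real_inner_le_norm y z
  have h1 : 1 + ⟪y, z⟫ ≤ s * w := by
    have : 1 + ‖y‖ * ‖z‖ ≤ s * w := by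
      refine (sq_le_sq₀ (by positivity) (by positivity)).1 ?_
      rw [mul_pow, hs2, hw2]
      nlinarith [sq_nonneg (‖y‖ - ‖z‖)]
    linarith
  have hin : ⟪(r * s ^ (r - 2)) • y, z - y⟫ = r * s ^ (r - 2) * (⟪y, z⟫ - ‖y‖ ^ 2) := by
    rw [real_inner_smul_left, inner_sub_right, real_inner_self_eq_norm_sq]
  rw [hin]
  have s0 : 0 < s := by linarith
  have hb := one_add_mul_self_le_rpow_one_add (s := w / s - 1) (by
    have : 0 ≤ w / s := by positivity
    linarith) hr
  have hb' : 1 + r * (w / s - 1) ≤ w ^ r / s ^ r := by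
    rw [← Real.div_rpow (by linarith) s0.le]
    convert hb using 2
    ring
  have sr : 0 < s ^ r := Real.rpow_pos_of_pos s0 r
  rw [le_div_iff₀ sr] at hb'
  have e2 : s ^ r = s ^ (r - 2) * s ^ 2 := by
    rw [← Real.rpow_natCast s 2, ← Real.rpow_add s0]; norm_num
  have s2p : 0 < s ^ (r - 2) := Real.rpow_pos_of_pos s0 _
  refine le_trans ?_ hb'
  rw [e2]
  have : (1 + r * (w / s - 1)) * (s ^ (r - 2) * s ^ 2)
      = s ^ (r - 2) * s ^ 2 + r * s ^ (r - 2) * (w * s - s ^ 2) := by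
    field_simp
  rw [this]
  have : ⟪y, z⟫ - ‖y‖ ^ 2 ≤ w * s - s ^ 2 := by nlinarith
  have := mul_le_mul_of_nonneg_left this (by positivity : 0 ≤ r * s ^ (r - 2))
  linarith

lemma norm_rpow_le_NN {r : ℝ} (hr : 1 ≤ r) (y : E) : ‖y‖ ^ r ≤ NN r y :=
  Real.rpow_le_rpow (norm_nonneg _) (norm_le_sq y) (by linarith)

lemma norm_le_NN {r : ℝ} (hr : 1 ≤ r) (y : E) : ‖y‖ ≤ NN r y :=
  (norm_le_sq y).trans (Real.self_le_rpow_of_one_le (one_le_sq y) hr)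

lemma one_le_NN {r : ℝ} (hr : 1 ≤ r) (y : E) : 1 ≤ NN r y :=
  Real.one_le_rpow (one_le_sq y) (by linarith)

lemma NN_le {r : ℝ} (hr : 1 ≤ r) (y : E) : NN r y ≤ 2 ^ r * (1 + ‖y‖ ^ r) := by
  have h1 : √(1 + ‖y‖ ^ 2) ≤ 2 * max 1 ‖y‖ := by
    rw [Real.sqrt_le_left (by positivity)]
    have a1 := le_max_left 1 ‖y‖
    have a2 := le_max_right 1 ‖y‖
    have := norm_nonneg y
    nlinarith
  have h2 : NN r y ≤ (2 * max 1 ‖y‖) ^ r := Real.rpow_le_rpow (by positivity) h1 (by linarith)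
  rw [Real.mul_rpow (by norm_num) (by positivity)] at h2
  refine h2.trans (mul_le_mul_of_nonneg_left ?_ (by positivity))
  rcases le_total 1 ‖y‖ with h | h
  · rw [max_eq_right h]; linarith
  · rw [max_eq_left h, Real.one_rpow]
    have := Real.rpow_nonneg (norm_nonneg y) r
    linarith

lemma continuous_sq : Continuous fun y : E => √(1 + ‖y‖ ^ 2) := by fun_prop

lemma continuous_NN (r : ℝ) : Continuous (NN r : E → ℝ) := by
  unfold NN
  exact continuous_sq.rpow_const fun y => Or.inl (by have := one_le_sq y; positivity)

lemma continuous_gN (r : ℝ) : Continuous (gN r : E → E) := by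
  unfold gN
  refine Continuous.smul (continuous_const.mul ?_) continuous_id
  exact continuous_sq.rpow_const fun y => Or.inl (by have := one_le_sq y; positivity)

end NN

lemma exists_supergrad {E : Type*} [NormedAddCommGroup E] [InnerProductSpace ℝ E] [CompleteSpace E]
    {ψ : E → ℝ} (hc : Continuous ψ) (hψ : ConcaveOn ℝ Set.univ ψ) (y : E) :
    ∃ g : E, ∀ z, ψ z ≤ ψ y + ⟪g, z - y⟫ := by
  have hconv : Convex ℝ {p : E × ℝ | p.1 ∈ (Set.univ : Set E) ∧ p.2 < ψ p.1} :=
    hψ.convex_strict_hypograph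
  have hopen : IsOpen {p : E × ℝ | p.1 ∈ (Set.univ : Set E) ∧ p.2 < ψ p.1} := by
    simp only [Set.mem_univ, true_and]
    exact isOpen_lt continuous_snd (hc.comp continuous_fst)
  obtain ⟨f, hf⟩ := geometric_hahn_banach_open_point (x := (y, ψ y)) hconv hopen (by simp)
  have hdec : ∀ z t, f (z, t) = f (z, 0) + t * f (0, 1) := by
    intro z t
    have : ((z, t) : E × ℝ) = (z, 0) + t • (0, 1) := by simp
    rw [this, map_add, map_smul, smul_eq_mul]
  have hpos : 0 < f (0, 1) := by
    have := hf (y, ψ y - 1) (by simp)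
    rw [hdec, hdec y (ψ y)] at this
    linarith
  have hle : ∀ z, f (z, 0) + ψ z * f (0, 1) ≤ f (y, 0) + ψ y * f (0, 1) := by
    intro z
    refine le_of_forall_pos_lt_add fun ε hε => ?_
    have := hf (z, ψ z - ε / f (0, 1)) (by simp; positivity)
    rw [hdec, hdec y (ψ y)] at this
    have e : (ψ z - ε / f (0, 1)) * f (0, 1) = ψ z * f (0, 1) - ε := by field_simp
    linarith
  let l : E →L[ℝ] ℝ := f.comp (ContinuousLinearMap.inl ℝ E ℝ)
  refine ⟨-(f (0, 1))⁻¹ • (InnerProductSpace.toDual ℝ E).symm l, fun z => ?_⟩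
  rw [real_inner_smul_left, InnerProductSpace.toDual_symm_apply, map_sub]
  have h := hle z
  have lz : l z = f (z, 0) := by simp [l]
  have ly : l y = f (y, 0) := by simp [l]
  rw [lz, ly]
  have : (f (0, 1))⁻¹ * (f (z, 0) + ψ z * f (0, 1)) ≤ (f (0, 1))⁻¹ * (f (y, 0) + ψ y * f (0, 1)) :=
    mul_le_mul_of_nonneg_left h (by positivity)
  have e1 : ∀ a b : ℝ, (f (0, 1))⁻¹ * (a + b * f (0, 1)) = (f (0, 1))⁻¹ * a + b := by
    intro a b; field_simp
  rw [e1, e1] at this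
  linarith

lemma lsc_lintegral {Z : Type*} [TopologicalSpace Z] [MeasurableSpace Z] [OpensMeasurableSpace Z]
    {G : Z → ℝ} (hG : Continuous G) :
    LowerSemicontinuous fun π : ProbabilityMeasure Z => ∫⁻ z, ENNReal.ofReal (G z) ∂(π : Measure Z) := by
  let f : ℕ → BoundedContinuousFunction Z ℝ≥0 := fun n =>
    BoundedContinuousFunction.mkOfBound ⟨fun z => min (G z).toNNReal n, by fun_prop⟩ n (by
      intro x y
      rw [NNReal.dist_eq, abs_le]
      have h1 : (min (G x).toNNReal (n : ℝ≥0) : ℝ) ≤ n := by exact_mod_cast min_le_right _ _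
      have h2 : (min (G y).toNNReal (n : ℝ≥0) : ℝ) ≤ n := by exact_mod_cast min_le_right _ _
      have h3 : (0:ℝ) ≤ (min (G x).toNNReal (n : ℝ≥0) : ℝ≥0) := NNReal.coe_nonneg _
      have h4 : (0:ℝ) ≤ (min (G y).toNNReal (n : ℝ≥0) : ℝ≥0) := NNReal.coe_nonneg _
      simp only [ContinuousMap.coe_mk]
      push_cast at *
      constructor <;> linarith)
  have hf : ∀ n z, f n z = min (G z).toNNReal n := fun n z => rfl
  have key : (fun π : ProbabilityMeasure Z => ∫⁻ z, ENNReal.ofReal (G z) ∂(π : Measure Z))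
      = fun π : ProbabilityMeasure Z => ⨆ n, ((π.toFiniteMeasure.testAgainstNN (f n) : ℝ≥0) : ℝ≥0∞) := by
    ext π
    simp only [FiniteMeasure.testAgainstNN_coe_eq]
    rw [← lintegral_iSup]
    · refine lintegral_congr fun z => ?_
      apply le_antisymm
      · obtain ⟨n, hn⟩ := exists_nat_ge (G z).toNNReal
        refine le_iSup_of_le n ?_
        rw [hf, min_eq_left (by exact_mod_cast hn)]
        rfl
      · refine iSup_le fun n => ?_
        rw [hf]
        exact ENNReal.coe_le_coe.2 (min_le_left _ _)
    · intro n
      exact (f n).continuous.measurable.coe_nnreal_ennreal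
    · intro n m hnm z
      simp only [hf]
      gcongr
  rw [key]
  refine lowerSemicontinuous_iSup fun n => Continuous.lowerSemicontinuous ?_
  exact ENNReal.continuous_coe.comp (ProbabilityMeasure.continuous_testAgainstNN_eval (f n))

lemma lsc_approx {W : Type*} [PseudoMetricSpace W] {F : W → ℝ≥0∞} (hF : LowerSemicontinuous F) :
    ∃ f : ℕ → W → ℝ, (∀ n, Continuous (f n)) ∧ (∀ n w, 0 ≤ f n w) ∧ (∀ n w, f n w ≤ n) ∧
      (∀ n w, ENNReal.ofReal (f n w) ≤ F w) ∧ Monotone f ∧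
      ∀ w, F w = ⨆ n, ENNReal.ofReal (f n w) := by
  rcases isEmpty_or_nonempty W with hW | hW
  · exact ⟨fun _ _ => 0, fun _ => continuous_const, fun n w => hW.elim w, fun n w => hW.elim w,
      fun n w => hW.elim w, fun _ _ _ => le_rfl, fun w => hW.elim w⟩
  let q : ℕ → W → W → ℝ := fun n w v => (min (F v) n).toReal + n * dist w v
  have q0 : ∀ n w v, 0 ≤ q n w v := fun n w v => by positivity
  have bdd : ∀ n w, BddBelow (range (q n w)) := fun n w =>
    ⟨0, by rintro _ ⟨v, rfl⟩; exact q0 n w v⟩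
  have hself : ∀ n w, ⨅ v, q n w v ≤ (min (F w) n).toReal := by
    intro n w
    refine (ciInf_le (bdd n w) w).trans ?_
    simp [q]
  refine ⟨fun n w => ⨅ v, q n w v, ?_, ?_, ?_, ?_, ?_, ?_⟩
  · intro n
    have : LipschitzWith n (fun w => ⨅ v, q n w v) := by
      refine LipschitzWith.of_le_add_mul _ fun w w' => ?_
      have e2 : (⨅ v, q n w v) - n * dist w w' ≤ ⨅ v, q n w' v := by
        refine le_ciInf fun v => ?_
        have h1 := ciInf_le (bdd n w) v
        have : q n w v ≤ q n w' v + n * dist w w' := by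
          have := dist_triangle w w' v
          have := mul_le_mul_of_nonneg_left this (Nat.cast_nonneg n : (0:ℝ) ≤ n)
          simp only [q]
          linarith
        linarith
      push_cast
      linarith
    exact this.continuous
  · intro n w
    exact le_ciInf fun v => q0 n w v
  · intro n w
    refine (hself n w).trans ?_
    exact ENNReal.toReal_le_of_le_ofReal (by positivity) (by simp)
  · intro n w
    refine (ENNReal.ofReal_le_ofReal (hself n w)).trans ?_
    rw [ENNReal.ofReal_toReal (by simp)]
    exact min_le_left _ _
  · intro n m hnm w
    refine ciInf_mono (bdd n w) fun v => ?_
    simp only [q]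
    gcongr
    simp
  · intro w
    apply le_antisymm
    · refine le_of_forall_lt fun b hb => ?_
      obtain ⟨b', hbb', hb'⟩ := exists_between hb
      have hb't : b' ≠ ⊤ := hb'.ne_top
      obtain ⟨δ, hδ, hball⟩ := Metric.eventually_nhds_iff.1 (hF w b' hb')
      obtain ⟨n, hn⟩ := exists_nat_ge (max b'.toReal (b'.toReal / δ))
      refine lt_of_lt_of_le hbb' (le_iSup_of_le n ?_)
      rw [← ENNReal.ofReal_toReal hb't]
      refine ENNReal.ofReal_le_ofReal (le_ciInf fun v => ?_)
      by_cases hv : dist v w < δ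
      · have h1 := hball hv
        have : b'.toReal ≤ (min (F v) n).toReal := by
          refine ENNReal.toReal_mono (by simp) (le_min h1.le ?_)
          rw [← ENNReal.ofReal_toReal hb't, ← ENNReal.ofReal_natCast]
          exact ENNReal.ofReal_le_ofReal ((le_max_left _ _).trans hn)
        simp only [q]
        have : 0 ≤ n * dist w v := by positivity
        linarith
      · push Not at hv
        have h1 : b'.toReal / δ ≤ n := (le_max_right _ _).trans hn
        rw [div_le_iff₀ hδ] at h1
        have : n * δ ≤ n * dist w v := by rw [dist_comm]; gcongr
        have : 0 ≤ (min (F v) n).toReal := by positivity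
        simp only [q]
        linarith
    · refine iSup_le fun n => ?_
      refine (ENNReal.ofReal_le_ofReal (hself n w)).trans ?_
      rw [ENNReal.ofReal_toReal (by simp)]
      exact min_le_left _ _

lemma sep_weights {ι : Type*} [Fintype ι] [Nonempty ι] (S : Set (ι → ℝ)) (hS : Convex ℝ S)
    (hup : ∀ v ∈ S, ∀ v', v ≤ v' → v' ∈ S) (s : ι → ℝ) (hd : ∀ v ∈ S, ∃ i, s i < v i) :
    ∃ w : ι → ℝ, (∀ i, 0 ≤ w i) ∧ ∑ i, w i = 1 ∧ ∀ v ∈ S, ∑ i, w i * s i ≤ ∑ i, w i * v i := by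
  classical
  rcases S.eq_empty_or_nonempty with rfl | ⟨v0, hv0⟩
  · obtain ⟨i0⟩ := ‹Nonempty ι›
    refine ⟨Pi.single i0 1, fun i => ?_, by simp, by simp⟩
    by_cases h : i = i0
    · subst h; simp
    · simp [h]
  have hopen : IsOpen (Set.pi Set.univ fun i => Iio (s i)) :=
    isOpen_set_pi finite_univ fun i _ => isOpen_Iio
  have hconv : Convex ℝ (Set.pi Set.univ fun i => Iio (s i)) :=
    convex_pi fun i _ => convex_Iio (s i)
  obtain ⟨f, u, hf1, hf2⟩ := geometric_hahn_banach_open hconv hopen hS (by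
    rw [Set.disjoint_left]
    intro v hv hvS
    obtain ⟨i, hi⟩ := hd v hvS
    have := hv i (mem_univ i)
    simp only [mem_Iio] at this
    linarith)
  let w : ι → ℝ := fun i => f (Pi.single i 1)
  have hfw : ∀ v, f v = ∑ i, w i * v i := by
    intro v
    conv_lhs => rw [pi_eq_sum_univ' v]
    rw [map_sum]
    refine Finset.sum_congr rfl fun i _ => ?_
    rw [map_smul, smul_eq_mul, mul_comm]
  have hw0 : ∀ i, 0 ≤ w i := by
    intro i
    by_contra hneg
    push Not at hneg
    obtain ⟨t, ht0, ht⟩ : ∃ t : ℝ, 0 ≤ t ∧ f v0 + t * w i < u := by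
      refine ⟨max 0 ((f v0 - u + 1) / (-w i)), le_max_left _ _, ?_⟩
      have h1 := le_max_right 0 ((f v0 - u + 1) / (-w i))
      rw [div_le_iff₀ (by linarith)] at h1
      nlinarith
    have := hf2 (v0 + t • Pi.single i 1) (hup v0 hv0 _ (by
      intro j
      by_cases h : j = i
      · subst h; simp [ht0]
      · simp [h]))
    rw [map_add, map_smul, smul_eq_mul] at this
    change u ≤ f v0 + t * w i at this
    linarith
  have hle : f s ≤ u := by
    refine le_of_forall_pos_le_add fun ε hε => ?_
    have hδ : 0 < ε / (1 + ∑ i, w i) := by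
      have : 0 ≤ ∑ i, w i := Finset.sum_nonneg fun i _ => hw0 i
      positivity
    have h1 := hf1 (fun i => s i - ε / (1 + ∑ i, w i)) (by intro i _; simp [hδ])
    rw [hfw] at h1 ⊢
    simp only [mul_sub, Finset.sum_sub_distrib, ← Finset.sum_mul] at h1
    have hs0 : 0 ≤ ∑ i, w i := Finset.sum_nonneg fun i _ => hw0 i
    have : (∑ i, w i) * (ε / (1 + ∑ i, w i)) ≤ ε := by
      rw [mul_div_assoc', div_le_iff₀ (by positivity)]
      nlinarith
    linarith
  have hsum : 0 < ∑ i, w i := by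
    rcases (Finset.sum_nonneg fun i _ => hw0 i : 0 ≤ ∑ i, w i).lt_or_eq with h | h
    · exact h
    exfalso
    have hz : ∀ i, w i = 0 := fun i =>
      (Finset.sum_eq_zero_iff_of_nonneg fun i _ => hw0 i).1 h.symm i (Finset.mem_univ i)
    have h1 := hf1 (fun i => s i - 1) (by intro i _; simp)
    have h2 := hf2 v0 hv0
    rw [hfw] at h1 h2
    simp only [hz, zero_mul, Finset.sum_const_zero] at h1 h2
    linarith
  refine ⟨fun i => w i / ∑ i, w i, fun i => div_nonneg (hw0 i) hsum.le, ?_, ?_⟩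
  · rw [← Finset.sum_div, div_self hsum.ne']
  · intro v hv
    have := hle.trans (hf2 v hv)
    rw [hfw, hfw] at this
    simp only [div_mul_eq_mul_div, ← Finset.sum_div]
    gcongr

lemma minimax {Z I : Type*} [TopologicalSpace Z] [MeasurableSpace Z] [OpensMeasurableSpace Z]
    (G : I → Z → ℝ) (hGc : ∀ i, Continuous (G i)) (hG0 : ∀ i z, 0 ≤ G i z) (s : I → ℝ)
    (Q M : Set (ProbabilityMeasure Z)) (hM : IsCompact M) (i0 : I)
    (hi0 : ∀ π ∈ Q, π ∉ M → ENNReal.ofReal (s i0) < ∫⁻ z, ENNReal.ofReal (G i0 z) ∂(π : Measure Z))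
    (hcov : ∀ π ∈ M, ∃ i, ENNReal.ofReal (s i) < ∫⁻ z, ENNReal.ofReal (G i z) ∂(π : Measure Z))
    (hQ : ∀ π₁ ∈ Q, ∀ π₂ ∈ Q, ∀ a b : ℝ≥0, a + b = 1 →
      ∃ π ∈ Q, (π : Measure Z) = a • (π₁ : Measure Z) + b • (π₂ : Measure Z)) :
    ∃ (t : Finset I) (w : I → ℝ), (∀ i ∈ t, 0 ≤ w i) ∧ ∑ i ∈ t, w i = 1 ∧
      ∀ π ∈ Q, (∀ i ∈ t, Integrable (G i) (π : Measure Z)) →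
        ∑ i ∈ t, w i * s i ≤ ∑ i ∈ t, w i * ∫ z, G i z ∂(π : Measure Z) := by
  classical
  obtain ⟨t, ht⟩ := hM.elim_finite_subcover
    (fun i => {π : ProbabilityMeasure Z |
      ENNReal.ofReal (s i) < ∫⁻ z, ENNReal.ofReal (G i z) ∂(π : Measure Z)})
    (fun i => (lsc_lintegral (hGc i)).isOpen_preimage _) (by
      intro π hπ
      obtain ⟨i, hi⟩ := hcov π hπ
      exact mem_iUnion.2 ⟨i, hi⟩)
  let T := insert i0 t
  have hT : ∀ π ∈ Q, ∃ i ∈ T,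
      ENNReal.ofReal (s i) < ∫⁻ z, ENNReal.ofReal (G i z) ∂(π : Measure Z) := by
    intro π hπ
    by_cases h : π ∈ M
    · obtain ⟨i, hi⟩ := mem_iUnion.1 (ht h)
      obtain ⟨hi, h'⟩ := mem_iUnion.1 hi
      exact ⟨i, Finset.mem_insert_of_mem hi, h'⟩
    · exact ⟨i0, Finset.mem_insert_self _ _, hi0 π hπ h⟩
  let S : Set (T → ℝ) := {v | ∃ π ∈ Q, (∀ i : T, Integrable (G i) (π : Measure Z)) ∧
    ∀ i : T, ∫ z, G i z ∂(π : Measure Z) ≤ v i}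
  have : Nonempty T := ⟨⟨i0, Finset.mem_insert_self _ _⟩⟩
  obtain ⟨w, hw0, hw1, hw⟩ := sep_weights S (by
      rintro v ⟨π₁, h1, h1i, h1v⟩ v' ⟨π₂, h2, h2i, h2v⟩ a b ha hb hab
      lift a to ℝ≥0 using ha
      lift b to ℝ≥0 using hb
      obtain ⟨π, hπ, hπe⟩ := hQ π₁ h1 π₂ h2 a b (by exact_mod_cast hab)
      refine ⟨π, hπ, fun i => ?_, fun i => ?_⟩
      · rw [hπe]
        exact ((h1i i).smul_measure_nnreal).add_measure ((h2i i).smul_measure_nnreal)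
      · rw [hπe, integral_add_measure ((h1i i).smul_measure_nnreal)
          ((h2i i).smul_measure_nnreal), integral_smul_nnreal_measure,
          integral_smul_nnreal_measure]
        simp only [Pi.add_apply, Pi.smul_apply, smul_eq_mul, NNReal.smul_def]
        exact add_le_add (mul_le_mul_of_nonneg_left (h1v i) a.2)
          (mul_le_mul_of_nonneg_left (h2v i) b.2))
    (by
      rintro v ⟨π, h, hi, hv⟩ v' hvv'
      exact ⟨π, h, hi, fun i => (hv i).trans (hvv' i)⟩) (fun i => s i) (by
      rintro v ⟨π, h, hi, hv⟩
      obtain ⟨i, hiT, hlt⟩ := hT π h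
      refine ⟨⟨i, hiT⟩, lt_of_lt_of_le ?_ (hv ⟨i, hiT⟩)⟩
      have hint := hi ⟨i, hiT⟩
      simp only at hint ⊢
      rw [← ofReal_integral_eq_lintegral_ofReal hint (Eventually.of_forall (hG0 i))] at hlt
      exact (ENNReal.ofReal_lt_ofReal_iff').1 hlt |>.1)
  refine ⟨T, fun i => if h : i ∈ T then w ⟨i, h⟩ else 0, ?_, ?_, ?_⟩
  · intro i hi
    simp only [hi, dite_true]
    exact hw0 _
  · rw [← hw1, ← Finset.sum_coe_sort T]
    refine Finset.sum_congr rfl fun i _ => ?_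
    simp [i.2]
  · intro π hπ hint
    have := hw (fun i => ∫ z, G i z ∂(π : Measure Z)) ⟨π, hπ, fun i => hint i i.2, fun i => le_rfl⟩
    rw [← Finset.sum_coe_sort T, ← Finset.sum_coe_sort T]
    simpa using this

lemma PhiR_integrable {X : Type*} [MeasurableSpace X] [PseudoMetricSpace X] [BorelSpace X]
    {r : ℝ} {x₀ : X} {μ : Measure X} [IsProbabilityMeasure μ] (hr : 0 ≤ r)
    (hμ : FinMom r x₀ μ) {φ : X → ℝ} (hφ : φ ∈ PhiR r x₀) : Integrable φ μ := by
  obtain ⟨hc, K, hK⟩ := hφ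
  have hd : Continuous fun x => dist x x₀ ^ r :=
    (continuous_id.dist continuous_const).rpow_const fun x => Or.inr hr
  have hdi : Integrable (fun x => dist x x₀ ^ r) μ := by
    refine ⟨hd.aestronglyMeasurable, ?_⟩
    rw [hasFiniteIntegral_iff_ofReal (Eventually.of_forall fun x => by positivity)]
    exact hμ
  refine Integrable.mono' (((integrable_const (1:ℝ)).add hdi).const_mul K)
    hc.aestronglyMeasurable (Eventually.of_forall fun x => ?_)
  exact hK x

lemma dist_mem_PhiR {X : Type*} [PseudoMetricSpace X] {r : ℝ} (hr : 0 ≤ r) (x₀ : X) :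
    (fun x => dist x x₀ ^ r) ∈ PhiR r x₀ := by
  refine ⟨(continuous_id.dist continuous_const).rpow_const fun x => Or.inr hr, 1, fun x => ?_⟩
  rw [abs_of_nonneg (by positivity)]
  linarith

section setup
variable {X E : Type*} [MetricSpace X] [NormedAddCommGroup E] [InnerProductSpace ℝ E]

lemma NN_mem_PhiR {r : ℝ} (hr : 1 ≤ r) : (NN r : E → ℝ) ∈ PhiR r (0 : E) := by
  refine ⟨continuous_NN r, 2 ^ r, fun y => ?_⟩
  rw [abs_of_nonneg (by linarith [one_le_NN hr y]), dist_zero_right]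
  exact NN_le hr y

lemma PhiR_of_bdd {r : ℝ} {x₀ : X} {φ : X → ℝ} (hc : Continuous φ) (B : ℝ)
    (hB : ∀ x, |φ x| ≤ B) : φ ∈ PhiR r x₀ := by
  refine ⟨hc, B, fun x => (hB x).trans ?_⟩
  have : 0 ≤ B := (abs_nonneg _).trans (hB x)
  have : 0 ≤ dist x x₀ ^ r := by positivity
  nlinarith

lemma PhiR_add {r : ℝ} {x₀ : X} {φ ψ : X → ℝ} (h1 : φ ∈ PhiR r x₀) (h2 : ψ ∈ PhiR r x₀) :
    φ + ψ ∈ PhiR r x₀ := by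
  obtain ⟨c1, K1, b1⟩ := h1
  obtain ⟨c2, K2, b2⟩ := h2
  refine ⟨c1.add c2, K1 + K2, fun x => ?_⟩
  have := abs_add_le (φ x) (ψ x)
  simp only [Pi.add_apply]
  linarith [b1 x, b2 x]

lemma PhiR_smul {r : ℝ} {x₀ : X} {φ : X → ℝ} (h1 : φ ∈ PhiR r x₀) (a : ℝ) :
    a • φ ∈ PhiR r x₀ := by
  obtain ⟨c1, K1, b1⟩ := h1
  refine ⟨c1.const_smul a, |a| * K1, fun x => ?_⟩
  simp only [Pi.smul_apply, smul_eq_mul, abs_mul]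
  rw [mul_assoc]
  exact mul_le_mul_of_nonneg_left (b1 x) (abs_nonneg a)

lemma norm_mem_PhiR {r : ℝ} (hr : 1 ≤ r) : (fun y : E => ‖y‖) ∈ PhiR r (0 : E) := by
  obtain ⟨_, K, hK⟩ := NN_mem_PhiR (E := E) hr
  refine ⟨continuous_norm, K, fun y => le_trans ?_ (hK y)⟩
  rw [abs_of_nonneg (norm_nonneg _)]
  exact (norm_le_NN hr y).trans (le_abs_self _)

/-- dual variables -/
abbrev DV (X E : Type*) := (X × E → ℝ) × (E → ℝ) × (X × E → E)

structure Adm (r : ℝ) (F : X × E → ℝ≥0∞) (u : DV X E) : Prop where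
  fc : Continuous u.1
  f0 : ∀ w, 0 ≤ u.1 w
  fb : ∃ n : ℝ, ∀ w, u.1 w ≤ n
  fF : ∀ w, ENNReal.ofReal (u.1 w) ≤ F w
  ψp : u.2.1 ∈ PhiR r (0 : E)
  hc : Continuous u.2.2
  hb : ∃ H : ℝ, ∀ w, ‖u.2.2 w‖ ≤ H
  pos : ∀ w z, 0 ≤ u.2.1 z + ⟪u.2.2 w, z - w.2⟫

def DD (r : ℝ) (y z : E) : ℝ := NN r z - NN r y - ⟪gN r y, z - y⟫

lemma DD_nonneg {r : ℝ} (hr : 1 ≤ r) (y z : E) : 0 ≤ DD r y z := by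
  unfold DD; linarith [NN_grad hr y z]

lemma continuous_DD (r : ℝ) : Continuous fun p : E × E => DD r p.1 p.2 := by
  unfold DD
  have h1 : Continuous (NN r : E → ℝ) := continuous_NN r
  have h2 : Continuous (gN r : E → E) := continuous_gN r
  fun_prop

def BB (r K : ℝ) (p : (X × E) × E) : ℝ :=
  NN r p.1.2 + NN r p.2 + (K + 1) * DD r p.1.2 p.2

def GG (r K : ℝ) (u : DV X E) (p : (X × E) × E) : ℝ :=
  u.1 p.1 + BB r K p + (u.2.1 p.2 + ⟪u.2.2 p.1, p.2 - p.1.2⟫)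

lemma continuous_BB (r K : ℝ) : Continuous (BB r K : (X × E) × E → ℝ) := by
  unfold BB
  have h1 : Continuous (NN r : E → ℝ) := continuous_NN r
  have h2 : Continuous fun p : (X × E) × E => DD r p.1.2 p.2 :=
    (continuous_DD r).comp (g := fun p : E × E => DD r p.1 p.2)
      (f := fun p : (X × E) × E => (p.1.2, p.2)) (by fun_prop)
  fun_prop

lemma NN_le_BB {r K : ℝ} (hr : 1 ≤ r) (hK : 0 ≤ K) (p : (X × E) × E) :
    NN r p.1.2 + NN r p.2 ≤ BB r K p := by
  unfold BB
  have := DD_nonneg hr p.1.2 p.2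
  nlinarith

lemma BB_le_GG {r K : ℝ} {F : X × E → ℝ≥0∞} {u : DV X E} (hu : Adm r F u) (p : (X × E) × E) :
    BB r K p ≤ GG r K u p := by
  unfold GG
  have := hu.f0 p.1
  have := hu.pos p.1 p.2
  linarith

lemma continuous_GG {r K : ℝ} {F : X × E → ℝ≥0∞} {u : DV X E} (hu : Adm r F u) :
    Continuous (GG r K u) := by
  unfold GG
  have h1 := continuous_BB (X := X) (E := E) r K
  have h2 := hu.fc
  have h3 := hu.ψp.1
  have h4 := hu.hc
  fun_prop

lemma adm_convex (r : ℝ) (F : X × E → ℝ≥0∞) : Convex ℝ {u : DV X E | Adm r F u} := by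
  rintro u hu v hv a b ha hb hab
  refine ⟨(hu.fc.const_smul a).add (hv.fc.const_smul b), ?_, ?_, ?_, ?_, ?_, ?_, ?_⟩
  · intro w
    have := hu.f0 w; have := hv.f0 w
    simp only [Prod.fst_add, Prod.smul_fst, Pi.add_apply, Pi.smul_apply, smul_eq_mul]
    positivity
  · obtain ⟨n, hn⟩ := hu.fb
    obtain ⟨m, hm⟩ := hv.fb
    refine ⟨a * n + b * m, fun w => ?_⟩
    simp only [Prod.fst_add, Prod.smul_fst, Pi.add_apply, Pi.smul_apply, smul_eq_mul]
    have := hn w; have := hm w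
    gcongr
  · intro w
    simp only [Prod.fst_add, Prod.smul_fst, Pi.add_apply, Pi.smul_apply, smul_eq_mul]
    by_cases hF : F w = ⊤
    · simp [hF]
    rw [ENNReal.ofReal_le_iff_le_toReal hF]
    have h1 := (ENNReal.ofReal_le_iff_le_toReal hF).1 (hu.fF w)
    have h2 := (ENNReal.ofReal_le_iff_le_toReal hF).1 (hv.fF w)
    calc a * u.1 w + b * v.1 w ≤ a * (F w).toReal + b * (F w).toReal := by gcongr
      _ = (F w).toReal := by rw [← add_mul, hab, one_mul]
  · exact PhiR_add (PhiR_smul hu.ψp a) (PhiR_smul hv.ψp b)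
  · exact (hu.hc.const_smul a).add (hv.hc.const_smul b)
  · obtain ⟨n, hn⟩ := hu.hb
    obtain ⟨m, hm⟩ := hv.hb
    refine ⟨a * n + b * m, fun w => ?_⟩
    simp only [Prod.snd_add, Prod.smul_snd, Pi.add_apply, Pi.smul_apply]
    refine (norm_add_le _ _).trans ?_
    rw [norm_smul, norm_smul, Real.norm_of_nonneg ha, Real.norm_of_nonneg hb]
    have := hn w; have := hm w
    gcongr
  · intro w z
    have h1 := hu.pos w z; have h2 := hv.pos w z
    simp only [Prod.snd_add, Prod.smul_snd, Prod.fst_add, Prod.smul_fst, Pi.add_apply,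
      Pi.smul_apply, smul_eq_mul, inner_add_left, real_inner_smul_left]
    nlinarith

lemma adm_zero (r : ℝ) (F : X × E → ℝ≥0∞) : Adm r F (0 : DV X E) :=
  ⟨continuous_const, fun _ => le_rfl, ⟨0, fun _ => le_rfl⟩, fun _ => by simp,
    PhiR_of_bdd continuous_const 0 (by simp), continuous_const, ⟨0, by simp⟩, by simp⟩

lemma adm_sum_GG {r K : ℝ} {ι : Type*} (t : Finset ι) (w : ι → ℝ) (hw : ∑ i ∈ t, w i = 1)
    (u : ι → DV X E) (p : (X × E) × E) :
    GG r K (∑ i ∈ t, w i • u i) p = ∑ i ∈ t, w i * GG r K (u i) p := by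
  unfold GG
  simp only [mul_add, Finset.sum_add_distrib, ← Finset.sum_mul, hw, one_mul, Prod.fst_sum,
    Prod.snd_sum, Finset.sum_apply, Prod.smul_fst, Prod.smul_snd, Pi.smul_apply, smul_eq_mul,
    sum_inner, real_inner_smul_left]
end setup

section compactM
variable {X E : Type*} [MetricSpace X] [CompleteSpace X] [SecondCountableTopology X]
  [MeasurableSpace X] [BorelSpace X]
  [NormedAddCommGroup E] [InnerProductSpace ℝ E] [FiniteDimensional ℝ E]
  [MeasurableSpace E] [BorelSpace E]

def QQ (E : Type*) [MeasurableSpace E] {X : Type*} [MeasurableSpace X] (μ : Measure X) :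
    Set (ProbabilityMeasure ((X × E) × E)) :=
  {π | (π : Measure ((X × E) × E)).map (fun p => p.1.1) = μ}

def MM (E : Type*) [MeasurableSpace E] [NormedAddCommGroup E] {X : Type*} [MeasurableSpace X]
    (μ : Measure X) (r s0 : ℝ) :
    Set (ProbabilityMeasure ((X × E) × E)) :=
  {π | π ∈ QQ E μ ∧ ∫⁻ p, ENNReal.ofReal (NN r p.1.2 + NN r p.2) ∂(π : Measure ((X × E) × E))
    ≤ ENNReal.ofReal s0}

lemma MM_compact (μ : Measure X) [IsProbabilityMeasure μ] {r : ℝ} (hr : 1 ≤ r) (s0 : ℝ) :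
    IsCompact (MM E μ r s0) := by
  have : ProperSpace E := FiniteDimensional.proper_real E
  have hNNc : Continuous fun p : (X × E) × E => NN r p.1.2 + NN r p.2 := by
    have h1 : Continuous (NN r : E → ℝ) := continuous_NN r
    fun_prop
  have hclosed : IsClosed (MM E μ r s0) := by
    have h1 : IsClosed (QQ E μ : Set (ProbabilityMeasure ((X × E) × E))) := by
      have hc : Continuous fun p : (X × E) × E => p.1.1 := by fun_prop
      have := ProbabilityMeasure.continuous_map hc
      have h2 : (QQ E μ : Set (ProbabilityMeasure ((X × E) × E))) =
          (fun π : ProbabilityMeasure ((X × E) × E) => π.map hc.measurable.aemeasurable) ⁻¹'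
            {(⟨μ, inferInstance⟩ : ProbabilityMeasure X)} := by
        ext π
        constructor
        · intro h
          exact Subtype.ext h
        · intro h
          exact congrArg Subtype.val h
      rw [h2]
      exact isClosed_singleton.preimage this
    exact h1.inter ((lsc_lintegral hNNc).isClosed_preimage _)
  have ht : IsTightMeasureSet {((π : ProbabilityMeasure ((X × E) × E)) : Measure ((X × E) × E)) |
      π ∈ MM E μ r s0} := by
    rw [isTightMeasureSet_iff_exists_isCompact_measure_compl_le]
    intro ε hε
    have hε2 : 0 < ε / 2 := ENNReal.half_pos hε.ne'
    obtain ⟨K₁, hK₁, hK₁'⟩ := (isTightMeasureSet_iff_exists_isCompact_measure_compl_le.1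
      (isTightMeasureSet_singleton (μ := μ))) (ε / 2) hε2
    obtain ⟨N, hN⟩ := ENNReal.exists_nat_gt
      (ENNReal.div_lt_top (ENNReal.ofReal_ne_top (r := s0)) hε2.ne').ne
    have hNpos : 0 < (N : ℝ≥0∞) := pos_of_gt hN
    refine ⟨(K₁ ×ˢ Metric.closedBall 0 N) ×ˢ Metric.closedBall 0 N,
      (hK₁.prod (isCompact_closedBall _ _)).prod (isCompact_closedBall _ _), ?_⟩
    rintro _ ⟨π, ⟨hπ, hπ2⟩, rfl⟩
    have hsub : ((K₁ ×ˢ Metric.closedBall (0:E) N) ×ˢ Metric.closedBall (0:E) N)ᶜ ⊆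
        ((fun p : (X × E) × E => p.1.1) ⁻¹' K₁ᶜ) ∪
        {p : (X × E) × E | (N : ℝ≥0∞) ≤ ENNReal.ofReal (NN r p.1.2 + NN r p.2)} := by
      intro p hp
      by_contra hcon
      simp only [mem_union, mem_preimage, mem_compl_iff, mem_ofPred_eq, not_or, not_not] at hcon
      apply hp
      have h3 : NN r p.1.2 + NN r p.2 < N := by
        by_contra hh
        push Not at hh
        apply hcon.2
        rw [← ENNReal.ofReal_natCast]
        exact ENNReal.ofReal_le_ofReal hh
      have a1 := norm_le_NN hr p.1.2
      have a2 := norm_le_NN hr p.2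
      have a3 := one_le_NN hr p.1.2
      have a4 := one_le_NN hr p.2
      refine ⟨⟨hcon.1, ?_⟩, ?_⟩ <;> simp only [Metric.mem_closedBall, dist_zero_right] <;> linarith
    refine (measure_mono hsub).trans ((measure_union_le _ _).trans ?_)
    rw [← ENNReal.add_halves ε]
    refine add_le_add ?_ ?_
    · have := hK₁' μ rfl
      rwa [← (show _ = μ from hπ), Measure.map_apply (by fun_prop) hK₁.isClosed.measurableSet.compl] at this
    · refine (meas_ge_le_lintegral_div hNNc.measurable.ennreal_ofReal.aemeasurable hNpos.ne'
        (ENNReal.natCast_ne_top N)).trans ?_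
      rw [ENNReal.div_le_iff hNpos.ne' (ENNReal.natCast_ne_top N)]
      refine hπ2.trans ?_
      rw [mul_comm]
      exact (ENNReal.div_lt_iff (Or.inl hε2.ne') (Or.inr ENNReal.ofReal_ne_top)).1 hN |>.le
  have := isCompact_closure_of_isTightMeasureSet ht
  rwa [hclosed.closure_eq] at this

lemma QQ_convex (μ : Measure X) : ∀ π₁ ∈ QQ E μ, ∀ π₂ ∈ QQ E μ, ∀ a b : ℝ≥0, a + b = 1 →
      ∃ π ∈ QQ E μ, (π : Measure ((X × E) × E)) =
        a • (π₁ : Measure ((X × E) × E)) + b • (π₂ : Measure ((X × E) × E)) := by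
  intro π₁ h₁ π₂ h₂ a b hab
  have hp : IsProbabilityMeasure (a • (π₁ : Measure ((X × E) × E)) + b • (π₂ : Measure ((X × E) × E))) := by
    constructor
    have e1 : (a • (π₁ : Measure ((X × E) × E))) univ = a := by
      rw [Measure.smul_apply, measure_univ, ENNReal.smul_def, smul_eq_mul, mul_one]
    have e2 : (b • (π₂ : Measure ((X × E) × E))) univ = b := by
      rw [Measure.smul_apply, measure_univ, ENNReal.smul_def, smul_eq_mul, mul_one]
    rw [Measure.add_apply, e1, e2]
    exact_mod_cast hab
  refine ⟨⟨_, hp⟩, ?_, rfl⟩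
  simp only [QQ, mem_ofPred_eq] at h₁ h₂ ⊢
  change Measure.map _ (a • (π₁ : Measure ((X × E) × E)) + b • (π₂ : Measure ((X × E) × E))) = μ
  rw [Measure.map_add _ _ (by fun_prop), Measure.map_smul, Measure.map_smul, h₁, h₂, ← add_smul, hab, one_smul]
end compactM

section stepC
variable {X E : Type*} [MetricSpace X] [SecondCountableTopology X]
  [MeasurableSpace X] [BorelSpace X]
  [NormedAddCommGroup E] [InnerProductSpace ℝ E] [FiniteDimensional ℝ E]
  [MeasurableSpace E] [BorelSpace E]

/-- recursive approximate minimisers -/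
def TT [SecondCountableTopology E] (g : X → E × E → ℝ) : ℕ → X → E × E
  | 0 => fun _ => 0
  | (k+1) => fun x => if g x (TopologicalSpace.denseSeq (E × E) k) < g x (TT g k x)
      then TopologicalSpace.denseSeq (E × E) k else TT g k x

lemma stepC {r K : ℝ} (hr : 1 ≤ r) (hK : 0 ≤ K) {F : X × E → ℝ≥0∞} {u : DV X E}
    (hu : Adm r F u) (μ : Measure X) [IsProbabilityMeasure μ] (S : ℝ)
    (hS : ∀ T : X → E × E, Measurable T → (range T).Finite →
      S ≤ ∫ x, GG r K u ((x, (T x).1), (T x).2) ∂μ) :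
    ∃ R : X → ℝ, Continuous R ∧ (∃ B, ∀ x, |R x| ≤ B) ∧
      (∀ x y z, R x ≤ GG r K u ((x, y), z)) ∧ S ≤ ∫ x, R x ∂μ := by
  have : ProperSpace E := FiniteDimensional.proper_real E
  have hGc := continuous_GG (K := K) hu
  set g : X → E × E → ℝ := fun x t => GG r K u ((x, t.1), t.2) with hg
  have hgc : Continuous (fun p : X × (E × E) => g p.1 p.2) := by
    exact hGc.comp (f := fun p : X × (E × E) => ((p.1, p.2.1), p.2.2)) (by fun_prop)
  have hgx : ∀ x, Continuous (g x) := fun x => hgc.comp (by fun_prop : Continuous fun t => (x, t))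
  have hcoer : ∀ x t, ‖t‖ ≤ g x t := by
    intro x t
    have h1 := NN_le_BB hr hK ((x, t.1), t.2)
    have h2 := BB_le_GG (K := K) hu ((x, t.1), t.2)
    have a1 := norm_le_NN hr t.1
    have a2 := norm_le_NN hr t.2
    have a3 := one_le_NN hr t.1
    have a4 := one_le_NN hr t.2
    simp only at h1
    refine le_trans ?_ (h1.trans h2)
    rw [Prod.norm_def]
    apply max_le <;> linarith
  obtain ⟨B0, hB0⟩ : ∃ B0, ∀ x, g x 0 ≤ B0 := by
    obtain ⟨n, hn⟩ := hu.fb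
    refine ⟨n + (NN r (0:E) + NN r (0:E) + (K + 1) * DD r (0:E) 0) + u.2.1 0, fun x => ?_⟩
    simp only [hg, GG, BB, Prod.fst_zero, Prod.snd_zero, sub_self, inner_zero_right, add_zero]
    linarith [hn (x, 0)]
  have hg0 : ∀ x t, 0 ≤ g x t := fun x t => (norm_nonneg _).trans (hcoer x t)
  set Kc : Set (E × E) := Metric.closedBall 0 B0 with hKc
  have hKcc : IsCompact Kc := isCompact_closedBall _ _
  have hbdd : ∀ x, BddBelow (g x '' Kc) := fun x => ⟨0, by rintro _ ⟨t, _, rfl⟩; exact hg0 x t⟩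
  by_cases hXe : IsEmpty X
  · exact absurd (measure_univ (μ := μ)) (by simp [Measure.eq_zero_of_isEmpty μ])
  rw [not_isEmpty_iff] at hXe
  have h0K : (0 : E × E) ∈ Kc := by
    obtain ⟨x⟩ := hXe
    simpa [hKc] using (hg0 x 0).trans (hB0 x)
  set R : X → ℝ := fun x => sInf (g x '' Kc) with hR
  have hRc : Continuous R := hKcc.continuous_sInf hgc
  have hRg : ∀ x t, R x ≤ g x t := by
    intro x t
    by_cases ht : t ∈ Kc
    · exact csInf_le (hbdd x) ⟨t, ht, rfl⟩
    · have h1 : R x ≤ g x 0 := csInf_le (hbdd x) ⟨0, h0K, rfl⟩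
      have h2 : B0 < ‖t‖ := by simpa [hKc] using ht
      linarith [hcoer x t, hB0 x]
  have hR0 : ∀ x, 0 ≤ R x := fun x => le_csInf ⟨_, 0, h0K, rfl⟩ (by
    rintro _ ⟨t, _, rfl⟩; exact hg0 x t)
  refine ⟨R, hRc, ⟨B0, fun x => ?_⟩, fun x y z => hRg x (y, z), ?_⟩
  · rw [abs_of_nonneg (hR0 x)]; exact (hRg x 0).trans (hB0 x)
  have hTm : ∀ k, Measurable (TT g k) ∧ (range (TT g k)).Finite := by
    intro k
    induction k with
    | zero =>
      refine ⟨measurable_const, (finite_singleton (0 : E × E)).subset ?_⟩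
      rintro _ ⟨x, rfl⟩
      rfl
    | succ k ih =>
      constructor
      · refine Measurable.ite ?_ measurable_const ih.1
        refine measurableSet_lt ?_ ?_
        · exact (hgc.comp (by fun_prop : Continuous fun x : X =>
            (x, TopologicalSpace.denseSeq (E × E) k))).measurable
        · exact hgc.measurable.comp (measurable_id.prodMk ih.1)
      · refine (ih.2.insert (TopologicalSpace.denseSeq (E × E) k)).subset ?_
        rintro _ ⟨x, rfl⟩
        simp only [TT]
        split_ifs
        · exact mem_insert _ _
        · exact mem_insert_of_mem _ ⟨x, rfl⟩
  have hanti : ∀ x, Antitone fun k => g x (TT g k x) := by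
    intro x
    refine antitone_nat_of_succ_le fun k => ?_
    simp only [TT]
    split_ifs with h
    · exact h.le
    · exact le_rfl
  have hlim : ∀ x, Tendsto (fun k => g x (TT g k x)) atTop (𝓝 (R x)) := by
    intro x
    refine tendsto_order.2 ⟨fun a ha => Eventually.of_forall fun k => ha.trans_le (hRg x _), ?_⟩
    intro a ha
    obtain ⟨_, ⟨t, _, rfl⟩, ht⟩ := exists_lt_of_csInf_lt (⟨_, 0, h0K, rfl⟩ : (g x '' Kc).Nonempty) ha
    obtain ⟨s, hs⟩ := (TopologicalSpace.denseRange_denseSeq (E × E)).exists_mem_open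
      ((hgx x).isOpen_preimage _ isOpen_Iio) ⟨t, ht⟩
    filter_upwards [eventually_ge_atTop (s + 1)] with n hn
    refine lt_of_le_of_lt ((hanti x hn).trans ?_) hs
    simp only [TT]
    split_ifs with h
    · exact le_rfl
    · exact not_lt.1 h
  have hint : Tendsto (fun k => ∫ x, g x (TT g k x) ∂μ) atTop (𝓝 (∫ x, R x ∂μ)) := by
    refine tendsto_integral_of_dominated_convergence (fun _ => B0) (fun k => ?_)
      (integrable_const _) (fun k => Eventually.of_forall fun x => ?_)
      (Eventually.of_forall hlim)
    · exact (hgc.measurable.comp (measurable_id.prodMk (hTm k).1)).aestronglyMeasurable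
    · rw [Real.norm_of_nonneg (hg0 _ _)]
      exact (hanti x (Nat.zero_le k)).trans (hB0 x)
  exact ge_of_tendsto' hint fun k => hS _ (hTm k).1 (hTm k).2
end stepC

section dualC
variable {X E : Type*} [MetricSpace X]
  [NormedAddCommGroup E] [InnerProductSpace ℝ E] [FiniteDimensional ℝ E]

lemma dualC [Nonempty X] {r K : ℝ} (hr : 1 ≤ r) {F : X × E → ℝ≥0∞} {u : DV X E}
    (hu : Adm r F u) (x₀ : X) (R : X → ℝ) (hRc : Continuous R) (B : ℝ) (hB : ∀ x, |R x| ≤ B)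
    (hRG : ∀ x y z, R x ≤ GG r K u ((x, y), z)) :
    ∃ φ ∈ PhiR r x₀, ∃ ψ ∈ PhiR r (0 : E), ConcaveOn ℝ univ ψ ∧
      (∀ x y, φ x + ψ y ≤ u.1 (x, y) - K * (1 + dist x x₀ ^ r + NN r y)) ∧
      (∀ x, φ x = R x - K * (1 + dist x x₀ ^ r)) ∧
      ∀ z, -(K + 2) * NN r z - u.2.1 z ≤ ψ z := by
  have hr0 : 0 ≤ r := by linarith
  set φ : X → ℝ := fun x => R x - K * (1 + dist x x₀ ^ r) with hφ
  set l : X × E → E → ℝ := fun w z => u.1 w - K * (1 + dist w.1 x₀ ^ r + NN r w.2) +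
    ⟪u.2.2 w - (K + 1) • gN r w.2, z - w.2⟫ - φ w.1 with hl
  have hlow : ∀ w z, -(K + 2) * NN r z - u.2.1 z ≤ l w z := by
    intro w z
    have := hRG w.1 w.2 z
    simp only [GG, BB, DD, Prod.mk.eta] at this
    simp only [hl, hφ, inner_sub_left, real_inner_smul_left]
    nlinarith
  have hbdd : ∀ z, BddBelow (range fun w => l w z) := fun z =>
    ⟨_, by rintro _ ⟨w, rfl⟩; exact hlow w z⟩
  set ψ : E → ℝ := fun z => ⨅ w, l w z with hψ
  have hψle : ∀ w z, ψ z ≤ l w z := fun w z => ciInf_le (hbdd z) w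
  have hψge : ∀ z, -(K + 2) * NN r z - u.2.1 z ≤ ψ z := fun z => le_ciInf fun w => hlow w z
  have hconc : ConcaveOn ℝ univ ψ := by
    refine ⟨convex_univ, ?_⟩
    intro z _ z' _ a b ha hb hab
    refine le_ciInf fun w => ?_
    have h1 := mul_le_mul_of_nonneg_left (hψle w z) ha
    have h2 := mul_le_mul_of_nonneg_left (hψle w z') hb
    have h3 : l w (a • z + b • z') = a * l w z + b * l w z' := by
      have : a • z + b • z' - w.2 = a • (z - w.2) + b • (z' - w.2) := by
        rw [smul_sub, smul_sub, sub_add_sub_comm, ← add_smul, hab, one_smul]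
      simp only [hl]
      rw [this, inner_add_right, real_inner_smul_right, real_inner_smul_right]
      have hb' : b = 1 - a := by linarith
      subst hb'
      ring
    rw [h3]
    simp only [smul_eq_mul]
    linarith
  have hψc : Continuous ψ := by
    have := hconc.continuousOn isOpen_univ
    rwa [continuousOn_univ] at this
  have hφm : φ ∈ PhiR r x₀ := by
    have h1 : R ∈ PhiR r x₀ := PhiR_of_bdd hRc B hB
    have h2 : (fun _ : X => (1:ℝ)) ∈ PhiR r x₀ := PhiR_of_bdd continuous_const 1 (by simp)
    have h3 := PhiR_add h1 (PhiR_smul (PhiR_add h2 (dist_mem_PhiR hr0 x₀)) (-K))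
    convert h3 using 1
    ext x
    simp [hφ]
    ring
  refine ⟨φ, hφm, ψ, ⟨hψc, ?_⟩, hconc, fun x y => ?_, fun x => rfl, hψge⟩
  · obtain ⟨x1⟩ := ‹Nonempty X›
    have a1 := PhiR_add (PhiR_smul (NN_mem_PhiR (E := E) hr) (-(K+2))) (PhiR_smul hu.ψp (-1))
    obtain ⟨_, K1, hK1⟩ := a1
    have a2 := PhiR_add (PhiR_of_bdd (r := r) (x₀ := (0:E)) (φ := fun _ => |l (x1, 0) 0|)
      continuous_const (|l (x1, 0) 0|) (by simp))
      (PhiR_smul (norm_mem_PhiR (E := E) hr) ‖u.2.2 (x1, 0) - (K + 1) • gN r 0‖)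
    obtain ⟨_, K2, hK2⟩ := a2
    refine ⟨K1 + K2, fun z => ?_⟩
    have b1 := hK1 z
    have b2 := hK2 z
    simp only [Pi.add_apply, Pi.smul_apply, smul_eq_mul] at b1 b2
    have b3 := hψge z
    have b4 := hψle (x1, 0) z
    have b5 : l (x1, 0) z ≤ |l (x1, 0) 0| + ‖u.2.2 (x1, 0) - (K + 1) • gN r 0‖ * ‖z‖ := by
      have c1 : l (x1, 0) z = l (x1, 0) 0 + ⟪u.2.2 (x1, 0) - (K + 1) • gN r 0, z⟫ := by
        simp only [hl, sub_zero, inner_zero_right]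
        ring
      rw [c1]
      have := real_inner_le_norm (u.2.2 (x1, 0) - (K + 1) • gN r 0) z
      linarith [le_abs_self (l (x1, 0) 0)]
    have b6 := neg_abs_le (-(K + 2) * NN r z + -1 * u.2.1 z)
    have b7 := le_abs_self (|l (x1, 0) 0| + ‖u.2.2 (x1, 0) - (K + 1) • gN r 0‖ * ‖z‖)
    have b8 := abs_nonneg (-(K + 2) * NN r z + -1 * u.2.1 z)
    have b9 := abs_nonneg (|l (x1, 0) 0| + ‖u.2.2 (x1, 0) - (K + 1) • gN r 0‖ * ‖z‖)
    rw [abs_le]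
    constructor <;> nlinarith
  · have := hψle (x, y) y
    simp only [hl, sub_self, inner_zero_right] at this
    linarith
end dualC

section dualMain
variable {X E : Type*} [MetricSpace X] [CompleteSpace X] [SecondCountableTopology X]
  [MeasurableSpace X] [BorelSpace X]
  [NormedAddCommGroup E] [InnerProductSpace ℝ E] [FiniteDimensional ℝ E]
  [MeasurableSpace E] [BorelSpace E]

lemma GG_bdd_x {r K : ℝ} {F : X × E → ℝ≥0∞} {u : DV X E} (hu : Adm r F u) (t : E × E) :
    ∃ B, ∀ x : X, |GG r K u ((x, t.1), t.2)| ≤ B := by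
  obtain ⟨n, hn⟩ := hu.fb
  obtain ⟨H, hH⟩ := hu.hb
  refine ⟨n + |NN r t.1 + NN r t.2 + (K + 1) * DD r t.1 t.2| + (|u.2.1 t.2| + H * ‖t.2 - t.1‖),
    fun x => ?_⟩
  simp only [GG, BB]
  have h1 : |u.1 (x, t.1)| ≤ n := by rw [abs_of_nonneg (hu.f0 _)]; exact hn _
  have h2 : |⟪u.2.2 (x, t.1), t.2 - t.1⟫| ≤ H * ‖t.2 - t.1‖ :=
    (abs_real_inner_le_norm _ _).trans (mul_le_mul_of_nonneg_right (hH _) (norm_nonneg _))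
  refine (abs_add_le _ _).trans (add_le_add ((abs_add_le _ _).trans (add_le_add h1 le_rfl))
    ((abs_add_le _ _).trans (add_le_add le_rfl h2)))

lemma dual_main {r K : ℝ} (hr : 1 ≤ r) (hK : 0 ≤ K) (F : X × E → ℝ≥0∞) (x₀ : X)
    (μ : Measure X) (ν : Measure E) [IsProbabilityMeasure μ] [IsProbabilityMeasure ν]
    (hμ : FinMom r x₀ μ) (hν : FinMom r (0 : E) ν) (a s0 : ℝ)
    (hs0 : s0 = a + K * (1 + ∫ x, dist x x₀ ^ r ∂μ) + (K + 2) * ∫ y, NN r y ∂ν)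
    (hcov : ∀ π ∈ MM E μ r s0, ∃ u : DV X E, Adm r F u ∧
      ENNReal.ofReal (s0 + ∫ y, u.2.1 y ∂ν) <
        ∫⁻ p, ENNReal.ofReal (GG r K u p) ∂(π : Measure ((X × E) × E))) :
    ∃ f : X × E → ℝ, (∀ w, ENNReal.ofReal (f w) ≤ F w) ∧ (∀ w, 0 ≤ f w) ∧
    ∃ φ ∈ PhiR r x₀, ∃ ψ ∈ PhiR r (0 : E), ConcaveOn ℝ univ ψ ∧
      (∀ x y, φ x + ψ y ≤ f (x, y) - K * (1 + dist x x₀ ^ r + NN r y)) ∧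
      a ≤ ∫ x, φ x ∂μ + ∫ y, ψ y ∂ν := by
  have hr0 : 0 ≤ r := by linarith
  have hNE : Nonempty X := ⟨x₀⟩
  obtain ⟨t, w, hw0, hw1, hw⟩ := minimax (I := {u : DV X E // Adm r F u})
    (fun u => GG r K u.1) (fun u => continuous_GG u.2)
    (fun u p => by
      have h1 := NN_le_BB hr hK p
      have h2 := BB_le_GG (K := K) u.2 p
      have a3 := one_le_NN hr p.1.2
      have a4 := one_le_NN hr p.2
      linarith)
    (fun u => s0 + ∫ y, u.1.2.1 y ∂ν) (QQ E μ) (MM E μ r s0) (MM_compact μ hr s0)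
    ⟨0, adm_zero r F⟩
    (by
      intro π hπ hπM
      have h1 : ENNReal.ofReal s0 <
          ∫⁻ p, ENNReal.ofReal (NN r p.1.2 + NN r p.2) ∂(π : Measure ((X × E) × E)) := by
        by_contra hcon
        exact hπM ⟨hπ, not_lt.1 hcon⟩
      have h2 : s0 + ∫ y, (0 : DV X E).2.1 y ∂ν = s0 := by simp
      rw [h2]
      refine h1.trans_le (lintegral_mono fun p => ENNReal.ofReal_le_ofReal ?_)
      exact (NN_le_BB hr hK p).trans (BB_le_GG (adm_zero r F) p))
    (by
      intro π hπ
      obtain ⟨u, hu, h⟩ := hcov π hπ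
      exact ⟨⟨u, hu⟩, h⟩)
    (QQ_convex μ)
  set u : DV X E := ∑ i ∈ t, w i • i.1 with hudef
  have hu : Adm r F u := (adm_convex r F).sum_mem hw0 hw1 fun i _ => i.2
  have hψint : ∀ i : {u : DV X E // Adm r F u}, Integrable i.1.2.1 ν := fun i =>
    PhiR_integrable hr0 hν i.2.ψp
  have hSS : ∑ i ∈ t, w i * (s0 + ∫ y, i.1.2.1 y ∂ν) = s0 + ∫ y, u.2.1 y ∂ν := by
    have e1 : ∀ y, u.2.1 y = ∑ i ∈ t, w i * i.1.2.1 y := by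
      intro y
      simp [hudef, Prod.snd_sum, Prod.fst_sum, Finset.sum_apply]
    simp_rw [e1]
    rw [integral_finsetSum _ fun i _ => (hψint i).const_mul _]
    simp_rw [integral_const_mul, mul_add, Finset.sum_add_distrib, ← Finset.sum_mul, hw1, one_mul]
  obtain ⟨R, hRc, ⟨B, hB⟩, hRG, hRS⟩ := stepC hr hK hu μ (s0 + ∫ y, u.2.1 y ∂ν) (by
    intro T hT hTf
    have hT' : Measurable fun x => ((x, (T x).1), (T x).2) := by fun_prop
    let π : ProbabilityMeasure ((X × E) × E) :=
      ⟨μ.map fun x => ((x, (T x).1), (T x).2), Measure.isProbabilityMeasure_map hT'.aemeasurable⟩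
    have hπ : π ∈ QQ E μ := by
      change Measure.map _ (Measure.map _ μ) = μ
      rw [Measure.map_map (by fun_prop) hT']
      exact Measure.map_id
    have hint : ∀ v : DV X E, Adm r F v →
        Integrable (fun x => GG r K v ((x, (T x).1), (T x).2)) μ := by
      intro v hv
      choose Bt hBt using fun s : E × E => GG_bdd_x (K := K) hv s
      obtain ⟨B, hB⟩ := (hTf.image Bt).bddAbove
      refine Integrable.of_bound (C := B)
        ((continuous_GG hv).measurable.comp hT').aestronglyMeasurable
        (Eventually.of_forall fun x => ?_)
      exact (hBt (T x) x).trans (hB ⟨_, ⟨x, rfl⟩, rfl⟩)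
    have hmi : ∀ v : DV X E, Adm r F v → Integrable (GG r K v) (π : Measure ((X × E) × E)) := by
      intro v hv
      exact (integrable_map_measure (continuous_GG hv).aestronglyMeasurable
        hT'.aemeasurable).2 (hint v hv)
    have h1 := hw π hπ (fun i _ => hmi i.1 i.2)
    rw [hSS] at h1
    refine h1.trans (le_of_eq ?_)
    have h2 : ∫ x, GG r K u ((x, (T x).1), (T x).2) ∂μ
        = ∫ p, GG r K u p ∂(π : Measure ((X × E) × E)) :=
      (integral_map hT'.aemeasurable (continuous_GG hu).aestronglyMeasurable).symm
    rw [h2]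
    simp_rw [hudef, adm_sum_GG t w hw1 (fun i => i.1)]
    rw [integral_finsetSum _ fun i _ => (hmi i.1 i.2).const_mul _]
    simp_rw [integral_const_mul])
  obtain ⟨φ, hφ, ψ, hψ, hconc, h1, h2, h3⟩ := dualC (K := K) hr hu x₀ R hRc B hB hRG
  refine ⟨u.1, hu.fF, hu.f0, φ, hφ, ψ, hψ, hconc, h1, ?_⟩
  have hRi : Integrable R μ := PhiR_integrable hr0 hμ (PhiR_of_bdd hRc B hB)
  have hdi : Integrable (fun x => dist x x₀ ^ r) μ := PhiR_integrable hr0 hμ (dist_mem_PhiR hr0 x₀)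
  have hNi : Integrable (NN r : E → ℝ) ν := PhiR_integrable hr0 hν (NN_mem_PhiR hr)
  have hui : Integrable u.2.1 ν := PhiR_integrable hr0 hν hu.ψp
  have e1 : ∫ x, φ x ∂μ = ∫ x, R x ∂μ - K * (1 + ∫ x, dist x x₀ ^ r ∂μ) := by
    simp_rw [h2]
    have hd1 : Integrable (fun x => 1 + dist x x₀ ^ r) μ := (integrable_const _).add hdi
    rw [integral_sub hRi (hd1.const_mul _), integral_const_mul,
      integral_add (integrable_const _) hdi]
    simp
  have e2 : -(K + 2) * ∫ y, NN r y ∂ν - ∫ y, u.2.1 y ∂ν ≤ ∫ y, ψ y ∂ν := by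
    rw [← integral_const_mul, ← integral_sub (hNi.const_mul _) hui]
    exact integral_mono ((hNi.const_mul _).sub hui) (PhiR_integrable hr0 hν hψ) h3
  rw [e1]
  rw [hs0] at hRS
  linarith
end dualMain

section stepA
variable {X E : Type*} [MetricSpace X] [SecondCountableTopology X]
  [MeasurableSpace X] [BorelSpace X]
  [NormedAddCommGroup E] [InnerProductSpace ℝ E] [FiniteDimensional ℝ E]
  [MeasurableSpace E] [BorelSpace E]

def cut (n : ℕ) (y : E) : ℝ := max 0 (min 1 (n + 1 - ‖y‖))

lemma cut_nonneg (n : ℕ) (y : E) : 0 ≤ cut n y := le_max_left _ _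
lemma cut_le_one (n : ℕ) (y : E) : cut n y ≤ 1 := max_le zero_le_one (min_le_left _ _)
lemma continuous_cut (n : ℕ) : Continuous (cut n : E → ℝ) := by unfold cut; fun_prop
lemma cut_zero (n : ℕ) (y : E) (h : (n + 1 : ℝ) < ‖y‖) : cut n y = 0 :=
  max_eq_left ((min_le_right _ _).trans (by linarith))
lemma cut_tendsto (y : E) : Tendsto (fun n : ℕ => cut n y) atTop (𝓝 1) := by
  obtain ⟨N, hN⟩ := exists_nat_gt ‖y‖
  refine tendsto_const_nhds.congr' ?_
  filter_upwards [eventually_ge_atTop N] with n hn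
  have : (N : ℝ) ≤ n := by exact_mod_cast hn
  unfold cut
  rw [min_eq_left (by linarith), max_eq_right zero_le_one]


lemma sA1 {r K : ℝ} (hr : 1 ≤ r) (hK : 0 ≤ K) {F : X × E → ℝ≥0∞}
    (ν : Measure E) [IsProbabilityMeasure ν] (s0 : ℝ)
    (ρ : Measure ((X × E) × E)) [IsProbabilityMeasure ρ]
    (H : ∀ u : DV X E, Adm r F u → ∫⁻ p, ENNReal.ofReal (GG r K u p) ∂ρ ≤
      ENNReal.ofReal (s0 + ∫ y, u.2.1 y ∂ν))
    (u : DV X E) (hu : Adm r F u) :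
    Integrable (GG r K u) ρ ∧ ∫ p, GG r K u p ∂ρ ≤ s0 + ∫ y, u.2.1 y ∂ν := by
  have h2 : ∀ p, 2 ≤ GG r K u p := by
    intro p
    have h1 := NN_le_BB hr hK p
    have h2 := BB_le_GG (K := K) hu p
    have a3 := one_le_NN hr p.1.2
    have a4 := one_le_NN hr p.2
    linarith
  have h0 : ∀ p, 0 ≤ GG r K u p := fun p => by linarith [h2 p]
  have hi : Integrable (GG r K u) ρ := by
    refine ⟨(continuous_GG hu).aestronglyMeasurable, ?_⟩
    rw [hasFiniteIntegral_iff_ofReal (Eventually.of_forall h0)]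
    exact (H u hu).trans_lt ENNReal.ofReal_lt_top
  refine ⟨hi, ?_⟩
  have h3 := H u hu
  rw [← ofReal_integral_eq_lintegral_ofReal hi (Eventually.of_forall h0)] at h3
  have h4 : 2 ≤ ∫ p, GG r K u p ∂ρ := by
    have := integral_mono (integrable_const (2:ℝ)) hi h2
    simpa using this
  rcases ENNReal.ofReal_le_ofReal_iff'.1 h3 with h | h
  · exact h
  · linarith

lemma sA_BB {r K : ℝ} (hr : 1 ≤ r) (hK : 0 ≤ K) {F : X × E → ℝ≥0∞}
    (ν : Measure E) [IsProbabilityMeasure ν] (s0 : ℝ)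
    (ρ : Measure ((X × E) × E)) [IsProbabilityMeasure ρ]
    (H : ∀ u : DV X E, Adm r F u → ∫⁻ p, ENNReal.ofReal (GG r K u p) ∂ρ ≤
      ENNReal.ofReal (s0 + ∫ y, u.2.1 y ∂ν))
    : Integrable (BB r K) ρ := by
  have := (sA1 hr hK ν s0 ρ H 0 (adm_zero r F)).1
  convert this using 1
  ext p
  simp [GG]

lemma sA_Ny {r K : ℝ} (hr : 1 ≤ r) (hK : 0 ≤ K) {F : X × E → ℝ≥0∞}
    (ν : Measure E) [IsProbabilityMeasure ν] (s0 : ℝ)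
    (ρ : Measure ((X × E) × E)) [IsProbabilityMeasure ρ]
    (H : ∀ u : DV X E, Adm r F u → ∫⁻ p, ENNReal.ofReal (GG r K u p) ∂ρ ≤
      ENNReal.ofReal (s0 + ∫ y, u.2.1 y ∂ν))
    : Integrable (fun p => NN r p.1.2) ρ := by
  refine (sA_BB hr hK ν s0 ρ H).mono' ?_ (Eventually.of_forall fun p => ?_)
  · exact ((continuous_NN r).comp (by fun_prop :
      Continuous fun p : (X × E) × E => p.1.2)).aestronglyMeasurable
  · have h1 := NN_le_BB hr hK p
    have a3 := one_le_NN hr p.1.2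
    have a4 := one_le_NN hr p.2
    rw [Real.norm_of_nonneg (by linarith)]
    linarith

lemma sA_Nz {r K : ℝ} (hr : 1 ≤ r) (hK : 0 ≤ K) {F : X × E → ℝ≥0∞}
    (ν : Measure E) [IsProbabilityMeasure ν] (s0 : ℝ)
    (ρ : Measure ((X × E) × E)) [IsProbabilityMeasure ρ]
    (H : ∀ u : DV X E, Adm r F u → ∫⁻ p, ENNReal.ofReal (GG r K u p) ∂ρ ≤
      ENNReal.ofReal (s0 + ∫ y, u.2.1 y ∂ν))
    : Integrable (fun p => NN r p.2) ρ := by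
  refine (sA_BB hr hK ν s0 ρ H).mono' ?_ (Eventually.of_forall fun p => ?_)
  · exact ((continuous_NN r).comp (by fun_prop :
      Continuous fun p : (X × E) × E => p.2)).aestronglyMeasurable
  · have h1 := NN_le_BB hr hK p
    have a3 := one_le_NN hr p.1.2
    have a4 := one_le_NN hr p.2
    rw [Real.norm_of_nonneg (by linarith)]
    linarith

lemma sA_DD {r K : ℝ} (hr : 1 ≤ r) (hK : 0 ≤ K) {F : X × E → ℝ≥0∞}
    (ν : Measure E) [IsProbabilityMeasure ν] (s0 : ℝ)
    (ρ : Measure ((X × E) × E)) [IsProbabilityMeasure ρ]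
    (H : ∀ u : DV X E, Adm r F u → ∫⁻ p, ENNReal.ofReal (GG r K u p) ∂ρ ≤
      ENNReal.ofReal (s0 + ∫ y, u.2.1 y ∂ν))
    : Integrable (fun p => DD r p.1.2 p.2) ρ := by
  refine (sA_BB hr hK ν s0 ρ H).mono' ?_ (Eventually.of_forall fun p => ?_)
  · exact ((continuous_DD r).comp (by fun_prop :
      Continuous fun p : (X × E) × E => (p.1.2, p.2))).aestronglyMeasurable
  · have a1 := DD_nonneg hr p.1.2 p.2
    have a3 := one_le_NN hr p.1.2
    have a4 := one_le_NN hr p.2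
    rw [Real.norm_of_nonneg a1]
    unfold BB
    nlinarith

lemma sA2 {r K : ℝ} (hr : 1 ≤ r) (hK : 0 ≤ K) {F : X × E → ℝ≥0∞}
    (ν : Measure E) [IsProbabilityMeasure ν] (s0 : ℝ)
    (ρ : Measure ((X × E) × E)) [IsProbabilityMeasure ρ]
    (H : ∀ u : DV X E, Adm r F u → ∫⁻ p, ENNReal.ofReal (GG r K u p) ∂ρ ≤
      ENNReal.ofReal (s0 + ∫ y, u.2.1 y ∂ν))
    (ψ : E → ℝ) (h : X × E → E) (hψ : ψ ∈ PhiR r (0:E)) (hc : Continuous h)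
    (hb : ∃ B : ℝ, ∀ w, ‖h w‖ ≤ B) (pos : ∀ w z, 0 ≤ ψ z + ⟪h w, z - w.2⟫) :
    Integrable (fun p => ψ p.2 + ⟪h p.1, p.2 - p.1.2⟫) ρ ∧
      ∫ p, (ψ p.2 + ⟪h p.1, p.2 - p.1.2⟫) ∂ρ ≤ ∫ y, ψ y ∂ν := by
  have hadm : ∀ t : ℝ, 0 ≤ t → Adm r F ((0, t • ψ, t • h) : DV X E) := by
    intro t ht
    refine ⟨continuous_const, fun _ => le_rfl, ⟨0, fun _ => le_rfl⟩, fun _ => by simp,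
      PhiR_smul hψ t, hc.const_smul t, ?_, ?_⟩
    · obtain ⟨B, hB⟩ := hb
      refine ⟨t * B, fun w => ?_⟩
      simp only [Pi.smul_apply]
      rw [norm_smul, Real.norm_of_nonneg ht]
      exact mul_le_mul_of_nonneg_left (hB w) ht
    · intro w z
      simp only [Pi.smul_apply, smul_eq_mul, real_inner_smul_left]
      have := mul_nonneg ht (pos w z)
      linarith
  have hBB := sA_BB hr hK ν s0 ρ H
  have hGG : ∀ t : ℝ, ∀ p, GG r K ((0, t • ψ, t • h) : DV X E) p =
      BB r K p + t * (ψ p.2 + ⟪h p.1, p.2 - p.1.2⟫) := by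
    intro t p
    simp only [GG, Pi.zero_apply, zero_add, Pi.smul_apply, smul_eq_mul, real_inner_smul_left]
    ring
  have hi : Integrable (fun p => ψ p.2 + ⟪h p.1, p.2 - p.1.2⟫) ρ := by
    have := (sA1 hr hK ν s0 ρ H _ (hadm 1 zero_le_one)).1.sub hBB
    convert this using 1
    ext p
    simp only [Pi.sub_apply]
    rw [hGG]
    ring
  refine ⟨hi, ?_⟩
  have key : ∀ t : ℝ, 0 ≤ t → ∫ p, BB r K p ∂ρ + t * ∫ p, (ψ p.2 + ⟪h p.1, p.2 - p.1.2⟫) ∂ρ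
      ≤ s0 + t * ∫ y, ψ y ∂ν := by
    intro t ht
    have := (sA1 hr hK ν s0 ρ H _ (hadm t ht)).2
    simp_rw [hGG] at this
    rw [integral_add hBB (hi.const_mul t), integral_const_mul] at this
    simpa [integral_const_mul] using this
  by_contra hcon
  push Not at hcon
  set A := ∫ p, (ψ p.2 + ⟪h p.1, p.2 - p.1.2⟫) ∂ρ
  set B := ∫ y, ψ y ∂ν
  set D := ∫ p, BB r K p ∂ρ
  have hAB : 0 < A - B := by linarith
  have := key ((|s0 - D| + 1) / (A - B)) (by positivity)
  have h2 : (|s0 - D| + 1) / (A - B) * (A - B) = |s0 - D| + 1 := div_mul_cancel₀ _ hAB.ne'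
  have h3 := le_abs_self (s0 - D)
  nlinarith

lemma sA3 {r K : ℝ} (hr : 1 ≤ r) (hK : 0 ≤ K) {F : X × E → ℝ≥0∞}
    (ν : Measure E) [IsProbabilityMeasure ν] (s0 : ℝ)
    (ρ : Measure ((X × E) × E)) [IsProbabilityMeasure ρ]
    (H : ∀ u : DV X E, Adm r F u → ∫⁻ p, ENNReal.ofReal (GG r K u p) ∂ρ ≤
      ENNReal.ofReal (s0 + ∫ y, u.2.1 y ∂ν))
    : ρ.map Prod.snd = ν := by
  have hms : AEMeasurable (Prod.snd : (X × E) × E → E) ρ := measurable_snd.aemeasurable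
  have : IsProbabilityMeasure (ρ.map Prod.snd) := Measure.isProbabilityMeasure_map hms
  have key : ∀ f : BoundedContinuousFunction E ℝ, ∫ z, f z ∂(ρ.map Prod.snd) ≤ ∫ z, f z ∂ν := by
    intro f
    have hbd : ∀ z, |f z| ≤ ‖f‖ := fun z => f.norm_coe_le_norm z
    have := (sA2 hr hK ν s0 ρ H (fun z => f z + ‖f‖) 0
      (PhiR_of_bdd (by fun_prop) (‖f‖ + ‖f‖) (fun z => (abs_add_le _ _).trans
        (add_le_add (hbd z) (by simp)))) continuous_const ⟨0, by simp⟩ (by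
        intro w z
        simp only [Pi.zero_apply, inner_zero_left, add_zero]
        linarith [neg_abs_le (f z), hbd z])).2
    simp only [Pi.zero_apply, inner_zero_left, add_zero] at this
    rw [← integral_map (φ := Prod.snd) (f := fun z => f z + ‖f‖) hms
      (by fun_prop : Continuous fun z => f z + ‖f‖).aestronglyMeasurable] at this
    rw [integral_add (f.integrable _) (integrable_const _),
      integral_add (f.integrable _) (integrable_const _)] at this
    simpa using this
  refine ext_of_forall_integral_eq_of_IsFiniteMeasure fun f => le_antisymm (key f) ?_
  have := key (-f)
  simp only [BoundedContinuousFunction.coe_neg, Pi.neg_apply, integral_neg] at this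
  linarith

lemma sA4 {r K : ℝ} (hr : 1 ≤ r) (hK : 0 ≤ K) {F : X × E → ℝ≥0∞}
    (ν : Measure E) [IsProbabilityMeasure ν] (hν : FinMom r (0 : E) ν) (s0 : ℝ)
    (ρ : Measure ((X × E) × E)) [IsProbabilityMeasure ρ]
    (H : ∀ u : DV X E, Adm r F u → ∫⁻ p, ENNReal.ofReal (GG r K u p) ∂ρ ≤
      ENNReal.ofReal (s0 + ∫ y, u.2.1 y ∂ν))
    (h : X × E → E) (hc : Continuous h) (B : ℝ) (hB : ∀ w, ‖h w‖ ≤ B) (R : ℝ)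
    (hR0 : 0 ≤ R) (hR : ∀ w, R < ‖w.2‖ → h w = 0) :
    ∫ p, ⟪h p.1, p.2 - p.1.2⟫ ∂ρ ≤ 0 := by
  by_cases hXe : Nonempty X
  swap
  · have : IsEmpty ((X × E) × E) := ⟨fun p => hXe ⟨p.1.1⟩⟩
    exact absurd (measure_univ (μ := ρ)) (by simp [Measure.eq_zero_of_isEmpty ρ])
  have hB0 : 0 ≤ B := by
    obtain ⟨x⟩ := hXe
    exact (norm_nonneg _).trans (hB (x, 0))
  have hψ : (fun z : E => B * (R + ‖z‖)) ∈ PhiR r (0:E) := by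
    have := PhiR_smul (PhiR_add (PhiR_of_bdd (r := r) (x₀ := (0:E)) (φ := fun _ => R)
      continuous_const R (by simp [abs_of_nonneg hR0])) (norm_mem_PhiR (E := E) hr)) B
    exact this
  have h1 := sA2 hr hK ν s0 ρ H (fun z => B * (R + ‖z‖)) h hψ hc ⟨B, hB⟩ (by
    intro w z
    by_cases hw : R < ‖w.2‖
    · rw [hR w hw, inner_zero_left]; positivity
    · push Not at hw
      have a1 := neg_le_of_abs_le (abs_real_inner_le_norm (h w) (z - w.2))
      have a2 : ‖h w‖ * ‖z - w.2‖ ≤ B * (‖z‖ + ‖w.2‖) :=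
        mul_le_mul (hB w) (norm_sub_le _ _) (norm_nonneg _) hB0
      nlinarith)
  have h2 : ∫ p, B * (R + ‖p.2‖) ∂ρ = ∫ z, B * (R + ‖z‖) ∂ν := by
    rw [← sA3 hr hK ν s0 ρ H, integral_map measurable_snd.aemeasurable]
    exact (by fun_prop : Continuous fun z : E => B * (R + ‖z‖)).aestronglyMeasurable
  have h3 : Integrable (fun p : (X × E) × E => B * (R + ‖p.2‖)) ρ := by
    have := PhiR_integrable (by linarith) hν hψ
    rw [← sA3 hr hK ν s0 ρ H] at this
    exact this.comp_measurable measurable_snd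
  have h4 : Integrable (fun p : (X × E) × E => ⟪h p.1, p.2 - p.1.2⟫) ρ := by
    have := h1.1.sub h3
    convert this using 1
    ext p
    simp
  have h5 := h1.2
  rw [integral_add h3 h4, h2] at h5
  linarith

lemma sA5 {r K : ℝ} (hr : 1 ≤ r) (hK : 0 ≤ K) {F : X × E → ℝ≥0∞}
    (ν : Measure E) [IsProbabilityMeasure ν] (hν : FinMom r (0 : E) ν) (s0 : ℝ)
    (ρ : Measure ((X × E) × E)) [IsProbabilityMeasure ρ]
    (H : ∀ u : DV X E, Adm r F u → ∫⁻ p, ENNReal.ofReal (GG r K u p) ∂ρ ≤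
      ENNReal.ofReal (s0 + ∫ y, u.2.1 y ∂ν))
    (h : X × E → E) (hc : Continuous h)
    (hB : ∀ n : ℕ, ∃ B : ℝ, ∀ w : X × E, ‖w.2‖ ≤ n → ‖h w‖ ≤ B)
    (hi : Integrable (fun p : (X × E) × E => ⟪h p.1, p.2 - p.1.2⟫) ρ) :
    ∫ p, ⟪h p.1, p.2 - p.1.2⟫ ∂ρ = 0 := by
  have hle : ∀ h : X × E → E, Continuous h → (∀ n : ℕ, ∃ B : ℝ, ∀ w : X × E, ‖w.2‖ ≤ n → ‖h w‖ ≤ B)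
    → Integrable (fun p : (X × E) × E => ⟪h p.1, p.2 - p.1.2⟫) ρ →
      ∫ p, ⟪h p.1, p.2 - p.1.2⟫ ∂ρ ≤ 0 := by
    clear hi hB hc h
    intro h hc hB hi
    have hlim : Tendsto (fun n : ℕ => ∫ p, ⟪cut n p.1.2 • h p.1, p.2 - p.1.2⟫ ∂ρ) atTop
        (𝓝 (∫ p, ⟪h p.1, p.2 - p.1.2⟫ ∂ρ)) := by
      refine tendsto_integral_of_dominated_convergence (fun p => ‖⟪h p.1, p.2 - p.1.2⟫‖)
        (fun n => ?_) hi.norm (fun n => Eventually.of_forall fun p => ?_)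
        (Eventually.of_forall fun p => ?_)
      · have := continuous_cut (E := E) n
        exact (by fun_prop : Continuous fun p : (X × E) × E =>
          ⟪cut n p.1.2 • h p.1, p.2 - p.1.2⟫).aestronglyMeasurable
      · rw [real_inner_smul_left, norm_mul, Real.norm_of_nonneg (cut_nonneg _ _)]
        exact mul_le_of_le_one_left (norm_nonneg _) (cut_le_one _ _)
      · simp_rw [real_inner_smul_left]
        have := (cut_tendsto p.1.2).mul_const (⟪h p.1, p.2 - p.1.2⟫)
        rwa [one_mul] at this
    refine le_of_tendsto' hlim fun n => ?_
    obtain ⟨B, hB'⟩ := hB (n + 1)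
    have := continuous_cut (E := E) n
    refine sA4 hr hK ν hν s0 ρ H (fun w => cut n w.2 • h w) (by fun_prop) (max B 0) (fun w => ?_)
      (n + 1) (by positivity) (fun w hw => by simp only [cut_zero n w.2 hw, zero_smul])
    by_cases hw : (n + 1 : ℝ) < ‖w.2‖
    · simp [cut_zero n w.2 hw]
    · rw [norm_smul, Real.norm_of_nonneg (cut_nonneg _ _)]
      refine (mul_le_of_le_one_left (norm_nonneg _) (cut_le_one _ _)).trans
        ((hB' w ?_).trans (le_max_left _ _))
      push_cast
      exact not_lt.1 hw
  refine le_antisymm (hle h hc hB hi) ?_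
  have := hle (-h) hc.neg (by simpa using hB) (by simpa using hi.neg)
  simp only [Pi.neg_apply, inner_neg_left, integral_neg] at this
  linarith

lemma sA_intDD {r K : ℝ} (hr : 1 ≤ r) (hK : 0 ≤ K) {F : X × E → ℝ≥0∞}
    (ν : Measure E) [IsProbabilityMeasure ν] (hν : FinMom r (0 : E) ν) (s0 : ℝ)
    (ρ : Measure ((X × E) × E)) [IsProbabilityMeasure ρ]
    (H : ∀ u : DV X E, Adm r F u → ∫⁻ p, ENNReal.ofReal (GG r K u p) ∂ρ ≤
      ENNReal.ofReal (s0 + ∫ y, u.2.1 y ∂ν))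
    : ∫ p, DD r p.1.2 p.2 ∂ρ = ∫ z, NN r z ∂ν - ∫ p, NN r p.1.2 ∂ρ := by
  have : ProperSpace E := FiniteDimensional.proper_real E
  have hgc : Continuous (gN r : E → E) := continuous_gN r
  have h1 := sA_Ny hr hK ν s0 ρ H
  have h2 := sA_Nz hr hK ν s0 ρ H
  have h3 := sA_DD hr hK ν s0 ρ H
  have h4 : Integrable (fun p : (X × E) × E => ⟪gN r p.1.2, p.2 - p.1.2⟫) ρ := by
    have := (h2.sub h1).sub h3
    convert this using 1
    ext p
    simp [DD]
  have h5 := sA5 hr hK ν hν s0 ρ H (fun w => gN r w.2) (by fun_prop) (fun n => by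
    obtain ⟨B, hB⟩ := ((isCompact_closedBall (0:E) n).image hgc).isBounded.exists_norm_le
    exact ⟨B, fun w hw => hB _ ⟨w.2, by simpa using hw, rfl⟩⟩) h4
  have h6 : ∫ p, DD r p.1.2 p.2 ∂ρ =
      ∫ p, NN r p.2 ∂ρ - ∫ p, NN r p.1.2 ∂ρ - ∫ p, ⟪gN r p.1.2, p.2 - p.1.2⟫ ∂ρ := by
    have h21 : Integrable (fun p : (X × E) × E => NN r p.2 - NN r p.1.2) ρ := h2.sub h1
    rw [← integral_sub h2 h1, ← integral_sub h21 h4]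
    rfl
  have h7 : ∫ p, NN r p.2 ∂ρ = ∫ z, NN r z ∂ν := by
    rw [← sA3 hr hK ν s0 ρ H, integral_map measurable_snd.aemeasurable]
    exact (continuous_NN r).aestronglyMeasurable
  rw [h6, h7]
  rw [h5, sub_zero]

lemma sA_sub {r K : ℝ} (hr : 1 ≤ r) (hK : 0 ≤ K) {F : X × E → ℝ≥0∞}
    (ν : Measure E) [IsProbabilityMeasure ν] (s0 : ℝ)
    (ρ : Measure ((X × E) × E)) [IsProbabilityMeasure ρ]
    (H : ∀ u : DV X E, Adm r F u → ∫⁻ p, ENNReal.ofReal (GG r K u p) ∂ρ ≤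
      ENNReal.ofReal (s0 + ∫ y, u.2.1 y ∂ν))
    : Integrable (fun p : (X × E) × E => p.2 - p.1.2) ρ := by
  refine ((sA_Nz hr hK ν s0 ρ H).add (sA_Ny hr hK ν s0 ρ H)).mono' (by
    exact (by fun_prop : Continuous fun p : (X × E) × E => p.2 - p.1.2).aestronglyMeasurable)
    (Eventually.of_forall fun p => (norm_sub_le _ _).trans ?_)
  exact add_le_add (norm_le_NN hr _) (norm_le_NN hr _)

lemma sA6 {r K : ℝ} (hr : 1 ≤ r) (hK : 0 ≤ K) {F : X × E → ℝ≥0∞}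
    (ν : Measure E) [IsProbabilityMeasure ν] (hν : FinMom r (0 : E) ν) (s0 : ℝ)
    (ρ : Measure ((X × E) × E)) [IsProbabilityMeasure ρ]
    (H : ∀ u : DV X E, Adm r F u → ∫⁻ p, ENNReal.ofReal (GG r K u p) ∂ρ ≤
      ENNReal.ofReal (s0 + ∫ y, u.2.1 y ∂ν))
    (s : Set (X × E)) (hs : IsClosed s) :
    ∫ p in {p : (X × E) × E | p.1 ∈ s}, (p.2 - p.1.2) ∂ρ = 0 := by
  have hsub := sA_sub hr hK ν s0 ρ H
  have hms : MeasurableSet {p : (X × E) × E | p.1 ∈ s} := measurable_fst hs.measurableSet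
  refine ext_inner_left ℝ fun e => ?_
  rw [inner_zero_right, ← integral_inner hsub.integrableOn e, ← integral_indicator hms]
  set δ : ℕ → ℝ := fun n => 1 / ((n : ℝ) + 1) with hδ
  have hδ0 : ∀ n, 0 < δ n := fun n => by positivity
  have hδl : Tendsto δ atTop (𝓝 0) := tendsto_one_div_add_atTop_nhds_zero_nat
  have hin : Integrable (fun p : (X × E) × E => ⟪e, p.2 - p.1.2⟫) ρ := hsub.const_inner e
  have hlim : Tendsto (fun n : ℕ => ∫ p : (X × E) × E,
      ⟪((thickenedIndicator (hδ0 n) s p.1 : ℝ≥0) : ℝ) • e, p.2 - p.1.2⟫ ∂ρ) atTop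
      (𝓝 (∫ p, {p : (X × E) × E | p.1 ∈ s}.indicator (fun p => ⟪e, p.2 - p.1.2⟫) p ∂ρ)) := by
    refine tendsto_integral_of_dominated_convergence (fun p => ‖⟪e, p.2 - p.1.2⟫‖)
      (fun n => ?_) hin.norm (fun n => Eventually.of_forall fun p => ?_)
      (Eventually.of_forall fun p => ?_)
    · exact (by fun_prop : Continuous fun p : (X × E) × E =>
        ⟪((thickenedIndicator (hδ0 n) s p.1 : ℝ≥0) : ℝ) • e, p.2 - p.1.2⟫).aestronglyMeasurable
    · rw [real_inner_smul_left, norm_mul, Real.norm_of_nonneg (NNReal.coe_nonneg _)]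
      refine mul_le_of_le_one_left (norm_nonneg _) ?_
      exact_mod_cast thickenedIndicator_le_one (hδ0 n) s p.1
    · simp_rw [real_inner_smul_left]
      have h1 := tendsto_pi_nhds.1 (thickenedIndicator_tendsto_indicator_closure hδ0 hδl s) p.1
      rw [hs.closure_eq] at h1
      have h2 := ((NNReal.continuous_coe.tendsto _).comp h1).mul_const (⟪e, p.2 - p.1.2⟫)
      refine h2.trans (le_of_eq ?_)
      congr 1
      by_cases hp : p.1 ∈ s
      · simp [hp]
      · simp [hp]
  refine tendsto_nhds_unique hlim (tendsto_const_nhds.congr fun n => ?_)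
  refine (sA5 hr hK ν hν s0 ρ H (fun w => ((thickenedIndicator (hδ0 n) s w : ℝ≥0) : ℝ) • e)
    (by fun_prop) (fun _ => ⟨‖e‖, fun w _ => ?_⟩) ?_).symm
  · rw [norm_smul, Real.norm_of_nonneg (NNReal.coe_nonneg _)]
    refine mul_le_of_le_one_left (norm_nonneg _) ?_
    exact_mod_cast thickenedIndicator_le_one (hδ0 n) s w
  · refine hin.norm.mono' ?_ (Eventually.of_forall fun p => ?_)
    · exact (by fun_prop : Continuous fun p : (X × E) × E =>
        ⟪((thickenedIndicator (hδ0 n) s p.1 : ℝ≥0) : ℝ) • e, p.2 - p.1.2⟫).aestronglyMeasurable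
    · rw [real_inner_smul_left, norm_mul, Real.norm_of_nonneg (NNReal.coe_nonneg _)]
      refine mul_le_of_le_one_left (norm_nonneg _) ?_
      exact_mod_cast thickenedIndicator_le_one (hδ0 n) s p.1

lemma sA7 {r K : ℝ} (hr : 1 ≤ r) (hK : 0 ≤ K) {F : X × E → ℝ≥0∞}
    (ν : Measure E) [IsProbabilityMeasure ν] (hν : FinMom r (0 : E) ν) (s0 : ℝ)
    (ρ : Measure ((X × E) × E)) [IsProbabilityMeasure ρ]
    (H : ∀ u : DV X E, Adm r F u → ∫⁻ p, ENNReal.ofReal (GG r K u p) ∂ρ ≤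
      ENNReal.ofReal (s0 + ∫ y, u.2.1 y ∂ν))
    (hF : LowerSemicontinuous F) :
    ∫⁻ p, F p.1 ∂ρ ≤ ENNReal.ofReal
      (s0 - (K + 2) * ∫ z, NN r z ∂ν + K * ∫ p, NN r p.1.2 ∂ρ) := by
  obtain ⟨f, fc, f0, fn, fF, fm, fs⟩ := lsc_approx hF
  have h1 := sA_Ny hr hK ν s0 ρ H
  have h2 := sA_Nz hr hK ν s0 ρ H
  have h3 := sA_DD hr hK ν s0 ρ H
  have hBB := sA_BB hr hK ν s0 ρ H
  have h7 : ∫ p, NN r p.2 ∂ρ = ∫ z, NN r z ∂ν := by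
    rw [← sA3 hr hK ν s0 ρ H, integral_map measurable_snd.aemeasurable]
    exact (continuous_NN r).aestronglyMeasurable
  have hBBi : ∫ p, BB r K p ∂ρ = ∫ p, NN r p.1.2 ∂ρ + ∫ z, NN r z ∂ν +
      (K + 1) * (∫ z, NN r z ∂ν - ∫ p, NN r p.1.2 ∂ρ) := by
    have h12 : Integrable (fun p : (X × E) × E => NN r p.1.2 + NN r p.2) ρ := h1.add h2
    rw [← sA_intDD hr hK ν hν s0 ρ H, ← h7, ← integral_const_mul, ← integral_add h1 h2,
      ← integral_add h12 (h3.const_mul _)]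
    rfl
  simp_rw [fs]
  have hfm : ∀ n, Measurable fun p : (X × E) × E => ENNReal.ofReal (f n p.1) :=
    fun n => ((fc n).measurable.comp measurable_fst).ennreal_ofReal
  rw [lintegral_iSup hfm
    (fun n m hnm p => ENNReal.ofReal_le_ofReal (fm hnm p.1))]
  refine iSup_le fun n => ?_
  have hadm : Adm r F ((f n, 0, 0) : DV X E) := ⟨fc n, f0 n, ⟨n, fn n⟩, fF n,
    PhiR_of_bdd continuous_const 0 (by simp), continuous_const, ⟨0, by simp⟩, by simp⟩
  have hA := sA1 hr hK ν s0 ρ H _ hadm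
  have hGG : ∀ p, GG r K ((f n, 0, 0) : DV X E) p = f n p.1 + BB r K p := by
    intro p; simp [GG]
  simp_rw [hGG] at hA
  have hfi : Integrable (fun p : (X × E) × E => f n p.1) ρ := by
    refine Integrable.of_bound (C := n) ((fc n).comp continuous_fst).aestronglyMeasurable
      (Eventually.of_forall fun p => ?_)
    rw [Real.norm_of_nonneg (f0 n _)]
    exact fn n _
  rw [← ofReal_integral_eq_lintegral_ofReal hfi (Eventually.of_forall fun p => f0 n _)]
  refine ENNReal.ofReal_le_ofReal ?_
  have h8 := hA.2
  rw [integral_add hfi hBB, hBBi] at h8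
  simp at h8
  linarith
end stepA

section stepD
open ProbabilityTheory

/-- the kernel from measures to the space, cut to probability measures -/
def etaK (E : Type*) [MeasurableSpace E] : Kernel (Measure E) E where
  toFun p := if p univ = 1 then p else 0
  measurable' := by
    classical
    exact Measurable.ite ((Measure.measurable_coe MeasurableSet.univ) (measurableSet_singleton 1))
      measurable_id measurable_const

lemma etaK_apply {E : Type*} [MeasurableSpace E] (p : Measure E) [IsProbabilityMeasure p] :
    etaK E p = p := by
  change (if p univ = 1 then p else 0) = p
  simp

instance etaK_finite (E : Type*) [MeasurableSpace E] : IsFiniteKernel (etaK E) := by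
  refine ⟨⟨1, ENNReal.one_lt_top, fun p => ?_⟩⟩
  change (if p univ = 1 then p else 0) univ ≤ 1
  split_ifs with h
  · exact h.le
  · simp

lemma measurable_integral_meas {E G : Type*} [MeasurableSpace E]
    [NormedAddCommGroup G] [NormedSpace ℝ G] {f : E → G} (hf : StronglyMeasurable f) :
    StronglyMeasurable fun p : Measure E => ∫ y, f y ∂p := by
  have := StronglyMeasurable.integral_kernel (κ := (⟨id, measurable_id⟩ : Kernel (Measure E) E)) hf
  exact this

variable {X E : Type*} [MeasurableSpace X] [MeasurableSpace E]

def hatK (X E : Type*) [MeasurableSpace X] [MeasurableSpace E] : Kernel (X × Measure E) E :=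
  (etaK E).comap Prod.snd measurable_snd

instance hatK_finite (X E : Type*) [MeasurableSpace X] [MeasurableSpace E] :
    IsFiniteKernel (hatK X E) := by unfold hatK; infer_instance

lemma hatK_apply (xp : X × Measure E) [IsProbabilityMeasure xp.2] : hatK X E xp = xp.2 := by
  unfold hatK
  rw [Kernel.comap_apply]
  exact etaK_apply xp.2

lemma intensityHat_apply (P : Measure (X × Measure E))
    (hP : ∀ᵐ xp ∂P, IsProbabilityMeasure xp.2) {s : Set (X × E)} (hs : MeasurableSet s) :
    intensityHat P s = ∫⁻ xp, hatK X E xp (Prod.mk xp.1 ⁻¹' s) ∂P := by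
  have h1 : (fun xp : X × Measure E => (Measure.dirac xp.1).prod xp.2) =ᵐ[P]
      (Kernel.deterministic Prod.fst measurable_fst ×ₖ hatK X E) := by
    filter_upwards [hP] with xp hxp
    rw [Kernel.prod_apply, Kernel.deterministic_apply, hatK_apply]
  unfold intensityHat
  rw [Measure.bind_congr_right h1, Measure.bind_apply hs (Kernel.aemeasurable _)]
  refine lintegral_congr fun xp => ?_
  rw [Kernel.prod_apply' _ _ _ hs, Kernel.deterministic_apply, lintegral_dirac']
  exact measurable_measure_prodMk_left hs

lemma intensityHat_eq (P : Measure (X × Measure E)) [SFinite P]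
    (hP : ∀ᵐ xp ∂P, IsProbabilityMeasure xp.2) :
    intensityHat P = (P ⊗ₘ hatK X E).map (fun q => (q.1.1, q.2)) := by
  ext s hs
  have hm : Measurable fun q : (X × Measure E) × E => (q.1.1, q.2) := by fun_prop
  rw [intensityHat_apply P hP hs, Measure.map_apply hm hs, Measure.compProd_apply (hm hs)]
  rfl

variable [NormedAddCommGroup E] [BorelSpace E] in
lemma measurableSet_Pr (r : ℝ) (hr : 0 ≤ r) : MeasurableSet (Pr r (0 : E)) := by
  have h1 : MeasurableSet {p : Measure E | p univ = 1} :=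
    (Measure.measurable_coe MeasurableSet.univ) (measurableSet_singleton 1)
  have hc : Continuous fun y : E => dist y 0 ^ r :=
    (continuous_id.dist continuous_const).rpow_const fun x => Or.inr hr
  have h2 : MeasurableSet {p : Measure E | ∫⁻ y, ENNReal.ofReal (dist y 0 ^ r) ∂p < ⊤} :=
    (Measure.measurable_lintegral hc.measurable.ennreal_ofReal) measurableSet_Iio
  convert h1.inter h2 using 1
  ext p
  exact and_congr ⟨fun h => h.measure_univ, fun h => ⟨h⟩⟩ Iff.rfl

end stepD

section stepD2
open ProbabilityTheory
variable {X E : Type*} [MetricSpace X] [SecondCountableTopology X]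
  [MeasurableSpace X] [BorelSpace X]
  [NormedAddCommGroup E] [InnerProductSpace ℝ E] [FiniteDimensional ℝ E]
  [MeasurableSpace E] [BorelSpace E]

lemma stepD {r : ℝ} (hr : 1 ≤ r) (μ : Measure X) (ν : Measure E)
    (hν : FinMom r (0 : E) ν)
    (ρ : Measure ((X × E) × E)) [IsProbabilityMeasure ρ]
    (hρ1 : ρ.map (fun p => p.1.1) = μ) (hρ2 : ρ.map Prod.snd = ν)
    (hi : Integrable (fun p : (X × E) × E => p.2 - p.1.2) ρ)
    (h0 : ∀ s : Set (X × E), IsClosed s →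
      ∫ p in {p : (X × E) × E | p.1 ∈ s}, (p.2 - p.1.2) ∂ρ = 0) :
    ∃ T : X × E → X × Measure E, Measurable T ∧ (∀ w, (T w).1 = w.1) ∧
      (ρ.fst.map T) ∈ Lambda μ ν ∧
      ∀ᵐ w ∂ρ.fst, (T w).2 ∈ Pr r (0 : E) ∧ bary (T w).2 = w.2 := by
  have : ProperSpace E := FiniteDimensional.proper_real E
  have hdis := Measure.disintegrate ρ ρ.condKernel
  set κ := ρ.condKernel with hκ
  set m := ρ.fst with hm
  have hmp : IsProbabilityMeasure m := by rw [hm]; infer_instance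
  have hT : Measurable fun w : X × E => (w.1, κ w) := measurable_fst.prodMk κ.measurable
  refine ⟨fun w => (w.1, κ w), hT, fun w => rfl, ?_, ?_⟩
  · have hae : ∀ᵐ xp ∂(m.map fun w => (w.1, κ w)), IsProbabilityMeasure xp.2 := by
      have hms : MeasurableSet {xp : X × Measure E | xp.2 univ = 1} :=
        measurable_snd ((Measure.measurable_coe MeasurableSet.univ) (measurableSet_singleton 1))
      have : ∀ᵐ xp ∂(m.map fun w => (w.1, κ w)), xp.2 univ = 1 := by
        rw [ae_map_iff hT.aemeasurable hms]
        exact Eventually.of_forall fun w => measure_univ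
      filter_upwards [this] with xp h
      exact ⟨h⟩
    have hI : intensityHat (m.map fun w => (w.1, κ w)) = ρ.map (fun p => (p.1.1, p.2)) := by
      ext s hs
      have hf : Measurable fun p : (X × E) × E => (p.1.1, p.2) := by fun_prop
      rw [intensityHat_apply _ hae hs, Measure.map_apply hf hs, ← hdis,
        Measure.compProd_apply (hf hs), lintegral_map ?_ hT]
      · refine lintegral_congr fun w => ?_
        have : IsProbabilityMeasure ((w.1, κ w) : X × Measure E).2 := by
          change IsProbabilityMeasure (κ w); infer_instance
        rw [hatK_apply]
        rfl
      · have := Kernel.measurable_kernel_prodMk_left (κ := hatK X E)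
          (t := {q : (X × Measure E) × E | (q.1.1, q.2) ∈ s})
          ((by fun_prop : Measurable fun q : (X × Measure E) × E => (q.1.1, q.2)) hs)
        exact this
    refine ⟨Measure.isProbabilityMeasure_map hT.aemeasurable, hae, ?_⟩
    rw [hI]
    constructor
    · rw [Measure.map_map measurable_fst (by fun_prop)]; exact hρ1
    · rw [Measure.map_map measurable_snd (by fun_prop)]; exact hρ2
  · have hc : Continuous fun y : E => dist y 0 ^ r :=
      (continuous_id.dist continuous_const).rpow_const fun x => Or.inr (by linarith)
    have hmom : ∀ᵐ w ∂m, κ w ∈ Pr r (0 : E) := by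
      have h1 : ∫⁻ w, ∫⁻ y, ENNReal.ofReal (dist y 0 ^ r) ∂κ w ∂m < ⊤ := by
        rw [← Measure.lintegral_compProd (f := fun p : (X × E) × E =>
          ENNReal.ofReal (dist p.2 0 ^ r)) (hc.measurable.ennreal_ofReal.comp measurable_snd), hdis]
        have := hν
        unfold FinMom at this
        rwa [← hρ2, lintegral_map hc.measurable.ennreal_ofReal measurable_snd] at this
      have h2 := ae_lt_top (Measurable.lintegral_kernel hc.measurable.ennreal_ofReal) h1.ne
      filter_upwards [h2] with w hw
      exact ⟨inferInstance, hw⟩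
    have hi' : Integrable (fun p : (X × E) × E => p.2 - p.1.2) (m ⊗ₘ κ) := by rwa [hdis]
    have hD : Integrable (fun w => ∫ z, (z - w.2) ∂κ w) m := by
      have := hi'.integral_compProd
      exact this
    have hz := ae_eq_zero_of_forall_setIntegral_isClosed_eq_zero hD (fun s hs => by
      have h3 := Measure.setIntegral_compProd (μ := m) (κ := κ) hs.measurableSet
        MeasurableSet.univ (f := fun p : (X × E) × E => p.2 - p.1.2) hi'.integrableOn
      simp only [Measure.restrict_univ] at h3
      rw [← h3, hdis, ← h0 s hs]
      congr 2
      ext p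
      simp)
    filter_upwards [hmom, hz, hi'.ae_of_compProd] with w hw hw2 hw3
    refine ⟨hw, ?_⟩
    have : Integrable (fun z : E => z) (κ w) := by
      have := hw3.add (integrable_const w.2)
      refine this.congr (Eventually.of_forall fun z => ?_)
      simp
    change ∫ z, (z - w.2) ∂κ w = 0 at hw2
    rw [integral_sub this (integrable_const _)] at hw2
    simp only [integral_const, probReal_univ, one_smul] at hw2
    exact sub_eq_zero.1 hw2
end stepD2

section cost
variable {X E : Type*} [MetricSpace X] [SecondCountableTopology X]
  [MeasurableSpace X] [BorelSpace X]
  [NormedAddCommGroup E] [InnerProductSpace ℝ E] [FiniteDimensional ℝ E]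
  [MeasurableSpace E] [BorelSpace E]

lemma dirac_mem_Pr (r : ℝ) (y : E) : Measure.dirac y ∈ Pr r (0 : E) := by
  refine ⟨inferInstance, ?_⟩
  unfold FinMom
  rw [lintegral_dirac]
  exact ENNReal.ofReal_lt_top

lemma bary_dirac (y : E) : bary (Measure.dirac y) = y := by
  unfold bary
  rw [integral_dirac]

lemma Wr_dirac_le {r : ℝ} (hr : 1 ≤ r) (a b : E) :
    Wr r (Measure.dirac a) (Measure.dirac b) ≤ ENNReal.ofReal (dist a b) := by
  unfold Wr
  refine (iInf₂_le (Measure.dirac (a, b)) ?_).trans ?_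
  · constructor
    · exact Measure.map_dirac' measurable_fst (a, b)
    · exact Measure.map_dirac' measurable_snd (a, b)
  · rw [lintegral_dirac, ← ENNReal.ofReal_rpow_of_nonneg dist_nonneg (by linarith),
      ← ENNReal.rpow_mul, mul_one_div_cancel (by linarith), ENNReal.rpow_one]

lemma cost_lsc {r : ℝ} (hr : 1 ≤ r) {C : X × Measure E → EReal} (hlsc : LscWr r (0 : E) C) :
    LowerSemicontinuous fun w : X × E => C (w.1, Measure.dirac w.2) := by
  intro w y hy
  by_contra hcon
  rw [not_eventually] at hcon
  obtain ⟨ws, hws, hws2⟩ := exists_seq_forall_of_frequently hcon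
  have h := hlsc w.1 (fun n => (ws n).1) (Measure.dirac w.2) (fun n => Measure.dirac (ws n).2)
    (dirac_mem_Pr r _) (fun n => dirac_mem_Pr r _) ((continuous_fst.tendsto w).comp hws) (by
      unfold WrTendsto
      have h1 : Tendsto (fun n => ENNReal.ofReal (dist (ws n).2 w.2)) atTop (𝓝 0) := by
        have h2 : Tendsto (fun n => dist (ws n).2 w.2) atTop (𝓝 0) :=
          tendsto_iff_dist_tendsto_zero.1 ((continuous_snd.tendsto w).comp hws)
        simpa using ENNReal.tendsto_ofReal h2
      exact tendsto_of_tendsto_of_tendsto_of_le_of_le tendsto_const_nhds h1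
        (fun n => zero_le) (fun n => Wr_dirac_le hr _ _))
  have h2 : liminf (fun n => C ((ws n).1, Measure.dirac (ws n).2)) atTop ≤ y :=
    liminf_le_of_frequently_le' (Frequently.of_forall fun n => not_lt.1 (hws2 n))
  exact absurd (h.trans h2) (not_le.2 hy)

lemma cost_eq {r : ℝ} {C : X × Measure E → EReal}
    (hbary : ∀ x, ∀ p ∈ Pr r (0 : E), ∀ q ∈ Pr r (0 : E), bary p = bary q → C (x, p) = C (x, q))
    (x : X) {p : Measure E} (hp : p ∈ Pr r (0 : E)) :
    C (x, p) = C (x, Measure.dirac (bary p)) :=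
  hbary x p hp _ (dirac_mem_Pr r _) (bary_dirac _).symm

lemma cost_lb {r : ℝ} (hr : 1 ≤ r) {x₀ : X} {C : X × Measure E → EReal} {K : ℝ}
    (hlb : ∀ x, ∀ p ∈ Pr r (0 : E),
      ((-(K * (1 + dist x x₀ ^ r + (Wr r p (Measure.dirac (0 : E)) ^ r).toReal)) : ℝ) : EReal)
        ≤ C (x, p)) (x : X) (y : E) :
    ((-(|K| * (1 + dist x x₀ ^ r + NN r y)) : ℝ) : EReal) ≤ C (x, Measure.dirac y) := by
  refine le_trans ?_ (hlb x _ (dirac_mem_Pr r y))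
  rw [EReal.coe_le_coe_iff]
  have h1 : (Wr r (Measure.dirac y) (Measure.dirac (0 : E)) ^ r).toReal ≤ NN r y := by
    refine le_trans ?_ (norm_rpow_le_NN (by linarith) y)
    refine ENNReal.toReal_le_of_le_ofReal (by positivity) ?_
    rw [← ENNReal.ofReal_rpow_of_nonneg (norm_nonneg _) (by linarith)]
    refine ENNReal.rpow_le_rpow ?_ (by linarith)
    simpa using Wr_dirac_le hr y 0
  have h0 : 0 ≤ (Wr r (Measure.dirac y) (Measure.dirac (0 : E)) ^ r).toReal :=
    ENNReal.toReal_nonneg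
  have h2 : 0 ≤ dist x x₀ ^ r := by positivity
  have h3 := le_abs_self K
  have h4 := abs_nonneg K
  generalize (Wr r (Measure.dirac y) (Measure.dirac (0 : E)) ^ r).toReal = t at *
  have : K * (1 + dist x x₀ ^ r + t) ≤ |K| * (1 + dist x x₀ ^ r + NN r y) :=
    mul_le_mul h3 (by linarith) (by linarith) h4
  linarith

lemma epos_continuous : Continuous epos := EReal.continuous_toENNReal

lemma F_lsc {r : ℝ} (hr : 1 ≤ r) {C : X × Measure E → EReal} (hlsc : LscWr r (0 : E) C)
    (K : ℝ) (x₀ : X) :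
    LowerSemicontinuous fun w : X × E =>
      epos (C (w.1, Measure.dirac w.2) + ((K * (1 + dist w.1 x₀ ^ r + NN r w.2) : ℝ) : EReal)) := by
  refine epos_continuous.comp_lowerSemicontinuous ?_ epos_mono
  refine (cost_lsc hr hlsc).add' ?_ fun w => EReal.continuousAt_add
    (Or.inr (EReal.coe_ne_bot _)) (Or.inr (EReal.coe_ne_top _))
  refine Continuous.lowerSemicontinuous ?_
  have h1 : Continuous fun x : X => dist x x₀ ^ r := (dist_mem_PhiR (by linarith) x₀).1
  have h2 : Continuous (NN r : E → ℝ) := continuous_NN r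
  have h3 : Continuous fun w : X × E => dist w.1 x₀ ^ r := h1.comp continuous_fst
  exact continuous_coe_real_ereal.comp (by fun_prop)

lemma ofReal_le_epos {e : EReal} {a b : ℝ} (hlb : ((-b : ℝ) : EReal) ≤ e)
    (h : ENNReal.ofReal a ≤ epos (e + (b : EReal))) : ((a - b : ℝ) : EReal) ≤ e := by
  induction e with
  | bot => simp at hlb
  | top => simp
  | coe e =>
    have h0 : -b ≤ e := by exact_mod_cast hlb
    rw [← EReal.coe_add, epos_coe, ENNReal.ofReal_le_ofReal_iff (by linarith)] at h
    exact_mod_cast (by linarith : a - b ≤ e)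

/-- existence of a good transport plan -/
lemma stepE [CompleteSpace X] {r K : ℝ} (hr : 1 ≤ r) (hK : 0 ≤ K) (x₀ : X)
    (μ : Measure X) (ν : Measure E) [IsProbabilityMeasure μ] [IsProbabilityMeasure ν]
    (hμ : FinMom r x₀ μ) (hν : FinMom r (0 : E) ν) (C : X × Measure E → EReal)
    (hbary : ∀ x, ∀ p ∈ Pr r (0 : E), ∀ q ∈ Pr r (0 : E), bary p = bary q → C (x, p) = C (x, q))
    (hlsc : LscWr r (0 : E) C)
    (hlb : ∀ x y, ((-(K * (1 + dist x x₀ ^ r + NN r y)) : ℝ) : EReal) ≤ C (x, Measure.dirac y))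
    (a s0 : ℝ) (hs0 : s0 = a + K * (1 + ∫ x, dist x x₀ ^ r ∂μ) + (K + 2) * ∫ y, NN r y ∂ν)
    (ρ : Measure ((X × E) × E)) [IsProbabilityMeasure ρ] (hρ1 : ρ.map (fun p => p.1.1) = μ)
    (H : ∀ u : DV X E, Adm r (fun w : X × E =>
      epos (C (w.1, Measure.dirac w.2) + ((K * (1 + dist w.1 x₀ ^ r + NN r w.2) : ℝ) : EReal))) u →
      ∫⁻ p, ENNReal.ofReal (GG r K u p) ∂ρ ≤ ENNReal.ofReal (s0 + ∫ y, u.2.1 y ∂ν)) :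
    ∃ P ∈ Lambda μ ν, eInt C P ≤ (a : EReal) := by
  have : ProperSpace E := FiniteDimensional.proper_real E
  obtain ⟨T, hT, hT1, hTL, hTae⟩ := stepD hr μ ν hν ρ hρ1 (sA3 hr hK ν s0 ρ H)
    (sA_sub hr hK ν s0 ρ H) (sA6 hr hK ν hν s0 ρ H)
  refine ⟨_, hTL, ?_⟩
  have hF := F_lsc hr hlsc K x₀
  have h7 := sA7 hr hK ν hν s0 ρ H hF
  have hNy := sA_Ny hr hK ν s0 ρ H
  have hNz := sA_Nz hr hK ν s0 ρ H
  have hcN : Continuous (NN r : E → ℝ) := continuous_NN r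
  have hcd : Continuous fun x : X => dist x x₀ ^ r := (dist_mem_PhiR (by linarith) x₀).1
  -- integrals
  have hcNs : AEStronglyMeasurable (fun w : X × E => NN r w.2) (ρ.map Prod.fst) :=
    (hcN.comp continuous_snd).aestronglyMeasurable
  have hNw : Integrable (fun w : X × E => NN r w.2) ρ.fst := by
    unfold Measure.fst
    rw [integrable_map_measure hcNs
      measurable_fst.aemeasurable]
    exact hNy
  have hNwi : ∫ w, NN r w.2 ∂ρ.fst = ∫ p, NN r p.1.2 ∂ρ := by
    unfold Measure.fst
    rw [integral_map measurable_fst.aemeasurable hcNs]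
  have hdμ : Integrable (fun x : X => dist x x₀ ^ r) μ :=
    PhiR_integrable (by linarith) hμ (dist_mem_PhiR (by linarith) x₀)
  have hfst : ρ.fst.map Prod.fst = μ := by
    unfold Measure.fst
    rw [Measure.map_map measurable_fst measurable_fst]; exact hρ1
  have hdw : Integrable (fun w : X × E => dist w.1 x₀ ^ r) ρ.fst := by
    rw [← hfst] at hdμ
    exact hdμ.comp_measurable measurable_fst
  have hdwi : ∫ w, dist w.1 x₀ ^ r ∂ρ.fst = ∫ x, dist x x₀ ^ r ∂μ := by
    rw [← hfst, integral_map measurable_fst.aemeasurable hcd.aestronglyMeasurable]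
  -- positivity of the bound
  have hpos : 0 ≤ s0 - (K + 2) * ∫ z, NN r z ∂ν + K * ∫ p, NN r p.1.2 ∂ρ := by
    have h1 := (sA1 hr hK ν s0 ρ H 0 (adm_zero r _)).2
    have h2 : ∫ p, GG r K 0 p ∂ρ = ∫ p, NN r p.1.2 ∂ρ + ∫ p, NN r p.2 ∂ρ
        + (K + 1) * ∫ p, DD r p.1.2 p.2 ∂ρ := by
      rw [← integral_const_mul, ← integral_add hNy hNz, ← integral_add]
      · refine integral_congr_ae (Eventually.of_forall fun p => ?_)
        simp [GG, BB]
      · have : Integrable (fun p => NN r p.1.2 + NN r p.2) ρ := hNy.add hNz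
        exact this
      · exact (sA_DD hr hK ν s0 ρ H).const_mul _
    have h3 : ∫ p, NN r p.2 ∂ρ = ∫ z, NN r z ∂ν := by
      rw [← sA3 hr hK ν s0 ρ H, integral_map measurable_snd.aemeasurable
        hcN.aestronglyMeasurable]
    rw [h2, h3, sA_intDD hr hK ν hν s0 ρ H] at h1
    simp only [Prod.snd_zero, Prod.fst_zero, Pi.zero_apply, integral_zero, add_zero] at h1
    linarith
  -- a.e. facts on P
  have hbm : Measurable fun p : Measure E => bary p :=
    (measurable_integral_meas (f := fun y : E => y) stronglyMeasurable_id).measurable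
  have hPr : ∀ᵐ xp ∂(ρ.fst.map T), xp.2 ∈ Pr r (0 : E) := by
    rw [ae_map_iff hT.aemeasurable (measurable_snd (measurableSet_Pr r (by linarith)))]
    filter_upwards [hTae] with w hw using hw.1
  set cc : X × E → EReal := fun w => C (w.1, Measure.dirac w.2) with hcc
  have hccm : Measurable cc := (cost_lsc hr hlsc).measurable
  have hB : Measurable fun xp : X × Measure E => (xp.1, bary xp.2) :=
    measurable_fst.prodMk (hbm.comp measurable_snd)
  have hCeq : C =ᵐ[ρ.fst.map T] fun xp => cc (xp.1, bary xp.2) := by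
    filter_upwards [hPr] with xp hxp
    exact cost_eq hbary xp.1 hxp
  set l : X × E → ℝ := fun w => K * (1 + dist w.1 x₀ ^ r + NN r w.2) with hl
  have hlc : Continuous l := by
    have h3 : Continuous fun w : X × E => dist w.1 x₀ ^ r := hcd.comp continuous_fst
    rw [hl]; fun_prop
  have hl0 : ∀ w, 0 ≤ l w := fun w => by
    have := one_le_NN hr w.2
    have : 0 ≤ dist w.1 x₀ ^ r := by positivity
    exact mul_nonneg hK (by linarith)
  have hli : Integrable l ρ.fst :=
    (((integrable_const (1:ℝ)).add hdw).add hNw).const_mul K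
  have hlint : ∫ w, l w ∂ρ.fst = K * (1 + ∫ x, dist x x₀ ^ r ∂μ) + K * ∫ p, NN r p.1.2 ∂ρ := by
    have h1 : Integrable (fun w : X × E => 1 + dist w.1 x₀ ^ r) ρ.fst :=
      (integrable_const (1:ℝ)).add hdw
    rw [hl, integral_const_mul, integral_add h1 hNw, integral_add (integrable_const _) hdw, hdwi,
      hNwi]
    simp
    ring
  have hLT : (fun w => l ((T w).1, bary (T w).2)) =ᵐ[ρ.fst] l := by
    filter_upwards [hTae] with w hw
    rw [hw.2, hT1]
  have hLm : Measurable fun xp : X × Measure E => l (xp.1, bary xp.2) :=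
    hlc.measurable.comp hB
  have hLi : Integrable (fun xp : X × Measure E => l (xp.1, bary xp.2)) (ρ.fst.map T) := by
    rw [integrable_map_measure hLm.aestronglyMeasurable hT.aemeasurable]
    exact hli.congr hLT.symm
  have hLint : ∫ xp, l (xp.1, bary xp.2) ∂(ρ.fst.map T) = ∫ w, l w ∂ρ.fst := by
    rw [integral_map hT.aemeasurable hLm.aestronglyMeasurable]
    exact integral_congr_ae hLT
  refine eInt_le (l := fun xp : X × Measure E => l (xp.1, bary xp.2))
    ⟨_, hccm.comp hB, hCeq⟩ hLi (fun _ => hl0 _) ?_ ?_ ?_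
  · filter_upwards [hPr] with xp hxp
    rw [cost_eq hbary xp.1 hxp]
    exact hlb _ _
  · rw [hLint, hlint]
    rw [hs0] at hpos
    linarith
  · rw [hLint, hlint]
    have h8 : ∫⁻ xp, epos (C xp + (l (xp.1, bary xp.2) : EReal)) ∂(ρ.fst.map T)
        = ∫⁻ p, epos (cc p.1 + (l p.1 : EReal)) ∂ρ := by
      have h9 : ∫⁻ xp, epos (C xp + (l (xp.1, bary xp.2) : EReal)) ∂(ρ.fst.map T)
        = ∫⁻ xp, epos (cc (xp.1, bary xp.2) + (l (xp.1, bary xp.2) : EReal)) ∂(ρ.fst.map T) := by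
        refine lintegral_congr_ae ?_
        filter_upwards [hCeq] with xp hxp
        rw [hxp]
      rw [h9]
      have hFm : Measurable fun w => epos (cc w + (l w : EReal)) := hF.measurable
      have hFB : Measurable fun xp : X × Measure E =>
          epos (cc (xp.1, bary xp.2) + (l (xp.1, bary xp.2) : EReal)) := hFm.comp hB
      rw [lintegral_map hFB hT]
      have h10 : ∫⁻ w, epos (cc w + (l w : EReal)) ∂ρ.fst
          = ∫⁻ p, epos (cc p.1 + (l p.1 : EReal)) ∂ρ := by
        unfold Measure.fst
        rw [lintegral_map hFm measurable_fst]
      rw [← h10]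
      refine lintegral_congr_ae ?_
      filter_upwards [hTae] with w hw
      rw [hw.2, hT1]
    rw [h8]
    refine h7.trans (ENNReal.ofReal_le_ofReal ?_)
    rw [hs0]
    linarith
end cost

section weak
open ProbabilityTheory
variable {X E : Type*} [MetricSpace X] [SecondCountableTopology X]
  [MeasurableSpace X] [BorelSpace X]
  [NormedAddCommGroup E] [InnerProductSpace ℝ E] [FiniteDimensional ℝ E]
  [MeasurableSpace E] [BorelSpace E]

lemma lambda_fst {μ : Measure X} {ν : Measure E} {P : Measure (X × Measure E)}
    (hP : P ∈ Lambda μ ν) : P.map Prod.fst = μ := by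
  obtain ⟨h1, h2, h3, -⟩ := hP
  rw [intensityHat_eq P h2, Measure.map_map measurable_fst (by fun_prop)] at h3
  rw [← h3]
  ext s hs
  have hm : Measurable fun q : (X × Measure E) × E => q.1.1 := by fun_prop
  change _ = (Measure.map (fun q : (X × Measure E) × E => q.1.1) _) s
  rw [Measure.map_apply measurable_fst hs, Measure.map_apply hm hs,
    Measure.compProd_apply (hm hs), ← lintegral_indicator_one (measurable_fst hs)]
  refine lintegral_congr_ae ?_
  filter_upwards [h2] with xp hxp
  rw [hatK_apply]
  by_cases hx : xp.1 ∈ s <;> simp [hx, preimage]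

lemma lambda_snd {μ : Measure X} {ν : Measure E} {P : Measure (X × Measure E)}
    (hP : P ∈ Lambda μ ν) : (P ⊗ₘ hatK X E).map Prod.snd = ν := by
  obtain ⟨h1, h2, -, h3⟩ := hP
  rw [intensityHat_eq P h2, Measure.map_map measurable_snd (by fun_prop)] at h3
  exact h3

lemma lambda_Pr {r : ℝ} (hr : 1 ≤ r) {μ : Measure X} {ν : Measure E}
    (hν : FinMom r (0 : E) ν) {P : Measure (X × Measure E)}
    (hP : P ∈ Lambda μ ν) : ∀ᵐ xp ∂P, xp.2 ∈ Pr r (0 : E) := by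
  have := hP.1
  have hc : Continuous fun y : E => dist y 0 ^ r :=
    (continuous_id.dist continuous_const).rpow_const fun x => Or.inr (by linarith)
  have h1 : ∫⁻ w, ∫⁻ y, ENNReal.ofReal (dist y 0 ^ r) ∂(hatK X E w) ∂P < ⊤ := by
    rw [← Measure.lintegral_compProd (f := fun p : (X × Measure E) × E =>
      ENNReal.ofReal (dist p.2 0 ^ r)) (hc.measurable.ennreal_ofReal.comp measurable_snd)]
    have := hν
    unfold FinMom at this
    rwa [← lambda_snd hP, lintegral_map hc.measurable.ennreal_ofReal measurable_snd] at this
  have h2 := ae_lt_top (Measurable.lintegral_kernel hc.measurable.ennreal_ofReal) h1.ne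
  filter_upwards [h2, hP.2.1] with w hw hp
  rw [hatK_apply] at hw
  exact ⟨hp, hw⟩

lemma lambda_int {r : ℝ} (hr : 1 ≤ r) {μ : Measure X} {ν : Measure E} [IsProbabilityMeasure ν]
    (hν : FinMom r (0 : E) ν) {P : Measure (X × Measure E)}
    (hP : P ∈ Lambda μ ν) {ψ : E → ℝ} (hψ : ψ ∈ PhiR r (0 : E)) :
    Integrable (fun xp : X × Measure E => ∫ y, ψ y ∂xp.2) P ∧
      ∫ xp : X × Measure E, ∫ y, ψ y ∂xp.2 ∂P = ∫ y, ψ y ∂ν := by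
  have := hP.1
  have hi : Integrable ψ ν := PhiR_integrable (by linarith) hν hψ
  have hi2 : Integrable (fun q : (X × Measure E) × E => ψ q.2) (P ⊗ₘ hatK X E) := by
    rw [← lambda_snd hP] at hi
    exact hi.comp_measurable measurable_snd
  have hi3 : Integrable (fun xp => ∫ y, ψ y ∂(hatK X E xp)) P := by
    have := hi2.integral_compProd
    exact this
  have hae : (fun xp => ∫ y, ψ y ∂(hatK X E xp)) =ᵐ[P] fun xp => ∫ y, ψ y ∂xp.2 := by
    filter_upwards [hP.2.1] with w hp
    rw [hatK_apply]
  refine ⟨hi3.congr hae, ?_⟩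
  rw [← integral_congr_ae hae]
  have h4 := Measure.integral_compProd hi2
  rw [← h4, ← lambda_snd hP, integral_map measurable_snd.aemeasurable
    hψ.1.aestronglyMeasurable]

lemma id_integrable {r : ℝ} (hr : 1 ≤ r) {p : Measure E} (hp : p ∈ Pr r (0 : E)) :
    Integrable (fun y : E => y) p := by
  have : ProperSpace E := FiniteDimensional.proper_real E
  have := hp.1
  have h1 := PhiR_integrable (by linarith) hp.2 (norm_mem_PhiR (E := E) hr)
  exact (integrable_norm_iff aestronglyMeasurable_id).1 h1

/-- weak duality for the third problem -/
lemma weak3 {r : ℝ} (hr : 1 ≤ r) {x₀ : X} {μ : Measure X} {ν : Measure E} [IsProbabilityMeasure μ]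
    [IsProbabilityMeasure ν] (hμ : FinMom r x₀ μ) (hν : FinMom r (0 : E) ν)
    {C : X × Measure E → EReal}
    (hbary : ∀ x, ∀ p ∈ Pr r (0 : E), ∀ q ∈ Pr r (0 : E), bary p = bary q → C (x, p) = C (x, q))
    {P : Measure (X × Measure E)} (hP : P ∈ Lambda μ ν) {φ : X → ℝ} (hφ : φ ∈ PhiR r x₀)
    {ψ : E → ℝ} (hψ : ψ ∈ PhiR r (0 : E)) {Δ : E → E}
    (h : ∀ x y z, ((φ x + ψ z + ⟪Δ y, z - y⟫ : ℝ) : EReal) ≤ C (x, Measure.dirac y)) :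
    ((∫ x, φ x ∂μ + ∫ y, ψ y ∂ν : ℝ) : EReal) ≤ eInt C P := by
  have := hP.1
  obtain ⟨hg, hgi⟩ := lambda_int hr hν hP hψ
  have hφi : Integrable φ μ := PhiR_integrable (by linarith) hμ hφ
  have hφi2 : Integrable (fun xp : X × Measure E => φ xp.1) P := by
    rw [← lambda_fst hP] at hφi
    exact hφi.comp_measurable measurable_fst
  have hφe : ∫ xp, φ xp.1 ∂P = ∫ x, φ x ∂μ := by
    rw [← lambda_fst hP, integral_map measurable_fst.aemeasurable hφ.1.aestronglyMeasurable]
  have key : ∀ᵐ xp ∂P, ((φ xp.1 + ∫ y, ψ y ∂xp.2 : ℝ) : EReal) ≤ C xp := by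
    filter_upwards [lambda_Pr hr hν hP] with xp hxp
    have e1 : C xp = C (xp.1, Measure.dirac (bary xp.2)) := cost_eq hbary xp.1 hxp
    rw [e1]
    have hh := h xp.1 (bary xp.2)
    generalize C (xp.1, Measure.dirac (bary xp.2)) = e at hh
    induction e with
    | bot => exact absurd (hh 0) (by rw [le_bot_iff]; exact EReal.coe_ne_bot _)
    | top => simp
    | coe t =>
      have hpp := hxp.1
      have hid := id_integrable hr hxp
      have hψp : Integrable ψ xp.2 := PhiR_integrable (by linarith) hxp.2 hψ
      have hin : Integrable (fun z => ⟪Δ (bary xp.2), z - bary xp.2⟫) xp.2 :=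
        (hid.sub (integrable_const _)).const_inner _
      have h5 : ∫ z, ⟪Δ (bary xp.2), z - bary xp.2⟫ ∂xp.2 = 0 := by
        rw [integral_inner (f := fun z => z - bary xp.2) (hid.sub (integrable_const _)),
          integral_sub hid (integrable_const _)]
        have : ∫ y, y ∂xp.2 = bary xp.2 := rfl
        rw [this]
        simp
      have h6 : Integrable (fun z => ψ z + ⟪Δ (bary xp.2), z - bary xp.2⟫) xp.2 := hψp.add hin
      have h7 : ∫ z, (ψ z + ⟪Δ (bary xp.2), z - bary xp.2⟫) ∂xp.2 ≤ ∫ z, (t - φ xp.1) ∂xp.2 :=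
        integral_mono h6 (integrable_const _) fun z => by
          have : φ xp.1 + ψ z + ⟪Δ (bary xp.2), z - bary xp.2⟫ ≤ t := by exact_mod_cast hh z
          simp only
          linarith
      rw [integral_add hψp hin, h5, integral_const] at h7
      simp only [probReal_univ, one_smul, smul_eq_mul, one_mul] at h7
      exact_mod_cast (by linarith : φ xp.1 + ∫ y, ψ y ∂xp.2 ≤ t)
  have hs : Integrable (fun xp : X × Measure E => φ xp.1 + ∫ y, ψ y ∂xp.2) P := hφi2.add hg
  have := le_eInt hs key
  rwa [integral_add hφi2 hg, hφe, hgi] at this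

lemma RC_eq {r : ℝ} (hr : 1 ≤ r) {C : X × Measure E → EReal}
    (hbary : ∀ x, ∀ p ∈ Pr r (0 : E), ∀ q ∈ Pr r (0 : E), bary p = bary q → C (x, p) = C (x, q))
    {ψ : E → ℝ} (hψ : ψ ∈ PhiR r (0 : E)) (hcv : ConcaveOn ℝ univ ψ) (x : X) :
    RC r (0 : E) C ψ x = ⨅ y : E, (((-ψ y : ℝ) : EReal) + C (x, Measure.dirac y)) := by
  have : ProperSpace E := FiniteDimensional.proper_real E
  unfold RC
  apply le_antisymm
  · refine le_iInf fun y => (iInf₂_le _ (dirac_mem_Pr r y)).trans ?_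
    rw [integral_dirac]
  · refine le_iInf₂ fun p hp => (iInf_le _ (bary p)).trans ?_
    rw [cost_eq hbary x hp]
    refine add_le_add ?_ le_rfl
    rw [EReal.coe_le_coe_iff]
    have := hp.1
    have hψp : Integrable ψ p := PhiR_integrable (by linarith) hp.2 hψ
    have := hcv.le_map_integral hψ.1.continuousOn isClosed_univ
      (Eventually.of_forall fun _ => mem_univ _) (id_integrable hr hp) hψp
    have e : ψ (∫ y, y ∂p) = ψ (bary p) := rfl
    linarith

lemma lsc_iInf_compact {G : X × E → EReal} (hG : LowerSemicontinuous G) {S : Set E}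
    (hS : IsCompact S) : LowerSemicontinuous fun x => ⨅ y ∈ S, G (x, y) := by
  intro x t ht
  obtain ⟨t', h1, h2⟩ := exists_between ht
  have h3 := hS.eventually_forall_of_forall_eventually (x₀ := x) (P := fun x y => t' < G (x, y))
    (fun y hy => hG (x, y) t' (h2.trans_le (iInf₂_le y hy)))
  filter_upwards [h3] with x' hx'
  exact h1.trans_le (le_iInf₂ fun y hy => (hx' y hy).le)

lemma RC_measurable {r : ℝ} (hr : 1 ≤ r) {C : X × Measure E → EReal}
    (hbary : ∀ x, ∀ p ∈ Pr r (0 : E), ∀ q ∈ Pr r (0 : E), bary p = bary q → C (x, p) = C (x, q))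
    (hlsc : LscWr r (0 : E) C)
    {ψ : E → ℝ} (hψ : ψ ∈ PhiR r (0 : E)) (hcv : ConcaveOn ℝ univ ψ) :
    Measurable (RC r (0 : E) C ψ) := by
  have : ProperSpace E := FiniteDimensional.proper_real E
  have hG : LowerSemicontinuous fun w : X × E =>
      (((-ψ w.2 : ℝ) : EReal) + C (w.1, Measure.dirac w.2)) := by
    refine LowerSemicontinuous.add' ?_ (cost_lsc hr hlsc) fun w => EReal.continuousAt_add
      (Or.inl (EReal.coe_ne_top _)) (Or.inl (EReal.coe_ne_bot _))
    refine Continuous.lowerSemicontinuous ?_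
    exact continuous_coe_real_ereal.comp (hψ.1.comp continuous_snd).neg
  have heq : RC r (0 : E) C ψ = fun x => ⨅ n : ℕ, ⨅ y ∈ Metric.closedBall (0 : E) n,
      (((-ψ y : ℝ) : EReal) + C (x, Measure.dirac y)) := by
    ext x
    rw [RC_eq hr hbary hψ hcv]
    apply le_antisymm
    · exact le_iInf fun n => le_iInf₂ fun y _ => iInf_le _ y
    · refine le_iInf fun y => ?_
      obtain ⟨n, hn⟩ := exists_nat_ge ‖y‖
      exact (iInf_le _ n).trans (iInf₂_le y (by simpa using hn))
  rw [heq]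
  refine Measurable.iInf fun n => ?_
  exact (lsc_iInf_compact hG (isCompact_closedBall (0 : E) n)).measurable

lemma weak1 {r : ℝ} (hr : 1 ≤ r) {μ : Measure X} {ν : Measure E}
    [IsProbabilityMeasure ν] (hν : FinMom r (0 : E) ν)
    {C : X × Measure E → EReal}
    (hbary : ∀ x, ∀ p ∈ Pr r (0 : E), ∀ q ∈ Pr r (0 : E), bary p = bary q → C (x, p) = C (x, q))
    (hlsc : LscWr r (0 : E) C)
    {P : Measure (X × Measure E)} (hP : P ∈ Lambda μ ν)
    {ψ : E → ℝ} (hψ : ψ ∈ PhiR r (0 : E)) (hcv : ConcaveOn ℝ univ ψ) :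
    ((∫ y, ψ y ∂ν : ℝ) : EReal) + eInt (RC r (0 : E) C ψ) μ ≤ eInt C P := by
  obtain ⟨hg, hgi⟩ := lambda_int hr hν hP hψ
  have hm := RC_measurable hr hbary hlsc hψ hcv
  have e1 : eInt (RC r (0 : E) C ψ) μ = eInt (fun xp => RC r (0 : E) C ψ xp.1) P := by
    unfold eInt
    have m1 : Measurable fun x => epos (RC r (0 : E) C ψ x) := measurable_epos.comp hm
    have m2 : Measurable fun x => epos (-(RC r (0 : E) C ψ x)) := measurable_epos.comp hm.neg
    rw [← lambda_fst hP, lintegral_map m1 measurable_fst, lintegral_map m2 measurable_fst]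
  rw [e1, add_comm, ← hgi]
  refine eInt_add_le (hm.comp measurable_fst).aemeasurable hg ?_
  filter_upwards [lambda_Pr hr hν hP] with xp hxp
  have h1 : RC r (0 : E) C ψ xp.1 ≤ ((-∫ y, ψ y ∂xp.2 : ℝ) : EReal) + C (xp.1, xp.2) :=
    iInf₂_le xp.2 hxp
  refine (add_le_add h1 le_rfl).trans ?_
  rw [add_comm, ← add_assoc, ← EReal.coe_add]
  simp

lemma two_le_one {r : ℝ} (hr : 1 ≤ r) {x₀ : X} {μ : Measure X} [IsProbabilityMeasure μ]
    (hμ : FinMom r x₀ μ) {C : X × Measure E → EReal}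
    (hbary : ∀ x, ∀ p ∈ Pr r (0 : E), ∀ q ∈ Pr r (0 : E), bary p = bary q → C (x, p) = C (x, q))
    {φ : X → ℝ} (hφ : φ ∈ PhiR r x₀)
    {ψ : E → ℝ} (hψ : ψ ∈ PhiR r (0 : E)) (hcv : ConcaveOn ℝ univ ψ)
    (h : ∀ x y, ((φ x + ψ y : ℝ) : EReal) ≤ C (x, Measure.dirac y)) :
    ((∫ x, φ x ∂μ : ℝ) : EReal) ≤ eInt (RC r (0 : E) C ψ) μ := by
  refine le_eInt (PhiR_integrable (by linarith) hμ hφ) (Eventually.of_forall fun x => ?_)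
  rw [RC_eq hr hbary hψ hcv]
  refine le_iInf fun y => ?_
  refine le_trans ?_ (add_le_add le_rfl (h x y))
  rw [← EReal.coe_add, EReal.coe_le_coe_iff]
  linarith

lemma strong [CompleteSpace X] {r K : ℝ} (hr : 1 ≤ r) (x₀ : X)
    (μ : Measure X) (ν : Measure E) [IsProbabilityMeasure μ] [IsProbabilityMeasure ν]
    (hμ : FinMom r x₀ μ) (hν : FinMom r (0 : E) ν) (C : X × Measure E → EReal)
    (hbary : ∀ x, ∀ p ∈ Pr r (0 : E), ∀ q ∈ Pr r (0 : E), bary p = bary q → C (x, p) = C (x, q))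
    (hlsc : LscWr r (0 : E) C)
    (hlb : ∀ x, ∀ p ∈ Pr r (0 : E),
      ((-(K * (1 + dist x x₀ ^ r + (Wr r p (Measure.dirac (0 : E)) ^ r).toReal)) : ℝ) : EReal)
        ≤ C (x, p)) (a : ℝ) (ha : ∀ P ∈ Lambda μ ν, (a : EReal) < eInt C P) :
    ∃ φ ∈ PhiR r x₀, ∃ ψ ∈ PhiR r (0 : E), ConcaveOn ℝ univ ψ ∧
      (∀ x y, ((φ x + ψ y : ℝ) : EReal) ≤ C (x, Measure.dirac y)) ∧
      a ≤ ∫ x, φ x ∂μ + ∫ y, ψ y ∂ν := by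
  have hlb' := cost_lb hr hlb
  obtain ⟨f, hf, hf0, φ, hφ, ψ, hψ, hcv, hle, hv⟩ := dual_main hr (abs_nonneg K)
    (fun w : X × E => epos (C (w.1, Measure.dirac w.2) +
      ((|K| * (1 + dist w.1 x₀ ^ r + NN r w.2) : ℝ) : EReal))) x₀ μ ν hμ hν a _ rfl (by
      intro π hπ
      by_contra hcon
      push Not at hcon
      obtain ⟨P, hP, hPa⟩ := stepE hr (abs_nonneg K) x₀ μ ν hμ hν C hbary hlsc hlb' a _ rfl
        (π : Measure ((X × E) × E)) hπ.1 hcon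
      exact absurd hPa (not_le.2 (ha P hP)))
  refine ⟨φ, hφ, ψ, hψ, hcv, fun x y => ?_, hv⟩
  exact le_trans (EReal.coe_le_coe_iff.2 (hle x y)) (ofReal_le_epos (hlb' x y) (hf (x, y)))
end weak

/-- duality for barycentric costs
(Proposition `prop:convex order barycentric C` (b)). -/
theorem statement10 {X : Type*} [MeasurableSpace X] [MetricSpace X] [CompleteSpace X]
    [SecondCountableTopology X] [BorelSpace X] (d : ℕ) (r : ℝ) (hr : 1 ≤ r) (x₀ : X)
    (μ : Measure X) (ν : Measure (EuclideanSpace ℝ (Fin d)))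
    [IsProbabilityMeasure μ] [IsProbabilityMeasure ν]
    (hμ : FinMom r x₀ μ) (hν : FinMom r (0 : EuclideanSpace ℝ (Fin d)) ν)
    (C : X × Measure (EuclideanSpace ℝ (Fin d)) → EReal) (hbot : ∀ z, C z ≠ ⊥)
    (hbary : ∀ x, ∀ p ∈ Pr r (0 : EuclideanSpace ℝ (Fin d)),
      ∀ q ∈ Pr r (0 : EuclideanSpace ℝ (Fin d)), bary p = bary q → C (x, p) = C (x, q))
    (hlsc : LscWr r (0 : EuclideanSpace ℝ (Fin d)) C) (K : ℝ)
    (hlb : ∀ x, ∀ p ∈ Pr r (0 : EuclideanSpace ℝ (Fin d)),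
      ((-(K * (1 + dist x x₀ ^ r +
        (Wr r p (Measure.dirac (0 : EuclideanSpace ℝ (Fin d))) ^ r).toReal)) : ℝ) : EReal)
        ≤ C (x, p)) :
    (sInf {v : EReal | ∃ P ∈ Lambda μ ν, v = eInt C P}
       = sSup {v : EReal | ∃ ψ ∈ PhiR r (0 : EuclideanSpace ℝ (Fin d)),
           ConcaveOn ℝ Set.univ ψ ∧
           v = ((∫ y, ψ y ∂ν : ℝ) : EReal)
             + eInt (RC r (0 : EuclideanSpace ℝ (Fin d)) C ψ) μ}) ∧
    (sInf {v : EReal | ∃ P ∈ Lambda μ ν, v = eInt C P}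
       = sSup {v : EReal | ∃ φ ∈ PhiR r x₀, ∃ ψ ∈ PhiR r (0 : EuclideanSpace ℝ (Fin d)),
           ConcaveOn ℝ Set.univ ψ ∧
           (∀ x y, ((φ x + ψ y : ℝ) : EReal) ≤ C (x, Measure.dirac y)) ∧
           v = ((∫ x, φ x ∂μ + ∫ y, ψ y ∂ν : ℝ) : EReal)}) ∧
    (sInf {v : EReal | ∃ P ∈ Lambda μ ν, v = eInt C P}
       = sSup {v : EReal | ∃ φ ∈ PhiR r x₀, ∃ ψ ∈ PhiR r (0 : EuclideanSpace ℝ (Fin d)),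
           ∃ Δ : EuclideanSpace ℝ (Fin d) → EuclideanSpace ℝ (Fin d),
           (∀ x y z, ((φ x + ψ z + ⟪Δ y, z - y⟫ : ℝ) : EReal) ≤ C (x, Measure.dirac y)) ∧
           v = ((∫ x, φ x ∂μ + ∫ y, ψ y ∂ν : ℝ) : EReal)}) := by
  set V := sInf {v : EReal | ∃ P ∈ Lambda μ ν, v = eInt C P} with hV
  set D1 := sSup {v : EReal | ∃ ψ ∈ PhiR r (0 : EuclideanSpace ℝ (Fin d)),
           ConcaveOn ℝ Set.univ ψ ∧
           v = ((∫ y, ψ y ∂ν : ℝ) : EReal)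
             + eInt (RC r (0 : EuclideanSpace ℝ (Fin d)) C ψ) μ} with hD1
  set D2 := sSup {v : EReal | ∃ φ ∈ PhiR r x₀, ∃ ψ ∈ PhiR r (0 : EuclideanSpace ℝ (Fin d)),
           ConcaveOn ℝ Set.univ ψ ∧
           (∀ x y, ((φ x + ψ y : ℝ) : EReal) ≤ C (x, Measure.dirac y)) ∧
           v = ((∫ x, φ x ∂μ + ∫ y, ψ y ∂ν : ℝ) : EReal)} with hD2
  set D3 := sSup {v : EReal | ∃ φ ∈ PhiR r x₀, ∃ ψ ∈ PhiR r (0 : EuclideanSpace ℝ (Fin d)),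
           ∃ Δ : EuclideanSpace ℝ (Fin d) → EuclideanSpace ℝ (Fin d),
           (∀ x y z, ((φ x + ψ z + ⟪Δ y, z - y⟫ : ℝ) : EReal) ≤ C (x, Measure.dirac y)) ∧
           v = ((∫ x, φ x ∂μ + ∫ y, ψ y ∂ν : ℝ) : EReal)} with hD3
  have h1V : D1 ≤ V := by
    refine sSup_le ?_
    rintro _ ⟨ψ, hψ, hcv, rfl⟩
    refine le_sInf ?_
    rintro _ ⟨P, hP, rfl⟩
    exact weak1 hr hν hbary hlsc hP hψ hcv
  have h3V : D3 ≤ V := by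
    refine sSup_le ?_
    rintro _ ⟨φ, hφ, ψ, hψ, Δ, h, rfl⟩
    refine le_sInf ?_
    rintro _ ⟨P, hP, rfl⟩
    exact weak3 hr hμ hν hbary hP hφ hψ h
  have h21 : D2 ≤ D1 := by
    refine sSup_le ?_
    rintro _ ⟨φ, hφ, ψ, hψ, hcv, h, rfl⟩
    refine le_trans ?_ (le_sSup ⟨ψ, hψ, hcv, rfl⟩)
    rw [EReal.coe_add, add_comm]
    exact add_le_add le_rfl (two_le_one hr hμ hbary hφ hψ hcv h)
  have h23 : D2 ≤ D3 := by
    refine sSup_le ?_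
    rintro _ ⟨φ, hφ, ψ, hψ, hcv, h, rfl⟩
    choose g hg using exists_supergrad hψ.1 hcv
    refine le_sSup ⟨φ, hφ, ψ, hψ, fun y => -g y, fun x y z => ?_, rfl⟩
    refine le_trans ?_ (h x y)
    rw [EReal.coe_le_coe_iff, inner_neg_left]
    linarith [hg y z]
  have hV2 : V ≤ D2 := by
    refine EReal.ge_of_forall_gt_iff_ge.1 fun a ha => ?_
    obtain ⟨φ, hφ, ψ, hψ, hcv, h, hv⟩ := strong hr x₀ μ ν hμ hν C hbary hlsc hlb a
      (fun P hP => ha.trans_le (sInf_le ⟨P, hP, rfl⟩))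
    exact le_trans (EReal.coe_le_coe_iff.2 hv) (le_sSup ⟨φ, hφ, ψ, hψ, hcv, h, rfl⟩)
  exact ⟨le_antisymm (hV2.trans h21) h1V, le_antisymm hV2 (h23.trans h3V),
    le_antisymm (hV2.trans h23) h3V⟩
end
end

section
/- Let 𝒳, 𝒴 be Polish spaces, r ∈ [1,∞), μ ∈ 𝒫_r(𝒳), ν ∈ 𝒫_r(𝒴), and let C : 𝒳 × 𝒫_r(𝒴) → ℝ ∪ {+∞} be measurable, bounded below by −K(1 + d_𝒳(x,x₀)^r + 𝒲_r(p,δ_{y₀})^r), and such that for every x ∈ 𝒳 one has ∫ C(x,q) Q(dq) ≤ C(x, I(Q)) for all Q ∈ 𝒫_r(𝒫_r(𝒴)). Then C̃(x,p) := inf{ ∫ C(x,q) Q(dq) : Q ∈ 𝒫_r(𝒫_r(𝒴)), I(Q) = p } satisfies C̃(x,p) = ∫ C(x,δ_y) p(dy) for all (x,p) ∈ 𝒳 × 𝒫_r(𝒴); consequently inf_{P ∈ Λ(μ,ν)} ∫ C(x,p) P(dx,dp) = inf_{π ∈ Π(μ,ν)} ∫ C(x,δ_y) π(dx,dy), i.e.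 the relaxed weak transport problem reduces to a classical optimal transport problem with cost c(x,y) := C(x,δ_y). -/
open MeasureTheory Set Filter
open scoped ENNReal NNReal Topology RealInnerProductSpace

noncomputable section

namespace WOT

lemma measurable_epos : Measurable epos := measurable_ereal_toENNReal

lemma epos_mono {a b : EReal} (h : a ≤ b) : epos a ≤ epos b := EReal.toENNReal_le_toENNReal h

lemma epos_arith {a b : ℝ≥0∞} (hb : b ≠ ⊤) {g : EReal} (h : (a : EReal) - (b : EReal) ≤ g) :
    a + epos (-g) ≤ epos g + b ∧ epos (-g) ≤ b := by
  lift b to ℝ≥0 using hb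
  induction g with
  | bot =>
    exfalso
    induction a with
    | top => simp at h
    | coe a =>
      have : ((a : ℝ) : EReal) - ((b : ℝ) : EReal) ≤ ⊥ := h
      rw [← EReal.coe_sub, le_bot_iff] at this
      exact EReal.coe_ne_bot _ this
  | top => simp [epos]
  | coe g =>
    induction a with
    | top =>
      exfalso
      have : (⊤ : EReal) - ((b : ℝ) : EReal) ≤ (g : EReal) := h
      rw [EReal.top_sub_coe] at this
      simp at this
    | coe a =>
      have h' : ((a : ℝ) : EReal) - ((b : ℝ) : EReal) ≤ (g : EReal) := h
      rw [← EReal.coe_sub, EReal.coe_le_coe_iff] at h'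
      have e1 : epos (g : EReal) = ENNReal.ofReal g := rfl
      have e2 : epos (-(g : EReal)) = ENNReal.ofReal (-g) := rfl
      rw [e1, e2]
      have hb : ((b : ℝ≥0) : ℝ≥0∞) = ENNReal.ofReal (b : ℝ) := by simp
      have ha : ((a : ℝ≥0) : ℝ≥0∞) = ENNReal.ofReal (a : ℝ) := by simp
      rw [hb, ha]
      have := a.2
      have := b.2
      refine ⟨?_, ENNReal.ofReal_le_ofReal (by simp at *; linarith)⟩
      rcases le_total 0 g with hg | hg
      · rw [ENNReal.ofReal_of_nonpos (p := -g) (by linarith), add_zero,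
          ← ENNReal.ofReal_add hg (by simp)]
        exact ENNReal.ofReal_le_ofReal (by linarith)
      · rw [ENNReal.ofReal_of_nonpos (p := g) hg, zero_add,
          ← ENNReal.ofReal_add (by simp) (by linarith)]
        exact ENNReal.ofReal_le_ofReal (by linarith)

lemma sub_arith {a b c d : ℝ≥0∞} (hb : b ≠ ⊤) (hd : d ≠ ⊤) (h : a + d ≤ c + b) :
    (a : EReal) - (b : EReal) ≤ (c : EReal) - (d : EReal) := by
  lift b to ℝ≥0 using hb
  lift d to ℝ≥0 using hd
  induction c with
  | top =>
    have : ((⊤ : ℝ≥0∞) : EReal) - ((d : ℝ≥0∞) : EReal) = ⊤ := EReal.top_sub_coe (d : ℝ)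
    rw [this]; exact le_top
  | coe c =>
    induction a with
    | top =>
      exfalso
      rw [top_add, ← ENNReal.coe_add] at h
      simp at h
    | coe a =>
      norm_cast at h
      change ((a : ℝ) : EReal) - ((b : ℝ) : EReal) ≤ ((c : ℝ) : EReal) - ((d : ℝ) : EReal)
      rw [← EReal.coe_sub, ← EReal.coe_sub, EReal.coe_le_coe_iff]
      have : (a : ℝ) + d ≤ c + b := by exact_mod_cast h
      linarith

lemma eInt_map {A B : Type*} [MeasurableSpace A] [MeasurableSpace B] {f : B → EReal}
    (hf : Measurable f) {g : A → B} (hg : Measurable g) (m : Measure A) :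
    eInt f (m.map g) = eInt (fun a => f (g a)) m := by
  unfold eInt
  rw [lintegral_map (f := fun x => epos (f x)) (measurable_epos.comp hf) hg,
    lintegral_map (f := fun x => epos (-(f x))) (measurable_epos.comp hf.neg) hg]

lemma eInt_bind_le {A B : Type*} [MeasurableSpace A] [MeasurableSpace B]
    (P : Measure A) (k : A → Measure B) (hk : AEMeasurable k P)
    {f : B → EReal} (hf : Measurable f) {g : A → EReal} (hg : Measurable g)
    (hle : ∀ᵐ a ∂P, eInt f (k a) ≤ g a)
    (hfin : ∫⁻ y, epos (-(f y)) ∂(P.bind k) ≠ ⊤) :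
    eInt f (P.bind k) ≤ eInt g P := by
  have mfp : Measurable fun y => epos (f y) := measurable_epos.comp hf
  have mfn : Measurable fun y => epos (-(f y)) := measurable_epos.comp hf.neg
  have mgp : Measurable fun y => epos (g y) := measurable_epos.comp hg
  have mgn : Measurable fun y => epos (-(g y)) := measurable_epos.comp hg.neg
  have ma : AEMeasurable (fun a => ∫⁻ y, epos (f y) ∂(k a)) P :=
    (Measure.measurable_lintegral mfp).comp_aemeasurable hk
  have mb : AEMeasurable (fun a => ∫⁻ y, epos (-(f y)) ∂(k a)) P :=
    (Measure.measurable_lintegral mfn).comp_aemeasurable hk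
  have ea := Measure.lintegral_bind hk (f := fun y => epos (f y)) mfp.aemeasurable
  have eb := Measure.lintegral_bind hk (f := fun y => epos (-(f y))) mfn.aemeasurable
  rw [eb] at hfin
  have hbfin := ae_lt_top' mb hfin
  have key : ∀ᵐ a ∂P, (∫⁻ y, epos (f y) ∂(k a)) + epos (-(g a))
        ≤ epos (g a) + ∫⁻ y, epos (-(f y)) ∂(k a)
      ∧ epos (-(g a)) ≤ ∫⁻ y, epos (-(f y)) ∂(k a) := by
    filter_upwards [hle, hbfin] with a h1 h2
    exact epos_arith h2.ne h1
  have hd : ∫⁻ a, epos (-(g a)) ∂P ≠ ⊤ :=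
    ne_top_of_le_ne_top hfin (lintegral_mono_ae (key.mono fun a h => h.2))
  unfold eInt
  rw [ea, eb]
  refine sub_arith hfin hd ?_
  rw [← lintegral_add_right' _ mgn.aemeasurable, ← lintegral_add_left mgp]
  exact lintegral_mono_ae (key.mono fun a h => h.1)

section
variable {Y : Type*} [MeasurableSpace Y] [MetricSpace Y] [SecondCountableTopology Y]
  [BorelSpace Y]

lemma meas_distr (r : ℝ) (y₀ : Y) : Measurable fun y : Y => ENNReal.ofReal (dist y y₀ ^ r) :=
  ((measurable_id.dist measurable_const).pow_const r).ennreal_ofReal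

lemma Wr_le (r : ℝ) (hr : 1 ≤ r) (y₀ : Y) (p : Measure Y) [IsProbabilityMeasure p] :
    Wr r p (Measure.dirac y₀) ^ r ≤ ∫⁻ y, ENNReal.ofReal (dist y y₀ ^ r) ∂p := by
  have h0 : 0 < r := by linarith
  have : Wr r p (Measure.dirac y₀) ≤ (∫⁻ y, ENNReal.ofReal (dist y y₀ ^ r) ∂p) ^ (1 / r) := by
    unfold Wr
    refine iInf₂_le_of_le (p.map fun y => (y, y₀)) ⟨?_, ?_⟩ ?_
    · rw [Measure.map_map measurable_fst (by fun_prop)]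
      exact Measure.map_id
    · rw [Measure.map_map measurable_snd (by fun_prop)]
      change p.map (fun _ => y₀) = _
      simp
    · gcongr
      exact lintegral_map_le _ _
  calc _ ≤ ((∫⁻ y, ENNReal.ofReal (dist y y₀ ^ r) ∂p) ^ (1 / r)) ^ r := by gcongr
    _ = _ := by rw [← ENNReal.rpow_mul, one_div_mul_cancel h0.ne', ENNReal.rpow_one]

lemma dirac_mem_Pr (r : ℝ) (y₀ y : Y) : Measure.dirac y ∈ Pr r y₀ := by
  refine ⟨inferInstance, ?_⟩
  unfold FinMom
  rw [lintegral_dirac]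
  exact ENNReal.ofReal_lt_top

lemma Wr_dirac_le (r : ℝ) (hr : 1 ≤ r) (y₀ y : Y) :
    Wr r (Measure.dirac y) (Measure.dirac y₀) ^ r ≤ ENNReal.ofReal (dist y y₀ ^ r) := by
  refine (Wr_le r hr y₀ _).trans ?_
  rw [lintegral_dirac]

lemma map_dirac_mem (r : ℝ) (hr : 1 ≤ r) (y₀ : Y) {p : Measure Y} (hp : p ∈ Pr r y₀) :
    p.map Measure.dirac ∈ PrP r y₀ := by
  obtain ⟨hp1, hp2⟩ := hp
  refine ⟨Measure.isProbabilityMeasure_map Measure.measurable_dirac.aemeasurable, ?_, ?_⟩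
  · have hS : MeasurableSet {q : Measure Y | q Set.univ = 1 ∧
        ∫⁻ y, ENNReal.ofReal (dist y y₀ ^ r) ∂q < ⊤} :=
      ((Measure.measurable_coe MeasurableSet.univ) (measurableSet_singleton 1)).inter
        ((Measure.measurable_lintegral (meas_distr r y₀)) measurableSet_Iio)
    have : ∀ᵐ q ∂(p.map Measure.dirac), q Set.univ = 1 ∧
        ∫⁻ y, ENNReal.ofReal (dist y y₀ ^ r) ∂q < ⊤ := by
      rw [ae_map_iff Measure.measurable_dirac.aemeasurable hS]
      exact ae_of_all _ fun y => ⟨by simp, (dirac_mem_Pr r y₀ y).2⟩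
    exact this.mono fun q hq => ⟨⟨hq.1⟩, hq.2⟩
  · refine (lintegral_map_le _ _).trans_lt ?_
    exact (lintegral_mono fun y => Wr_dirac_le r hr y₀ y).trans_lt hp2

lemma aemeas_prod {X : Type*} [MeasurableSpace X] {P : Measure (X × Measure Y)}
    (hP : ∀ᵐ xp ∂P, IsProbabilityMeasure xp.2) :
    AEMeasurable (fun xp : X × Measure Y => (Measure.dirac xp.1).prod xp.2) P := by
  classical
  have hS : MeasurableSet {xp : X × Measure Y | xp.2 Set.univ = 1} :=
    ((Measure.measurable_coe MeasurableSet.univ).comp measurable_snd) (measurableSet_singleton 1)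
  let κ : ProbabilityTheory.Kernel (X × Measure Y) Y :=
    ⟨fun xp => if xp.2 Set.univ = 1 then xp.2 else 0,
      Measurable.ite hS measurable_snd measurable_const⟩
  have hκ : ProbabilityTheory.IsFiniteKernel κ := by
    refine ⟨1, ENNReal.one_lt_top, fun xp => ?_⟩
    change (if xp.2 Set.univ = 1 then xp.2 else 0 : Measure Y) Set.univ ≤ 1
    split_ifs with h
    · exact h.le
    · simp
  refine ⟨_, (ProbabilityTheory.Kernel.prod
    (ProbabilityTheory.Kernel.deterministic Prod.fst measurable_fst) κ).measurable, ?_⟩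
  filter_upwards [hP] with xp h
  rw [ProbabilityTheory.Kernel.prod_apply, ProbabilityTheory.Kernel.deterministic_apply]
  have : κ xp = xp.2 := if_pos h.measure_univ
  rw [this]

lemma eneg_bound {X : Type*} [MetricSpace X]
    (r : ℝ) (hr : 1 ≤ r) (x₀ : X) (y₀ : Y) (C : X × Measure Y → EReal) (K : ℝ)
    (hlb : ∀ x, ∀ p ∈ Pr r y₀,
      ((-(K * (1 + dist x x₀ ^ r + (Wr r p (Measure.dirac y₀) ^ r).toReal)) : ℝ) : EReal)
        ≤ C (x, p)) (x : X) (y : Y) :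
    epos (-(C (x, Measure.dirac y))) ≤ ENNReal.ofReal |K| *
      (1 + ENNReal.ofReal (dist x x₀ ^ r) + ENNReal.ofReal (dist y y₀ ^ r)) := by
  have h := hlb x _ (dirac_mem_Pr r y₀ y)
  set w := (Wr r (Measure.dirac y) (Measure.dirac y₀) ^ r).toReal with hw
  have hw1 : w ≤ dist y y₀ ^ r :=
    ENNReal.toReal_le_of_le_ofReal (by positivity) (Wr_dirac_le r hr y₀ y)
  have hw0 : 0 ≤ w := ENNReal.toReal_nonneg
  have h2 : -(C (x, Measure.dirac y)) ≤ ((K * (1 + dist x x₀ ^ r + w) : ℝ) : EReal) := by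
    rw [EReal.neg_le]; simpa using h
  refine (epos_mono h2).trans ?_
  change ENNReal.ofReal _ ≤ _
  have dx : 0 ≤ dist x x₀ ^ r := by positivity
  have dy : 0 ≤ dist y y₀ ^ r := by positivity
  rw [← ENNReal.ofReal_one, ← ENNReal.ofReal_add (by norm_num) dx,
    ← ENNReal.ofReal_add (by linarith) dy, ← ENNReal.ofReal_mul (abs_nonneg K)]
  apply ENNReal.ofReal_le_ofReal
  calc K * (1 + dist x x₀ ^ r + w) ≤ |K| * (1 + dist x x₀ ^ r + w) := by
        gcongr; exact le_abs_self K
    _ ≤ _ := by gcongr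

end

end WOT

open WOT

/-- for costs satisfying Jensen's inequality (concave-type costs), the
relaxed weak transport problem reduces to a classical optimal transport problem
(Remark `rem:convexify`). -/
theorem statement11 {X Y : Type*}
    [MeasurableSpace X] [MetricSpace X] [CompleteSpace X] [SecondCountableTopology X]
    [BorelSpace X]
    [MeasurableSpace Y] [MetricSpace Y] [CompleteSpace Y] [SecondCountableTopology Y]
    [BorelSpace Y]
    (r : ℝ) (hr : 1 ≤ r) (x₀ : X) (y₀ : Y)
    (μ : Measure X) (ν : Measure Y) [IsProbabilityMeasure μ] [IsProbabilityMeasure ν]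
    (hμ : FinMom r x₀ μ) (hν : FinMom r y₀ ν)
    (C : X × Measure Y → EReal) (hC : Measurable C) (K : ℝ)
    (hlb : ∀ x, ∀ p ∈ Pr r y₀,
      ((-(K * (1 + dist x x₀ ^ r + (Wr r p (Measure.dirac y₀) ^ r).toReal)) : ℝ) : EReal)
        ≤ C (x, p))
    (hJensen : ∀ x, ∀ Q ∈ PrP r y₀, eInt (fun q => C (x, q)) Q ≤ C (x, intensity Q)) :
    (∀ x, ∀ p ∈ Pr r y₀,
      tildeC r y₀ C (x, p) = eInt (fun y => C (x, Measure.dirac y)) p) ∧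
    sInf {v : EReal | ∃ P ∈ Lambda μ ν, v = eInt C P}
      = sInf {v : EReal | ∃ π ∈ Couplings μ ν,
          v = eInt (fun z => C (z.1, Measure.dirac z.2)) π} := by
  have mc : Measurable fun z : X × Y => C (z.1, Measure.dirac z.2) :=
    hC.comp (measurable_fst.prodMk (Measure.measurable_dirac.comp measurable_snd))
  have mcx : ∀ x, Measurable fun y : Y => C (x, Measure.dirac y) := fun x =>
    mc.comp measurable_prodMk_left
  have mCx : ∀ x, Measurable fun q : Measure Y => C (x, q) := fun x =>
    hC.comp measurable_prodMk_left
  have jen : ∀ x, ∀ q ∈ Pr r y₀, eInt (fun y => C (x, Measure.dirac y)) q ≤ C (x, q) := by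
    intro x q hq
    have h := hJensen x _ (map_dirac_mem r hr y₀ hq)
    rw [eInt_map (mCx x) Measure.measurable_dirac] at h
    unfold intensity at h
    rwa [Measure.join_map_dirac] at h
  have bnd := eneg_bound r hr x₀ y₀ C K hlb
  constructor
  · intro x p hp
    unfold tildeC
    apply le_antisymm
    · refine iInf₂_le_of_le (p.map Measure.dirac) ⟨map_dirac_mem r hr y₀ hp, ?_⟩ ?_
      · exact Measure.join_map_dirac p
      · rw [eInt_map (mCx x) Measure.measurable_dirac]
    · refine le_iInf₂ fun Q hQ => ?_
      obtain ⟨hQ1, hQ2⟩ := hQ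
      have hQ3 : Q.bind id = p := by rw [← Measure.join_eq_bind]; exact hQ2
      have := eInt_bind_le Q id aemeasurable_id (mcx x) (mCx x)
        (hQ1.2.1.mono fun q hq => jen x q hq) ?_
      · rwa [hQ3] at this
      · rw [hQ3]
        have := hp.1
        refine ne_top_of_le_ne_top ?_ (lintegral_mono fun y => bnd x y)
        rw [lintegral_const_mul' _ _ ENNReal.ofReal_ne_top, lintegral_add_left measurable_const,
          lintegral_const, measure_univ, mul_one]
        exact ENNReal.mul_ne_top ENNReal.ofReal_ne_top (ENNReal.add_ne_top.2
          ⟨ENNReal.add_ne_top.2 ⟨ENNReal.one_ne_top, ENNReal.ofReal_ne_top⟩, hp.2.ne⟩)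
  · apply le_antisymm
    · refine le_sInf ?_
      rintro v ⟨π, hπ, rfl⟩
      have hg : Measurable fun z : X × Y => (z.1, Measure.dirac z.2) :=
        measurable_fst.prodMk (Measure.measurable_dirac.comp measurable_snd)
      have hπp : IsProbabilityMeasure π := by
        constructor
        have h := congrArg (fun m => m Set.univ) hπ.1
        simpa [Measure.map_apply measurable_fst MeasurableSet.univ] using h
      refine sInf_le ⟨π.map fun z => (z.1, Measure.dirac z.2), ?_, (eInt_map hC hg π).symm⟩
      have hpr : ∀ᵐ xp ∂(π.map fun z : X × Y => (z.1, Measure.dirac z.2)),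
          IsProbabilityMeasure xp.2 := by
        have hS : MeasurableSet {xp : X × Measure Y | xp.2 Set.univ = 1} :=
          ((Measure.measurable_coe MeasurableSet.univ).comp measurable_snd)
            (measurableSet_singleton 1)
        have : ∀ᵐ xp ∂(π.map fun z : X × Y => (z.1, Measure.dirac z.2)),
            xp.2 Set.univ = 1 := by
          rw [ae_map_iff hg.aemeasurable hS]
          exact ae_of_all _ fun z => by simp
        exact this.mono fun xp h => ⟨h⟩
      refine ⟨Measure.isProbabilityMeasure_map hg.aemeasurable, hpr, ?_⟩
      have : intensityHat (π.map fun z : X × Y => (z.1, Measure.dirac z.2)) = π := by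
        unfold intensityHat
        ext s hs
        rw [Measure.bind_apply hs (aemeas_prod hpr)]
        have e := lintegral_map' (μ := π) (g := fun z : X × Y => (z.1, Measure.dirac z.2))
          (f := fun xp : X × Measure Y => ((Measure.dirac xp.1).prod xp.2) s)
          ((Measure.measurable_coe hs).comp_aemeasurable (aemeas_prod hpr)) hg.aemeasurable
        rw [e]
        simp only [Measure.dirac_prod_dirac]
        conv_rhs => rw [← Measure.bind_dirac (m := π)]
        rw [Measure.bind_apply hs Measure.measurable_dirac.aemeasurable]
      rw [this]; exact hπ
    · refine le_sInf ?_
      rintro v ⟨P, ⟨hP1, hP2, hP3⟩, rfl⟩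
      refine sInf_le_of_le ⟨intensityHat P, hP3, rfl⟩ ?_
      have hk := aemeas_prod hP2
      have my : ∫⁻ z, ENNReal.ofReal (dist z.2 y₀ ^ r) ∂(intensityHat P) < ⊤ := by
        have : ∫⁻ y, ENNReal.ofReal (dist y y₀ ^ r) ∂ν < ⊤ := hν
        rwa [← hP3.2, lintegral_map (meas_distr r y₀) measurable_snd] at this
      have mx : ∫⁻ z, ENNReal.ofReal (dist z.1 x₀ ^ r) ∂(intensityHat P) < ⊤ := by
        have : ∫⁻ y, ENNReal.ofReal (dist y x₀ ^ r) ∂μ < ⊤ := hμ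
        rwa [← hP3.1, lintegral_map (meas_distr r x₀) measurable_fst] at this
      have hIp : IsProbabilityMeasure (intensityHat P) := by
        constructor
        have h := congrArg (fun m => m Set.univ) hP3.1
        simpa [Measure.map_apply measurable_fst MeasurableSet.univ] using h
      have hPr : ∀ᵐ xp ∂P, xp.2 ∈ Pr r y₀ := by
        have m2 : Measurable fun z : X × Y => ENNReal.ofReal (dist z.2 y₀ ^ r) :=
          (meas_distr r y₀).comp measurable_snd
        have e := Measure.lintegral_bind hk (f := fun z : X × Y =>
          ENNReal.ofReal (dist z.2 y₀ ^ r)) m2.aemeasurable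
        have my' := my
        unfold intensityHat at my'
        rw [e] at my'
        have := ae_lt_top' ((Measure.measurable_lintegral m2).comp_aemeasurable hk) my'.ne
        filter_upwards [this, hP2] with xp h1 h2
        refine ⟨h2, ?_⟩
        simp only [Function.comp] at h1
        rw [Measure.dirac_prod, lintegral_map m2 measurable_prodMk_left] at h1
        exact h1
      refine eInt_bind_le P _ hk mc hC ?_ ?_
      · filter_upwards [hPr] with xp h
        have := h.1
        rw [Measure.dirac_prod, eInt_map mc measurable_prodMk_left]
        exact jen xp.1 xp.2 h
      · change ∫⁻ z, _ ∂(intensityHat P) ≠ ⊤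
        refine ne_top_of_le_ne_top ?_ (lintegral_mono fun z => bnd z.1 z.2)
        have m1 : Measurable fun z : X × Y => ENNReal.ofReal (dist z.1 x₀ ^ r) :=
          (meas_distr r x₀).comp measurable_fst
        rw [lintegral_const_mul' _ _ ENNReal.ofReal_ne_top,
          lintegral_add_left (m1.const_add 1), lintegral_add_left measurable_const,
          lintegral_const, measure_univ, mul_one]
        exact ENNReal.mul_ne_top ENNReal.ofReal_ne_top (ENNReal.add_ne_top.2
          ⟨ENNReal.add_ne_top.2 ⟨ENNReal.one_ne_top, mx.ne⟩, my.ne⟩)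
end
end
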